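/- arXiv:2510.01732 — 8 statements merged into one kernel-verified Lean document; each statement's English description precedes it below -/
import Mathlib

section
/- For every integer k, setting λ := 1/2 + 3k, there exists a smooth (infinitely differentiable) bounded function G : ℝ → ℝ with lim_{t→−∞} G(t) = 1 and lim_{t→+∞} G(t) = 0, such that the function v(x,y) := (y² + x^{2/3})^{λ/2} · G(y·x^{−1/3}) satisfies y·∂ₓv(x,y) − ∂²_{yy}v(x,y) = 0 at every point (x,y) ∈ (0,∞) × ℝ, and moreover, for every fixed y > 0, v(x,y) → 0 as x → 0⁺. -/
open Filter Set

/-- The self-similar ansatz `v(x,y) = (y² + x^(2/3))^(l/2) · G(y · x^(-1/3))`,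
i.e. `v = r^l G(t)` in the polar-like variables `r, t`. -/
noncomputable def selfSimilar (l : ℝ) (G : ℝ → ℝ) (x y : ℝ) : ℝ :=
  (y ^ 2 + x ^ ((2 : ℝ) / 3)) ^ (l / 2) * G (y * x ^ (-(1 : ℝ) / 3))

/-! Writing `v = r ^ l * G t = x ^ (l / 3) * H t`, the equation for `v` becomes an ordinary
differential equation for `H`, and `H = exp(-t³/18) W` turns it into `W'' = (t⁴/36 + μt) W` with
`μ = (l + 1)/3 = k + 1/2`. What is needed is a nonzero `W` that decays at both ends of the line.

For `μ = 1/2` such a `W` is a combination of an Airy function and its derivative at a multiple of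
`t²`. The equation for `v` is invariant under `∂ₓ`, which lowers `μ` by one and never annihilates
`W` since `μ` is a half-integer; the reflection `t ↦ -t` replaces `μ` by `-μ`. Together they reach
every `k + 1/2`.

At `-∞` a decaying `W` is asymptotic to `C |t| ^ l exp(-|t|³/18)` with `C ≠ 0`: the Wronskian with
this function is controlled by monotonicity, so that `log W` and the logarithm of its approximation
differ by a convergent integral. Dividing by `C` gives `G → 1`. -/

open MeasureTheory Asymptotics Complex FourierTransform
open Polynomial (C X)
open scoped Topology ContDiff

section Monotonicity

variable {f f' g g' : ℝ → ℝ} {T : ℝ}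

lemma antitoneOn_Ici_of_hasDerivAt_nonpos (hf : ∀ t ∈ Ici T, HasDerivAt f (f' t) t)
    (hf' : ∀ t ∈ Ici T, f' t ≤ 0) : AntitoneOn f (Ici T) :=
  antitoneOn_of_hasDerivWithinAt_nonpos (convex_Ici T)
    (fun t ht => (hf t ht).continuousAt.continuousWithinAt)
    (fun t ht => (hf t (interior_subset ht)).hasDerivWithinAt)
    fun t ht => hf' t (interior_subset ht)

lemma nonneg_of_hasDerivAt_nonpos_of_tendsto_zero (hf : ∀ t ∈ Ici T, HasDerivAt f (f' t) t)
    (hf' : ∀ t ∈ Ici T, f' t ≤ 0) (hlim : Tendsto f atTop (𝓝 0)) : ∀ t ∈ Ici T, 0 ≤ f t := by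
  intro t ht
  refine le_of_tendsto hlim ?_
  filter_upwards [eventually_ge_atTop t] with s hs
  exact antitoneOn_Ici_of_hasDerivAt_nonpos hf hf' ht (mem_Ici.2 (ht.trans hs)) hs

lemma abs_le_of_abs_deriv_le_neg_deriv (hf : ∀ t ∈ Ici T, HasDerivAt f (f' t) t)
    (hg : ∀ t ∈ Ici T, HasDerivAt g (g' t) t) (h : ∀ t ∈ Ici T, |f' t| ≤ -g' t)
    (hf₀ : Tendsto f atTop (𝓝 0)) (hg₀ : Tendsto g atTop (𝓝 0)) :
    ∀ t ∈ Ici T, |f t| ≤ g t := by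
  intro t ht
  have hsub : 0 ≤ g t - f t :=
    nonneg_of_hasDerivAt_nonpos_of_tendsto_zero (fun s hs => (hg s hs).sub (hf s hs))
      (fun s hs => by linarith [(abs_le.1 (h s hs)).1]) (sub_zero (0 : ℝ) ▸ hg₀.sub hf₀) t ht
  have hadd : 0 ≤ g t + f t :=
    nonneg_of_hasDerivAt_nonpos_of_tendsto_zero (fun s hs => (hg s hs).add (hf s hs))
      (fun s hs => by linarith [(abs_le.1 (h s hs)).2]) (add_zero (0 : ℝ) ▸ hg₀.add hf₀) t ht
  exact abs_le.2 ⟨by linarith, by linarith⟩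

end Monotonicity

/-- `w` solves the linear equation `w'' = q w` on `s`; the derivative `w'` is carried along, so
that the equation is the first-order system `(w, w')' = (w', q w)`. -/
structure SolvesOn (q w w' : ℝ → ℝ) (s : Set ℝ) : Prop where
  hasDerivAt : ∀ t ∈ s, HasDerivAt w (w' t) t
  hasDerivAt_deriv : ∀ t ∈ s, HasDerivAt w' (q t * w t) t

namespace SolvesOn

variable {q r w w' v v' b : ℝ → ℝ} {s : Set ℝ} {T : ℝ}

lemma mono {s' : Set ℝ} (h : SolvesOn q w w' s) (hs : s' ⊆ s) : SolvesOn q w w' s' :=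
  ⟨fun t ht => h.hasDerivAt t (hs ht), fun t ht => h.hasDerivAt_deriv t (hs ht)⟩

lemma const_mul (h : SolvesOn q w w' s) (c : ℝ) :
    SolvesOn q (fun t => c * w t) (fun t => c * w' t) s :=
  ⟨fun t ht => (h.hasDerivAt t ht).const_mul c,
    fun t ht => ((h.hasDerivAt_deriv t ht).const_mul c).congr_deriv (by ring)⟩

lemma continuous (h : SolvesOn q w w' univ) : Continuous w :=
  continuous_iff_continuousAt.2 fun t => (h.hasDerivAt t trivial).continuousAt

lemma deriv_eq (h : SolvesOn q w w' univ) : deriv w = w' :=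
  funext fun t => (h.hasDerivAt t trivial).deriv

lemma deriv_eq_zero (h : SolvesOn q w w' univ) (hw : w = 0) : w' = 0 := by
  rw [← h.deriv_eq, hw, deriv_zero]

lemma contDiff (h : SolvesOn q w w' univ) (hq : ContDiff ℝ ∞ q) : ContDiff ℝ ∞ w := by
  have hd' : deriv w' = fun t => q t * w t := funext fun t => (h.hasDerivAt_deriv t trivial).deriv
  have key (n : ℕ) : ContDiff ℝ n w ∧ ContDiff ℝ n w' := by
    induction n with
    | zero =>
      exact ⟨contDiff_zero.2 h.continuous, contDiff_zero.2 <|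
        continuous_iff_continuousAt.2 fun t => (h.hasDerivAt_deriv t trivial).continuousAt⟩
    | succ n ih =>
      push_cast
      refine ⟨contDiff_succ_iff_deriv.2
          ⟨fun t => (h.hasDerivAt t trivial).differentiableAt, by simp, h.deriv_eq ▸ ih.2⟩,
        contDiff_succ_iff_deriv.2
          ⟨fun t => (h.hasDerivAt_deriv t trivial).differentiableAt, by simp, ?_⟩⟩
      exact hd' ▸ (hq.of_le (by exact_mod_cast le_top)).mul ih.1
  exact contDiff_infty.2 fun n => (key n).1

theorem eq_zero (h : SolvesOn q w w' univ) (hq : Continuous q) {t₀ : ℝ} (hw : w t₀ = 0)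
    (hw' : w' t₀ = 0) : w = 0 := by
  funext t
  obtain ⟨a, c, ht, ht₀⟩ : ∃ a c, t ∈ Ioo a c ∧ t₀ ∈ Ioo a c :=
    ⟨min t t₀ - 1, max t t₀ + 1, by grind, by grind⟩
  obtain ⟨M, hM⟩ :=
    (isCompact_Icc (a := a) (b := c)).exists_bound_of_continuousOn hq.continuousOn
  have hlip : ∀ s ∈ Ioo a c, LipschitzOnWith (max 1 M.toNNReal)
      (fun p : ℝ × ℝ => (p.2, q s * p.1)) univ := by
    intro s hs
    have hqs : ‖q s‖₊ ≤ M.toNNReal :=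
      NNReal.le_toNNReal_of_coe_le (hM s (Ioo_subset_Icc_self hs))
    exact (LipschitzWith.prod_snd.prodMk (((lipschitzWith_smul (q s)).comp
      LipschitzWith.prod_fst).weaken (by simpa using hqs))).lipschitzOnWith
  have huniq : EqOn (fun s => (w s, w' s)) (fun _ => (0, 0)) (Ioo a c) :=
    ODE_solution_unique_of_mem_Ioo (v := fun s p => (p.2, q s * p.1)) hlip ht₀
      (fun s _ => ⟨(h.hasDerivAt s trivial).prodMk (h.hasDerivAt_deriv s trivial), trivial⟩)
      (fun s _ => ⟨(hasDerivAt_const s _).congr_deriv (by ext <;> simp), trivial⟩)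
      (by simp [hw, hw'])
  exact congrArg Prod.fst (huniq ht)

lemma mul_deriv_nonpos (h : SolvesOn q w w' (Ici T)) (hq : ∀ t ∈ Ici T, 0 ≤ q t)
    (hw : Tendsto w atTop (𝓝 0)) (hw' : Tendsto w' atTop (𝓝 0)) :
    ∀ t ∈ Ici T, w t * w' t ≤ 0 := by
  intro t ht
  refine neg_nonneg.1 (nonneg_of_hasDerivAt_nonpos_of_tendsto_zero
    (f := fun t => -(w t * w' t))
    (fun s hs => ((h.hasDerivAt s hs).mul (h.hasDerivAt_deriv s hs)).neg) (fun s hs => ?_)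
    (by simpa using (hw.mul hw').neg) t ht)
  nlinarith [mul_nonneg (hq s hs) (sq_nonneg (w s)), sq_nonneg (w' s)]

lemma ne_zero_of_tendsto_zero (h : SolvesOn q w w' univ) (hqc : Continuous q)
    (hq : ∀ t ∈ Ici T, 0 ≤ q t) (hw : Tendsto w atTop (𝓝 0)) (hw' : Tendsto w' atTop (𝓝 0))
    (hne : w ≠ 0) : ∀ t ∈ Ici T, w t ≠ 0 := by
  intro t ht hzero
  have hanti : AntitoneOn (fun t => w t ^ 2) (Ici T) :=
    antitoneOn_Ici_of_hasDerivAt_nonpos (fun s _ => (h.hasDerivAt s trivial).pow 2)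
      fun s hs => by
        have := (h.mono (subset_univ _)).mul_deriv_nonpos hq hw hw' s hs
        norm_num
        linarith
  have hvanish : ∀ s, t ≤ s → w s = 0 := fun s hs =>
    pow_eq_zero_iff two_ne_zero |>.1 <| le_antisymm
      (by simpa [hzero] using hanti ht (mem_Ici.2 (ht.trans hs)) hs) (sq_nonneg _)
  have hlocal : w =ᶠ[𝓝 (t + 1)] fun _ => 0 := by
    filter_upwards [lt_mem_nhds (lt_add_one t)] with s hs using hvanish s hs.le
  exact hne <| h.eq_zero hqc (hvanish (t + 1) (by linarith)) <|
    (h.hasDerivAt (t + 1) trivial).unique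
      ((hasDerivAt_const (t + 1) 0).congr_of_eventuallyEq hlocal)

lemma exists_pos_and_deriv_nonpos (h : SolvesOn q w w' univ) (hqc : Continuous q)
    (hq : ∀ t ∈ Ici T, 0 ≤ q t) (hw : Tendsto w atTop (𝓝 0)) (hw' : Tendsto w' atTop (𝓝 0))
    (hne : w ≠ 0) : ∃ c ≠ 0, ∀ t ∈ Ici T, 0 < c * w t ∧ c * w' t ≤ 0 := by
  have hnz := h.ne_zero_of_tendsto_zero hqc hq hw hw' hne
  have hpos : ∀ t ∈ Ici T, 0 < w T * w t := by
    intro t ht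
    by_contra! hneg
    obtain ⟨s, hs, hs₀⟩ := intermediate_value_Icc' ht
      (continuous_const.mul h.continuous).continuousOn
      (show (0 : ℝ) ∈ Icc (w T * w t) (w T * w T) from ⟨hneg, mul_self_nonneg _⟩)
    exact mul_ne_zero (hnz T self_mem_Ici) (hnz s hs.1) hs₀
  refine ⟨w T, hnz T self_mem_Ici, fun t ht => ⟨hpos t ht, ?_⟩⟩
  have hprod := (h.mono (subset_univ _)).mul_deriv_nonpos hq hw hw' t ht
  refine nonpos_of_mul_nonpos_right (?_ : w T * w t * (w T * w' t) ≤ 0) (hpos t ht)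
  nlinarith [mul_nonneg (sq_nonneg (w T)) (neg_nonneg.2 hprod)]

lemma hasDerivAt_wronskian (hw : SolvesOn q w w' s) (hv : SolvesOn r v v' s) {t : ℝ}
    (ht : t ∈ s) :
    HasDerivAt (fun t => v t * w' t - v' t * w t) ((q t - r t) * (w t * v t)) t :=
  (((hv.hasDerivAt t ht).mul (hw.hasDerivAt_deriv t ht)).sub
    ((hv.hasDerivAt_deriv t ht).mul (hw.hasDerivAt t ht))).congr_deriv (by ring)

-- Past `x`, monotonicity of `b` and `w` turns the derivative bound `b w |v'|` into the exact
-- derivative `-b(x) w(x) v'`, which integrates without any asymptotic information on `w`.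
lemma abs_wronskian_le (hw : SolvesOn q w w' (Ici T)) (hv : SolvesOn r v v' (Ici T))
    (hw_pos : ∀ t ∈ Ici T, 0 < w t) (hw'_nonpos : ∀ t ∈ Ici T, w' t ≤ 0)
    (hv'_nonpos : ∀ t ∈ Ici T, v' t ≤ 0) (hv_pos : ∀ t ∈ Ici T, 0 < v t)
    (hb_anti : AntitoneOn b (Ici T)) (hb_nonneg : ∀ t ∈ Ici T, 0 ≤ b t)
    (hqr : ∀ t ∈ Ici T, |q t - r t| * v t ≤ b t * -v' t) (hv₀ : Tendsto v atTop (𝓝 0))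
    (hW₀ : Tendsto (fun t => v t * w' t - v' t * w t) atTop (𝓝 0)) :
    ∀ x ∈ Ici T, |v x * w' x - v' x * w x| ≤ b x * w x * v x := by
  intro x hx
  have hsub : Ici x ⊆ Ici T := Ici_subset_Ici.2 hx
  have hw_anti : AntitoneOn w (Ici T) :=
    antitoneOn_Ici_of_hasDerivAt_nonpos hw.hasDerivAt hw'_nonpos
  refine abs_le_of_abs_deriv_le_neg_deriv
    (fun t ht => hw.hasDerivAt_wronskian hv (hsub ht))
    (fun t ht => (hv.hasDerivAt t (hsub ht)).const_mul (b x * w x)) (fun t ht => ?_) hW₀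
    (by simpa using hv₀.const_mul (b x * w x)) x self_mem_Ici
  have htT := hsub ht
  calc |(q t - r t) * (w t * v t)| = |q t - r t| * v t * w t := by
        rw [abs_mul, abs_of_pos (mul_pos (hw_pos t htT) (hv_pos t htT))]; ring
    _ ≤ b t * -v' t * w t := mul_le_mul_of_nonneg_right (hqr t htT) (hw_pos t htT).le
    _ = b t * w t * -v' t := by ring
    _ ≤ b x * w x * -v' t :=
        mul_le_mul_of_nonneg_right
          (mul_le_mul (hb_anti hx htT ht) (hw_anti hx htT ht) (hw_pos t htT).le (hb_nonneg x hx))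
          (neg_nonneg.2 (hv'_nonpos t htT))
    _ = -(b x * w x * v' t) := by ring

theorem exists_tendsto_div (hw : SolvesOn q w w' (Ici T)) (hv : SolvesOn r v v' (Ici T))
    (hw_pos : ∀ t ∈ Ici T, 0 < w t) (hv_pos : ∀ t ∈ Ici T, 0 < v t)
    (hb : IntegrableOn b (Ioi T))
    (hW : ∀ t ∈ Ici T, |v t * w' t - v' t * w t| ≤ b t * w t * v t) :
    ∃ C ≠ 0, Tendsto (fun t => w t / v t) atTop (𝓝 C) := by
  have hlog (t : ℝ) (ht : t ∈ Ici T) :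
      HasDerivAt (fun t => Real.log (w t) - Real.log (v t)) (w' t / w t - v' t / v t) t :=
    ((hw.hasDerivAt t ht).log (hw_pos t ht).ne').sub ((hv.hasDerivAt t ht).log (hv_pos t ht).ne')
  have hbound (t : ℝ) (ht : t ∈ Ici T) : |w' t / w t - v' t / v t| ≤ b t := by
    have hwt := hw_pos t ht
    have hvt := hv_pos t ht
    have heq : w' t / w t - v' t / v t = (v t * w' t - v' t * w t) / (w t * v t) := by
      field_simp
    rw [heq, abs_div, abs_of_pos (mul_pos hwt hvt), div_le_iff₀ (mul_pos hwt hvt), ← mul_assoc]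
    exact hW t ht
  have hcont : ContinuousOn (fun t => w' t / w t - v' t / v t) (Ioi T) := fun t ht =>
    have ht' : t ∈ Ici T := Ioi_subset_Ici_self ht
    (((hw.hasDerivAt_deriv t ht').continuousAt.div (hw.hasDerivAt t ht').continuousAt
      (hw_pos t ht').ne').sub ((hv.hasDerivAt_deriv t ht').continuousAt.div
      (hv.hasDerivAt t ht').continuousAt (hv_pos t ht').ne')).continuousWithinAt
  have hint : IntegrableOn (fun t => w' t / w t - v' t / v t) (Ioi T) :=
    hb.mono' (hcont.aestronglyMeasurable measurableSet_Ioi) <|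
      (ae_restrict_mem measurableSet_Ioi).mono fun t ht => hbound t (Ioi_subset_Ici_self ht)
  have hlim := tendsto_limUnder_of_hasDerivAt_of_integrableOn_Ioi
    (fun t ht => hlog t (Ioi_subset_Ici_self ht)) hint
  refine ⟨_, (Real.exp_pos _).ne', hlim.rexp.congr' ?_⟩
  filter_upwards [eventually_ge_atTop T] with t ht
  rw [Real.exp_sub, Real.exp_log (hw_pos t ht), Real.exp_log (hv_pos t ht)]

end SolvesOn

section Airy

/-- The integrand `zⁿ exp(a z³/3)`, at `z = 1 + 2πiu`, of the contour integral for the `n`-th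
derivative of a solution of the Airy equation `w'' = (s/a) w`, up to sign. The contour is the line
`Re z = 1` instead of the imaginary axis, so that the integrand is Gaussian. -/
noncomputable def airyKernel (a : ℝ) (n : ℕ) (u : ℝ) : ℂ :=
  (1 + 2 * Real.pi * I * u) ^ n * cexp (a * (1 + 2 * Real.pi * I * u) ^ 3 / 3)

/-- The contour integral of `zⁿ exp(a z³/3 - s z)` along `z = 1 + 2πiu`. -/
noncomputable def airyIntegral (a : ℝ) (n : ℕ) (s : ℝ) : ℂ :=
  Real.exp (-s) * 𝓕 (airyKernel a n) s

variable {a : ℝ}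

lemma continuous_airyKernel (a : ℝ) (n : ℕ) : Continuous (airyKernel a n) := by
  unfold airyKernel
  fun_prop

lemma airyKernel_eq_succ_add (a : ℝ) (n : ℕ) :
    airyKernel a n =
      airyKernel a (n + 1) + fun u : ℝ => (-2 * Real.pi * I * u) • airyKernel a n u := by
  funext u
  simp only [airyKernel, Pi.add_apply, smul_eq_mul]
  ring

lemma hasDerivAt_airyKernel_zero (a u : ℝ) :
    HasDerivAt (airyKernel a 0) (2 * Real.pi * I * a * airyKernel a 2 u) u := by
  have hz : HasDerivAt (fun u : ℝ => (1 + 2 * Real.pi * I * u : ℂ)) (2 * Real.pi * I) u := by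
    simpa using ((hasDerivAt_id u).ofReal_comp.const_mul (2 * Real.pi * I)).const_add 1
  unfold airyKernel
  simp only [pow_zero, one_mul]
  refine (((hz.pow 3).const_mul (a : ℂ)).div_const 3).cexp.congr_deriv ?_
  simp only [Pi.pow_apply]
  push_cast
  ring

lemma norm_airyKernel_le (a : ℝ) (n : ℕ) (u : ℝ) :
    ‖airyKernel a n u‖ ≤ (1 + (2 * Real.pi * u) ^ 2) ^ n *
      Real.exp (4 * a / 3 - a * (1 + (2 * Real.pi * u) ^ 2)) := by
  have hz : ‖(1 + 2 * Real.pi * I * u : ℂ)‖ ^ 2 = 1 + (2 * Real.pi * u) ^ 2 := by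
    have heq : (1 + 2 * Real.pi * I * u : ℂ) = (1 : ℝ) + (2 * Real.pi * u : ℝ) * I := by
      push_cast
      ring
    rw [heq, norm_add_mul_I, Real.sq_sqrt (by positivity), one_pow]
  have hz' : ‖(1 + 2 * Real.pi * I * u : ℂ)‖ ≤ 1 + (2 * Real.pi * u) ^ 2 := by
    nlinarith [sq_nonneg (2 * Real.pi * u), norm_nonneg (1 + 2 * Real.pi * I * u : ℂ)]
  have hre : (a * (1 + 2 * Real.pi * I * u) ^ 3 / 3 : ℂ).re
      = 4 * a / 3 - a * (1 + (2 * Real.pi * u) ^ 2) := by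
    simp only [pow_succ, pow_zero, one_mul, div_ofNat_re, mul_re, mul_im, add_re, add_im, one_re,
      one_im, ofReal_re, ofReal_im, re_ofNat, im_ofNat, I_re, I_im]
    ring
  rw [airyKernel, norm_mul, norm_pow, norm_exp, hre]
  gcongr

lemma pow_le_mul_exp {b x : ℝ} (hb : 0 < b) (hx : 0 ≤ x) (n : ℕ) :
    x ^ n ≤ n.factorial / b ^ n * Real.exp (b * x) := by
  have h := Real.pow_div_factorial_le_exp _ (mul_nonneg hb.le hx) n
  rw [div_le_iff₀ (by positivity), mul_pow] at h
  rw [div_mul_eq_mul_div, le_div_iff₀ (by positivity)]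
  linarith

lemma integrable_airyKernel (ha : 0 < a) (n : ℕ) : Integrable (airyKernel a n) := by
  have hgauss : Integrable fun u : ℝ => n.factorial / (a / 2) ^ n * Real.exp (5 * a / 6) *
      Real.exp (-(2 * a * Real.pi ^ 2) * u ^ 2) :=
    (integrable_exp_neg_mul_sq (by positivity)).const_mul _
  refine hgauss.mono' (continuous_airyKernel a n).aestronglyMeasurable (ae_of_all _ fun u => ?_)
  calc ‖airyKernel a n u‖
      ≤ (1 + (2 * Real.pi * u) ^ 2) ^ n *
          Real.exp (4 * a / 3 - a * (1 + (2 * Real.pi * u) ^ 2)) := norm_airyKernel_le a n u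
    _ ≤ n.factorial / (a / 2) ^ n * Real.exp (a / 2 * (1 + (2 * Real.pi * u) ^ 2)) *
          Real.exp (4 * a / 3 - a * (1 + (2 * Real.pi * u) ^ 2)) := by
        gcongr
        exact pow_le_mul_exp (half_pos ha) (by positivity) n
    _ = n.factorial / (a / 2) ^ n * Real.exp (5 * a / 6) *
          Real.exp (-(2 * a * Real.pi ^ 2) * u ^ 2) := by
        rw [mul_assoc, ← Real.exp_add, mul_assoc _ (Real.exp _), ← Real.exp_add]
        ring_nf

lemma hasDerivAt_airyIntegral (ha : 0 < a) (n : ℕ) (s : ℝ) :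
    HasDerivAt (airyIntegral a n) (-airyIntegral a (n + 1) s) s := by
  have hint := integrable_airyKernel ha n
  have hint' := integrable_airyKernel ha (n + 1)
  have hmul : Integrable fun u : ℝ => (-2 * Real.pi * I * u) • airyKernel a n u :=
    (hint.sub hint').congr (ae_of_all _ fun u => by
      simpa using sub_eq_of_eq_add' (congrFun (airyKernel_eq_succ_add a n) u))
  have hid : Integrable fun u : ℝ => u • airyKernel a n u := by
    refine (hmul.const_mul (-2 * Real.pi * I)⁻¹).congr (ae_of_all _ fun u => ?_)
    have : (Real.pi : ℂ) ≠ 0 := ofReal_ne_zero.2 Real.pi_ne_zero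
    simp only [real_smul, smul_eq_mul]
    field_simp
  have hsplit : 𝓕 (airyKernel a n) s = 𝓕 (airyKernel a (n + 1)) s
      + 𝓕 (fun u : ℝ => (-2 * Real.pi * I * u) • airyKernel a n u) s := by
    conv_lhs => rw [airyKernel_eq_succ_add]
    exact congrFun (VectorFourier.fourierIntegral_add Real.continuous_fourierChar
      (by fun_prop) hint' hmul) s
  refine ((hasDerivAt_id s).neg.exp.ofReal_comp.mul
    (Real.hasDerivAt_fourier hint hid s)).congr_deriv ?_
  simp only [airyIntegral, hsplit, Pi.neg_apply, id_eq, mul_neg, mul_one, neg_mul, ofReal_neg,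
    smul_eq_mul]
  ring

lemma mul_airyIntegral_two (ha : 0 < a) (s : ℝ) :
    a * airyIntegral a 2 s = s * airyIntegral a 0 s := by
  have hderiv : deriv (airyKernel a 0) = fun u => (2 * Real.pi * I * a) • airyKernel a 2 u :=
    funext fun u => (hasDerivAt_airyKernel_zero a u).deriv
  have h := congrFun (Real.fourier_deriv (integrable_airyKernel ha 0)
    (fun u => (hasDerivAt_airyKernel_zero a u).differentiableAt)
    (hderiv ▸ (integrable_airyKernel ha 2).smul (2 * Real.pi * I * a : ℂ))) s
  rw [hderiv] at h
  have hconst : 𝓕 (fun u => (2 * Real.pi * I * a) • airyKernel a 2 u) s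
      = (2 * Real.pi * I * a) * 𝓕 (airyKernel a 2) s :=
    congrFun (VectorFourier.fourierIntegral_const_smul _ _ _ _ _) s
  rw [hconst, smul_eq_mul, mul_assoc (2 * Real.pi * I : ℂ), mul_assoc (2 * Real.pi * I : ℂ)] at h
  have h' := mul_left_cancel₀ two_pi_I_ne_zero h
  simp only [airyIntegral]
  linear_combination Real.exp (-s) * h'

lemma norm_airyIntegral_le (a : ℝ) (n : ℕ) (s : ℝ) :
    ‖airyIntegral a n s‖ ≤ (∫ u, ‖airyKernel a n u‖) * Real.exp (-s) := by
  rw [airyIntegral, norm_mul, norm_real, Real.norm_of_nonneg (Real.exp_pos _).le, mul_comm]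
  gcongr
  exact VectorFourier.norm_fourierIntegral_le_integral_norm _ _ _ _ _

lemma exists_airyIntegral_ne_zero (ha : 0 < a) : ∃ s, airyIntegral a 0 s ≠ 0 := by
  by_contra! hzero
  have hF : 𝓕 (airyKernel a 0) = 0 := funext fun s => by
    simpa [airyIntegral, Complex.exp_ne_zero] using hzero s
  have hinv := congrFun ((continuous_airyKernel a 0).fourierInv_fourier_eq
    (integrable_airyKernel ha 0) (hF ▸ integrable_zero _ _ _)) 0
  rw [hF] at hinv
  exact Complex.exp_ne_zero (a / 3) (by simpa [airyKernel, Real.fourierInv_eq] using hinv.symm)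

theorem exists_solvesOn_airy (ha : 0 < a) :
    ∃ A A' : ℝ → ℝ, SolvesOn (fun s => s / a) A A' univ ∧ A ≠ 0 ∧
      ∃ M, ∀ s, |A s| ≤ M * Real.exp (-s) ∧ |A' s| ≤ M * Real.exp (-s) := by
  obtain ⟨s₀, hs₀⟩ := exists_airyIntegral_ne_zero ha
  set σ : ℂ := starRingEnd ℂ (airyIntegral a 0 s₀)
  have hderiv (n : ℕ) (s : ℝ) : HasDerivAt (fun s => (σ * airyIntegral a n s).re)
      (-(σ * airyIntegral a (n + 1) s).re) s := by
    exact (reCLM.hasFDerivAt.comp_hasDerivAt s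
      ((hasDerivAt_airyIntegral ha n s).const_mul σ)).congr_deriv (by simp)
  have hode (s : ℝ) : (σ * airyIntegral a 2 s).re = s / a * (σ * airyIntegral a 0 s).re := by
    have h : σ * airyIntegral a 2 s = (s / a : ℝ) * (σ * airyIntegral a 0 s) := by
      have : (a : ℂ) ≠ 0 := ofReal_ne_zero.2 ha.ne'
      push_cast
      field_simp
      linear_combination σ * mul_airyIntegral_two ha s
    rw [h, re_ofReal_mul]
  have hbound (n : ℕ) (s : ℝ) : |(σ * airyIntegral a n s).re|
      ≤ ‖σ‖ * (∫ u, ‖airyKernel a n u‖) * Real.exp (-s) :=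
    (abs_re_le_norm _).trans <| by
      rw [norm_mul, mul_assoc]
      gcongr
      exact norm_airyIntegral_le a n s
  refine ⟨fun s => (σ * airyIntegral a 0 s).re, fun s => -(σ * airyIntegral a 1 s).re,
    ⟨fun s _ => hderiv 0 s, fun s _ => (hderiv 1 s).neg.congr_deriv (by simpa using hode s)⟩,
    fun h => hs₀ (normSq_eq_zero.1 (by simpa [σ, normSq_apply] using congrFun h s₀)),
    ‖σ‖ * max (∫ u, ‖airyKernel a 0 u‖) (∫ u, ‖airyKernel a 1 u‖),
    fun s => ⟨(hbound 0 s).trans ?_, (abs_neg _).trans_le ((hbound 1 s).trans ?_)⟩⟩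
  · gcongr
    exact le_max_left _ _
  · gcongr
    exact le_max_right _ _

end Airy

section BoundState

/-- The potential of `W'' = (t⁴/36 + μt) W`, the normal form of the similarity equation
`H'' = (l/3) t H - (t²/3) H'` for `μ = (l + 1)/3` under `H = exp(-t³/18) W`. -/
noncomputable def quarticPotential (μ t : ℝ) : ℝ := t ^ 4 / 36 + μ * t

lemma contDiff_quarticPotential (μ : ℝ) : ContDiff ℝ ∞ (quarticPotential μ) := by
  unfold quarticPotential
  fun_prop

/-- `W` is a nonzero solution of `W'' = (t⁴/36 + μt) W` with derivative `W'`, such that `W` and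
`W'` decay faster than every power of `t` at both ends of the line. -/
structure IsBoundState (μ : ℝ) (W W' : ℝ → ℝ) : Prop
    extends SolvesOn (quarticPotential μ) W W' univ where
  decay : SuperpolynomialDecay (cocompact ℝ) id W
  decay_deriv : SuperpolynomialDecay (cocompact ℝ) id W'
  ne_zero : W ≠ 0

lemma superpolynomialDecay_exp_neg_mul_sq {a : ℝ} (ha : 0 < a) :
    SuperpolynomialDecay (cocompact ℝ) id fun t : ℝ => Real.exp (-a * t ^ 2) := by
  rw [superpolynomialDecay_iff_abs_tendsto_zero]
  intro n
  refine (tendsto_rpow_abs_mul_exp_neg_mul_sq_cocompact ha n).congr fun t => ?_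
  rw [Real.rpow_natCast, abs_mul, abs_pow, Real.abs_exp, id]

lemma superpolynomialDecay_comp_neg {f : ℝ → ℝ} (hf : SuperpolynomialDecay (cocompact ℝ) id f) :
    SuperpolynomialDecay (cocompact ℝ) id fun t => f (-t) := by
  intro n
  have h := ((hf n).comp (Homeomorph.neg ℝ).isClosedEmbedding.tendsto_cocompact).const_mul
    ((-1) ^ n)
  rw [mul_zero] at h
  refine h.congr fun t => ?_
  simp [← mul_assoc, ← mul_pow]

lemma hasDerivAt_comp_sq {f : ℝ → ℝ} {f' t : ℝ} (hf : HasDerivAt f f' (t ^ 2)) :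
    HasDerivAt (fun t => f (t ^ 2)) (2 * t * f') t :=
  (HasDerivAt.comp t hf (h := fun t => t ^ 2) (hasDerivAt_pow 2 t)).congr_deriv
    (by push_cast; ring)

lemma solvesOn_quarticPotential_half {B B' : ℝ → ℝ} (hB : SolvesOn (fun s => s / 144) B B' univ) :
    SolvesOn (quarticPotential (1 / 2)) (fun t => t * B (t ^ 2) + 12 * B' (t ^ 2))
      (fun t => (1 + t ^ 3 / 6) * B (t ^ 2) + 2 * t ^ 2 * B' (t ^ 2)) univ := by
  have hb (t : ℝ) := hasDerivAt_comp_sq (hB.hasDerivAt (t ^ 2) trivial)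
  have hb' (t : ℝ) := hasDerivAt_comp_sq (hB.hasDerivAt_deriv (t ^ 2) trivial)
  have hcube (t : ℝ) : HasDerivAt (fun t : ℝ => 1 + t ^ 3 / 6) (t ^ 2 / 2) t :=
    (((hasDerivAt_pow 3 t).div_const 6).const_add 1).congr_deriv (by push_cast; ring)
  have hsq (t : ℝ) : HasDerivAt (fun t : ℝ => 2 * t ^ 2) (4 * t) t :=
    ((hasDerivAt_pow 2 t).const_mul 2).congr_deriv (by push_cast; ring)
  refine ⟨fun t _ => (((hasDerivAt_id t).mul (hb t)).add ((hb' t).const_mul 12)).congr_deriv ?_,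
    fun t _ => (((hcube t).mul (hb t)).add ((hsq t).mul (hb' t))).congr_deriv ?_⟩
  · simp only [id]
    ring
  · simp only [quarticPotential]
    ring

-- The new solution comes from the derivative `∂ₓ` of the self-similar one, which lowers `l` by `3`.
lemma solvesOn_quarticPotential_sub_one {μ : ℝ} {W W' : ℝ → ℝ}
    (h : SolvesOn (quarticPotential μ) W W' univ) :
    SolvesOn (quarticPotential (μ - 1)) (fun t => (3 * μ - 1 + t ^ 3 / 6) * W t - t * W' t)
      (fun t => (t ^ 2 / 2 - t * quarticPotential μ t) * W t + (3 * μ - 2 + t ^ 3 / 6) * W' t)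
      univ := by
  have hcubic (t c : ℝ) : HasDerivAt (fun t : ℝ => c + t ^ 3 / 6) (t ^ 2 / 2) t :=
    (((hasDerivAt_pow 3 t).div_const 6).const_add c).congr_deriv (by push_cast; ring)
  have hquintic (t : ℝ) : HasDerivAt (fun t : ℝ => t ^ 2 / 2 - t * quarticPotential μ t)
      (t - 5 * t ^ 4 / 36 - 2 * μ * t) t := by
    refine (((hasDerivAt_pow 2 t).div_const 2).sub ((hasDerivAt_id t).mul
      (((hasDerivAt_pow 4 t).div_const 36).add ((hasDerivAt_id t).const_mul μ)))).congr_deriv ?_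
    simp only [Pi.add_apply, id_eq]
    push_cast
    ring
  refine ⟨fun t _ => (((hcubic t (3 * μ - 1)).mul (h.hasDerivAt t trivial)).sub
      ((hasDerivAt_id t).mul (h.hasDerivAt_deriv t trivial))).congr_deriv ?_,
    fun t _ => (((hquintic t).mul (h.hasDerivAt t trivial)).add
      ((hcubic t (3 * μ - 2)).mul (h.hasDerivAt_deriv t trivial))).congr_deriv ?_⟩
  · simp only [id]
    ring
  · simp only [quarticPotential]
    ring

theorem exists_isBoundState_half : ∃ W W', IsBoundState (1 / 2) W W' := by
  obtain ⟨B, B', hB, hB₀, M, hM⟩ := exists_solvesOn_airy (a := 144) (by norm_num)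
  have hgauss := (superpolynomialDecay_exp_neg_mul_sq one_pos).const_mul M
  have hdecay : SuperpolynomialDecay (cocompact ℝ) id fun t => B (t ^ 2) :=
    hgauss.trans_abs_le fun t => ((hM (t ^ 2)).1.trans_eq (by simp)).trans (le_abs_self _)
  have hdecay' : SuperpolynomialDecay (cocompact ℝ) id fun t => B' (t ^ 2) :=
    hgauss.trans_abs_le fun t => ((hM (t ^ 2)).2.trans_eq (by simp)).trans (le_abs_self _)
  have hsolves := solvesOn_quarticPotential_half hB
  refine ⟨_, _, hsolves, ?_, ?_, fun hzero => hB₀ ?_⟩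
  · exact ((hdecay.polynomial_mul X).add (hdecay'.const_mul 12)).congr fun t => by simp
  · exact ((hdecay.polynomial_mul (1 + C (1 / 6) * X ^ 3)).add
      (hdecay'.polynomial_mul (C 2 * X ^ 2))).congr fun t => by simp [div_eq_inv_mul]
  · have hW := congrFun hzero 1
    have hW' := congrFun (hsolves.deriv_eq_zero hzero) 1
    norm_num at hW hW'
    exact hB.eq_zero (t₀ := 1) (by fun_prop) (by linarith) (by linarith)

namespace IsBoundState

variable {μ : ℝ} {W W' : ℝ → ℝ}

lemma tendsto_atTop (h : IsBoundState μ W W') : Tendsto W atTop (𝓝 0) := by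
  simpa using (h.decay 0).mono_left atTop_le_cocompact

lemma tendsto_deriv_atTop (h : IsBoundState μ W W') : Tendsto W' atTop (𝓝 0) := by
  simpa using (h.decay_deriv 0).mono_left atTop_le_cocompact

lemma const_mul (h : IsBoundState μ W W') {c : ℝ} (hc : c ≠ 0) :
    IsBoundState μ (fun t => c * W t) (fun t => c * W' t) :=
  ⟨h.toSolvesOn.const_mul c, h.decay.const_mul c, h.decay_deriv.const_mul c,
    smul_ne_zero hc h.ne_zero⟩

lemma comp_neg (h : IsBoundState μ W W') :
    IsBoundState (-μ) (fun t => W (-t)) (fun t => -W' (-t)) where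
  hasDerivAt t _ := ((h.hasDerivAt (-t) trivial).comp t (hasDerivAt_neg t)).congr_deriv (by ring)
  hasDerivAt_deriv t _ :=
    ((h.hasDerivAt_deriv (-t) trivial).comp t (hasDerivAt_neg t)).neg.congr_deriv <| by
      simp only [quarticPotential]
      ring
  decay := superpolynomialDecay_comp_neg h.decay
  decay_deriv := by simpa using (superpolynomialDecay_comp_neg h.decay_deriv).const_mul (-1)
  ne_zero hzero := h.ne_zero <| funext fun t => by simpa using congrFun hzero (-t)

theorem sub_one (h : IsBoundState μ W W') (h₁ : 3 * μ - 1 ≠ 0) (h₂ : 3 * μ - 2 ≠ 0) :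
    IsBoundState (μ - 1) (fun t => (3 * μ - 1 + t ^ 3 / 6) * W t - t * W' t)
      (fun t => (t ^ 2 / 2 - t * quarticPotential μ t) * W t + (3 * μ - 2 + t ^ 3 / 6) * W' t) := by
  have hsolves := solvesOn_quarticPotential_sub_one h.toSolvesOn
  refine ⟨hsolves, ?_, ?_, fun hzero => h.ne_zero ?_⟩
  · exact ((h.decay.polynomial_mul (C (3 * μ - 1) + C (1 / 6) * X ^ 3)).add
      (h.decay_deriv.polynomial_mul (-X))).congr fun t => by
        simp only [id_eq, Pi.add_apply, Polynomial.eval_add, Polynomial.eval_mul,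
          Polynomial.eval_pow, Polynomial.eval_neg, Polynomial.eval_C, Polynomial.eval_X]
        ring
  · exact ((h.decay.polynomial_mul (C (1 / 2) * X ^ 2 - X * (C (1 / 36) * X ^ 4 + C μ * X))).add
      (h.decay_deriv.polynomial_mul (C (3 * μ - 2) + C (1 / 6) * X ^ 3))).congr fun t => by
        simp only [quarticPotential, id_eq, Pi.add_apply, Polynomial.eval_add, Polynomial.eval_sub,
          Polynomial.eval_mul, Polynomial.eval_pow, Polynomial.eval_C, Polynomial.eval_X]
        ring
  · funext t
    have hV := congrFun hzero t
    have hV' := congrFun (hsolves.deriv_eq_zero hzero) t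
    refine (mul_eq_zero.1 ?_).resolve_left (mul_ne_zero h₁ h₂)
    simp only [quarticPotential, Pi.zero_apply] at hV hV' ⊢
    linear_combination t * hV' + (3 * μ - 2 + t ^ 3 / 6) * hV

end IsBoundState

lemma three_mul_add_half_sub_intCast_ne_zero (m n : ℤ) : 3 * ((m : ℝ) + 1 / 2) - n ≠ 0 := by
  intro h
  have : (6 * m + 3 - 2 * n : ℝ) = 0 := by linarith
  norm_cast at this
  omega

theorem exists_isBoundState (k : ℤ) : ∃ W W', IsBoundState (k + 1 / 2) W W' := by
  have hlower (m : ℤ) (hm : ∃ W W', IsBoundState (m + 1 / 2) W W') :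
      ∃ W W', IsBoundState ((m - 1 : ℤ) + 1 / 2) W W' := by
    obtain ⟨W, W', h⟩ := hm
    have heq : ((m - 1 : ℤ) : ℝ) + 1 / 2 = m + 1 / 2 - 1 := by push_cast; ring
    rw [heq]
    exact ⟨_, _, h.sub_one (by exact_mod_cast three_mul_add_half_sub_intCast_ne_zero m 1)
      (by exact_mod_cast three_mul_add_half_sub_intCast_ne_zero m 2)⟩
  have hreflect (m : ℤ) (hm : ∃ W W', IsBoundState (m + 1 / 2) W W') :
      ∃ W W', IsBoundState ((-m - 1 : ℤ) + 1 / 2) W W' := by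
    obtain ⟨W, W', h⟩ := hm
    have heq : ((-m - 1 : ℤ) : ℝ) + 1 / 2 = -(m + 1 / 2) := by push_cast; ring
    rw [heq]
    exact ⟨_, _, h.comp_neg⟩
  induction k with
  | zero => simpa using exists_isBoundState_half
  | succ n ih =>
    have heq : -(-(n : ℤ) - 1 - 1) - 1 = n + 1 := by ring
    exact heq ▸ hreflect _ (hlower _ (hreflect _ ih))
  | pred n ih => exact hlower _ ih

end BoundState

section WKB

/-- The leading asymptotics `t^l exp(-t³/18)` at `+∞` of the decaying solutions of
`w'' = (t⁴/36 - (l + 1)/3 t) w`. -/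
noncomputable def wkb (l t : ℝ) : ℝ := t ^ l * Real.exp (-t ^ 3 / 18)

/-- The potential of the equation that `wkb l` solves exactly on `t > 0`; it differs from
`quarticPotential (-(l + 1) / 3)` by `l (l - 1) / t ^ 2`. -/
noncomputable def wkbPotential (l t : ℝ) : ℝ :=
  t ^ 4 / 36 - (l + 1) / 3 * t + l * (l - 1) / t ^ 2

variable {l t : ℝ}

lemma hasDerivAt_exp_neg_cube (t : ℝ) :
    HasDerivAt (fun t : ℝ => Real.exp (-t ^ 3 / 18)) (-(t ^ 2 / 6) * Real.exp (-t ^ 3 / 18)) t := by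
  refine ((hasDerivAt_pow 3 t).neg.div_const 18).exp.congr_deriv ?_
  simp only [Pi.neg_apply]
  push_cast
  ring

lemma wkb_pos (ht : 0 < t) : 0 < wkb l t :=
  mul_pos (Real.rpow_pos_of_pos ht l) (Real.exp_pos _)

lemma tendsto_wkb_zero (l : ℝ) : Tendsto (wkb l) atTop (𝓝 0) := by
  have h := (tendsto_rpow_mul_exp_neg_mul_atTop_nhds_zero (l / 3) (1 / 18) (by norm_num)).comp
    (tendsto_pow_atTop (α := ℝ) three_ne_zero)
  refine h.congr' ?_
  filter_upwards [eventually_gt_atTop 0] with t ht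
  simp only [Function.comp_apply, wkb]
  rw [← Real.rpow_natCast t 3, ← Real.rpow_mul ht.le]
  push_cast
  congr 2 <;> ring

lemma tendsto_deriv_wkb_zero (l : ℝ) :
    Tendsto (fun t => -(t ^ 2 / 6 - l / t) * wkb l t) atTop (𝓝 0) := by
  have h := ((tendsto_wkb_zero (l + 2)).const_mul (-1 / 6)).add
    ((tendsto_wkb_zero (l - 1)).const_mul l)
  rw [mul_zero, mul_zero, add_zero] at h
  refine h.congr' ?_
  filter_upwards [eventually_gt_atTop 0] with t ht
  simp only [wkb, Real.rpow_add ht, Real.rpow_sub_one ht.ne', Real.rpow_two]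
  ring

lemma solvesOn_wkb (l : ℝ) :
    SolvesOn (wkbPotential l) (wkb l) (fun t => -(t ^ 2 / 6 - l / t) * wkb l t) (Ioi 0) := by
  have hwkb (t : ℝ) (ht : t ∈ Ioi 0) :
      HasDerivAt (wkb l) (-(t ^ 2 / 6 - l / t) * wkb l t) t := by
    have ht₀ : t ≠ 0 := ne_of_gt ht
    refine ((Real.hasDerivAt_rpow_const (Or.inl ht₀)).mul
      (hasDerivAt_exp_neg_cube t)).congr_deriv ?_
    rw [Real.rpow_sub_one ht₀, wkb]
    ring
  refine ⟨hwkb, fun t ht => ?_⟩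
  have ht₀ : t ≠ 0 := ne_of_gt ht
  have hcoeff : HasDerivAt (fun t : ℝ => -(t ^ 2 / 6 - l / t)) (-(t / 3 + l / t ^ 2)) t := by
    refine (((hasDerivAt_pow 2 t).div_const 6).sub
      ((hasDerivAt_inv ht₀).const_mul l)).neg.congr_deriv ?_
    push_cast
    ring
  refine (hcoeff.mul (hwkb t ht)).congr_deriv ?_
  rw [wkbPotential]
  field_simp
  ring

lemma quarticPotential_nonneg {μ : ℝ} (ht : 1 ≤ t) (hμ : 36 * |μ| ≤ t) :
    0 ≤ quarticPotential μ t := by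
  have hcube : t ≤ t ^ 3 := le_self_pow₀ ht (by norm_num)
  have hfactor : quarticPotential μ t = t * (t ^ 3 / 36 + μ) := by
    rw [quarticPotential]
    ring
  rw [hfactor]
  exact mul_nonneg (by linarith) (by linarith [neg_abs_le μ])

lemma sq_div_twelve_le (ht : 1 ≤ t) (hl : 12 * |l| ≤ t) : t ^ 2 / 12 ≤ t ^ 2 / 6 - l / t := by
  have hcube : t ≤ t ^ 3 := le_self_pow₀ ht (by norm_num)
  have hdiv : l / t ≤ t ^ 2 / 12 := by
    rw [div_le_iff₀ (by linarith)]
    linarith [le_abs_self l]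
  linarith

lemma abs_quarticPotential_sub_wkbPotential (ht : 0 < t) :
    |quarticPotential (-(l + 1) / 3) t - wkbPotential l t| =
      12 * |l * (l - 1)| * t ^ (-4 : ℝ) * (t ^ 2 / 12) := by
  have hsub : quarticPotential (-(l + 1) / 3) t - wkbPotential l t = -(l * (l - 1) / t ^ 2) := by
    rw [quarticPotential, wkbPotential]
    ring
  rw [hsub, abs_neg, abs_div, abs_of_pos (pow_pos ht 2), Real.rpow_neg ht.le]
  norm_cast
  field_simp

lemma exists_tendsto_div_wkb_of_pos {w w' : ℝ → ℝ} {T : ℝ} (hT : 1 ≤ T) (hl : 12 * |l| ≤ T)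
    (h : SolvesOn (quarticPotential (-(l + 1) / 3)) w w' (Ici T)) (hw : Tendsto w atTop (𝓝 0))
    (hw' : Tendsto w' atTop (𝓝 0)) (hw_pos : ∀ t ∈ Ici T, 0 < w t)
    (hw'_nonpos : ∀ t ∈ Ici T, w' t ≤ 0) :
    ∃ C ≠ 0, Tendsto (fun t => w t / wkb l t) atTop (𝓝 C) := by
  have hpos (t : ℝ) (ht : t ∈ Ici T) : 0 < t := one_pos.trans_le (hT.trans ht)
  have hv := (solvesOn_wkb l).mono hpos
  have hv_pos (t : ℝ) (ht : t ∈ Ici T) : 0 < wkb l t := wkb_pos (hpos t ht)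
  have hcoeff (t : ℝ) (ht : t ∈ Ici T) := sq_div_twelve_le (hT.trans ht) (hl.trans ht)
  have hb_nonneg (t : ℝ) (ht : t ∈ Ici T) : 0 ≤ 12 * |l * (l - 1)| * t ^ (-4 : ℝ) :=
    mul_nonneg (by positivity) (Real.rpow_nonneg (hpos t ht).le _)
  have hb_anti : AntitoneOn (fun t => 12 * |l * (l - 1)| * t ^ (-4 : ℝ)) (Ici T) :=
    fun s hs t _ hst => mul_le_mul_of_nonneg_left
      (Real.rpow_le_rpow_of_nonpos (hpos s hs) hst (by norm_num)) (by positivity)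
  refine h.exists_tendsto_div hv hw_pos hv_pos
    ((integrableOn_Ioi_rpow_of_lt (by norm_num) (one_pos.trans_le hT)).const_mul _)
    (h.abs_wronskian_le hv hw_pos hw'_nonpos (fun t ht => ?_) hv_pos hb_anti hb_nonneg
      (fun t ht => ?_) (tendsto_wkb_zero l) ?_)
  · exact mul_nonpos_of_nonpos_of_nonneg
      (neg_nonpos.2 (le_trans (by positivity) (hcoeff t ht))) (hv_pos t ht).le
  · rw [abs_quarticPotential_sub_wkbPotential (hpos t ht), neg_mul, neg_neg, mul_assoc]
    exact mul_le_mul_of_nonneg_left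
      (mul_le_mul_of_nonneg_right (hcoeff t ht) (hv_pos t ht).le) (hb_nonneg t ht)
  · simpa using ((tendsto_wkb_zero l).mul hw').sub ((tendsto_deriv_wkb_zero l).mul hw)

theorem exists_tendsto_div_wkb {w w' : ℝ → ℝ}
    (h : SolvesOn (quarticPotential (-(l + 1) / 3)) w w' univ) (hw : Tendsto w atTop (𝓝 0))
    (hw' : Tendsto w' atTop (𝓝 0)) (hne : w ≠ 0) :
    ∃ C ≠ 0, Tendsto (fun t => w t / wkb l t) atTop (𝓝 C) := by
  obtain ⟨T, hT, hμ, hl⟩ : ∃ T : ℝ, 1 ≤ T ∧ 36 * |(-(l + 1) / 3)| ≤ T ∧ 12 * |l| ≤ T :=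
    ⟨1 + 36 * |(-(l + 1) / 3)| + 12 * |l|, by
      refine ⟨?_, ?_, ?_⟩ <;> linarith [abs_nonneg (-(l + 1) / 3), abs_nonneg l]⟩
  obtain ⟨c, hc, hsign⟩ := h.exists_pos_and_deriv_nonpos (contDiff_quarticPotential _).continuous
    (fun t ht => quarticPotential_nonneg (hT.trans ht) (hμ.trans ht)) hw hw' hne
  obtain ⟨C, hC, hlim⟩ := exists_tendsto_div_wkb_of_pos hT hl
    ((h.const_mul c).mono (subset_univ _)) (by simpa using hw.const_mul c)
    (by simpa using hw'.const_mul c) (fun t ht => (hsign t ht).1) fun t ht => (hsign t ht).2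
  refine ⟨c⁻¹ * C, mul_ne_zero (inv_ne_zero hc) hC, (hlim.const_mul c⁻¹).congr fun t => ?_⟩
  rw [← mul_div_assoc, inv_mul_cancel_left₀ hc]

theorem exists_isBoundState_tendsto_div_wkb (k : ℤ) :
    ∃ W W', IsBoundState ((1 / 2 + 3 * k + 1) / 3) W W' ∧
      Tendsto (fun t => W (-t) / wkb (1 / 2 + 3 * k) t) atTop (𝓝 1) := by
  obtain ⟨W, W', h⟩ := exists_isBoundState k
  have hμ : -((k : ℝ) + 1 / 2) = -(1 / 2 + 3 * k + 1) / 3 := by ring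
  have hneg := h.comp_neg
  obtain ⟨C, hC, hlim⟩ := exists_tendsto_div_wkb (hμ ▸ hneg.toSolvesOn)
    hneg.tendsto_atTop hneg.tendsto_deriv_atTop hneg.ne_zero
  have hμ' : (1 / 2 + 3 * k + 1 : ℝ) / 3 = k + 1 / 2 := by ring
  refine ⟨_, _, hμ' ▸ h.const_mul (inv_ne_zero hC), ?_⟩
  simpa [hC, mul_div_assoc] using hlim.const_mul C⁻¹

end WKB

section SelfSimilar

/-- The profile `G` for which `r ^ l * G t = x ^ (l / 3) * H t`, that is
`G = (1 + t²)^(-l/2) H`. -/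
noncomputable def normalizedProfile (l : ℝ) (H : ℝ → ℝ) (t : ℝ) : ℝ :=
  (1 + t ^ 2) ^ (-l / 2) * H t

variable {l x y : ℝ} {H H' H'' G W W' : ℝ → ℝ}

lemma selfSimilar_normalizedProfile (l : ℝ) (H : ℝ → ℝ) (hx : 0 < x) (y : ℝ) :
    selfSimilar l (normalizedProfile l H) x y = x ^ (l / 3) * H (y * x ^ (-(1 : ℝ) / 3)) := by
  have hscale : x ^ ((2 : ℝ) / 3) * (x ^ (-(1 : ℝ) / 3)) ^ 2 = 1 := by
    rw [← Real.rpow_natCast, ← Real.rpow_mul hx.le, ← Real.rpow_add hx]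
    norm_num
  have hr : y ^ 2 + x ^ ((2 : ℝ) / 3)
      = x ^ ((2 : ℝ) / 3) * (1 + (y * x ^ (-(1 : ℝ) / 3)) ^ 2) := by
    linear_combination (-y ^ 2) * hscale
  have hpos : 0 < 1 + (y * x ^ (-(1 : ℝ) / 3)) ^ 2 := by positivity
  rw [selfSimilar, normalizedProfile, hr, Real.mul_rpow (by positivity) hpos.le,
    ← Real.rpow_mul hx.le, neg_div 2 l, Real.rpow_neg hpos.le,
    show (2 : ℝ) / 3 * (l / 2) = l / 3 by ring]
  field_simp

lemma deriv_selfSimilar_fst (hH : ∀ t, HasDerivAt H (H' t) t) (hx : 0 < x) (y : ℝ) :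
    deriv (fun s => selfSimilar l (normalizedProfile l H) s y) x =
      x ^ (l / 3 - 1) * (l / 3 * H (y * x ^ (-(1 : ℝ) / 3)) -
        y * x ^ (-(1 : ℝ) / 3) / 3 * H' (y * x ^ (-(1 : ℝ) / 3))) := by
  have ht : HasDerivAt (fun s : ℝ => y * s ^ (-(1 : ℝ) / 3))
      (y * (-(1 : ℝ) / 3 * x ^ (-(1 : ℝ) / 3 - 1))) x :=
    (Real.hasDerivAt_rpow_const (Or.inl hx.ne')).const_mul y
  have hmul := (Real.hasDerivAt_rpow_const (p := l / 3) (Or.inl hx.ne')).mul ((hH _).comp x ht)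
  have heq : (fun s => selfSimilar l (normalizedProfile l H) s y) =ᶠ[𝓝 x]
      fun s => s ^ (l / 3) * H (y * s ^ (-(1 : ℝ) / 3)) := by
    filter_upwards [lt_mem_nhds hx] with s hs using selfSimilar_normalizedProfile l H hs y
  rw [heq.deriv_eq]
  refine hmul.deriv.trans ?_
  simp only [Function.comp_apply, Real.rpow_sub_one hx.ne']
  ring

lemma deriv_deriv_selfSimilar_snd (hH : ∀ t, HasDerivAt H (H' t) t)
    (hH' : ∀ t, HasDerivAt H' (H'' t) t) (hx : 0 < x) (y : ℝ) :
    deriv (deriv fun z => selfSimilar l (normalizedProfile l H) x z) y =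
      x ^ (l / 3) * (H'' (y * x ^ (-(1 : ℝ) / 3)) * (x ^ (-(1 : ℝ) / 3)) ^ 2) := by
  have hz (z : ℝ) : HasDerivAt (fun z => z * x ^ (-(1 : ℝ) / 3)) (x ^ (-(1 : ℝ) / 3)) z := by
    simpa using (hasDerivAt_id z).mul_const (x ^ (-(1 : ℝ) / 3))
  have hfst : (deriv fun z => selfSimilar l (normalizedProfile l H) x z) =
      fun z => x ^ (l / 3) * (H' (z * x ^ (-(1 : ℝ) / 3)) * x ^ (-(1 : ℝ) / 3)) := by
    rw [funext fun z => selfSimilar_normalizedProfile l H hx z]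
    exact funext fun z => (((hH _).comp z (hz z)).const_mul _).deriv
  rw [hfst, sq, ← mul_assoc (H'' _)]
  exact ((((hH' _).comp y (hz y)).mul_const _).const_mul _).deriv

theorem selfSimilar_normalizedProfile_pde (hH : ∀ t, HasDerivAt H (H' t) t)
    (hH' : ∀ t, HasDerivAt H' (l / 3 * t * H t - t ^ 2 / 3 * H' t) t) (hx : 0 < x) (y : ℝ) :
    y * deriv (fun s => selfSimilar l (normalizedProfile l H) s y) x
      - deriv (deriv fun z => selfSimilar l (normalizedProfile l H) x z) y = 0 := by
  have hscale : (x ^ (-(1 : ℝ) / 3)) ^ 3 = x⁻¹ := by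
    rw [← Real.rpow_natCast, ← Real.rpow_mul hx.le, ← Real.rpow_neg_one]
    norm_num
  rw [deriv_selfSimilar_fst hH hx, deriv_deriv_selfSimilar_snd hH hH' hx,
    Real.rpow_sub_one hx.ne', div_eq_mul_inv, ← hscale]
  ring

lemma hasDerivAt_exp_neg_cube_mul (hW : SolvesOn (quarticPotential ((l + 1) / 3)) W W' univ)
    (t : ℝ) :
    HasDerivAt (fun t => Real.exp (-t ^ 3 / 18) * W t)
      (Real.exp (-t ^ 3 / 18) * (W' t - t ^ 2 / 6 * W t)) t :=
  ((hasDerivAt_exp_neg_cube t).mul (hW.hasDerivAt t trivial)).congr_deriv (by ring)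

lemma hasDerivAt_deriv_exp_neg_cube_mul
    (hW : SolvesOn (quarticPotential ((l + 1) / 3)) W W' univ) (t : ℝ) :
    HasDerivAt (fun t => Real.exp (-t ^ 3 / 18) * (W' t - t ^ 2 / 6 * W t))
      (l / 3 * t * (Real.exp (-t ^ 3 / 18) * W t) -
        t ^ 2 / 3 * (Real.exp (-t ^ 3 / 18) * (W' t - t ^ 2 / 6 * W t))) t := by
  have hsq : HasDerivAt (fun t : ℝ => t ^ 2 / 6) (t / 3) t :=
    ((hasDerivAt_pow 2 t).div_const 6).congr_deriv (by push_cast; ring)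
  refine ((hasDerivAt_exp_neg_cube t).mul ((hW.hasDerivAt_deriv t trivial).sub
    (hsq.mul (hW.hasDerivAt t trivial)))).congr_deriv ?_
  simp only [quarticPotential, Pi.sub_apply, Pi.mul_apply]
  ring

lemma contDiff_normalizedProfile (l : ℝ) (hH : ContDiff ℝ ∞ H) :
    ContDiff ℝ ∞ (normalizedProfile l H) :=
  (ContDiff.rpow_const_of_ne (by fun_prop) fun t => by positivity).mul hH

lemma tendsto_one_add_sq_rpow_mul_rpow (l : ℝ) :
    Tendsto (fun t : ℝ => (1 + t ^ 2) ^ (-l / 2) * t ^ l) atTop (𝓝 1) := by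
  have hbase : Tendsto (fun t : ℝ => 1 + (t ^ 2)⁻¹) atTop (𝓝 1) := by
    simpa using (tendsto_pow_atTop (α := ℝ) two_ne_zero).inv_tendsto_atTop.const_add 1
  have h := hbase.rpow_const (p := -l / 2) (Or.inl one_ne_zero)
  rw [Real.one_rpow] at h
  refine h.congr' ?_
  filter_upwards [eventually_gt_atTop 0] with t ht
  have hfactor : 1 + t ^ 2 = t ^ 2 * (1 + (t ^ 2)⁻¹) := by
    field_simp
    ring
  have hpow : (t ^ 2) ^ (-l / 2) = (t ^ l)⁻¹ := by
    rw [← Real.rpow_natCast, ← Real.rpow_mul ht.le, ← Real.rpow_neg ht.le]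
    congr 1
    push_cast
    ring
  rw [hfactor, Real.mul_rpow (by positivity) (by positivity), hpow]
  field_simp

lemma tendsto_normalizedProfile_atTop (l : ℝ) (hW : Tendsto W atTop (𝓝 0)) :
    Tendsto (normalizedProfile l fun t => Real.exp (-t ^ 3 / 18) * W t) atTop (𝓝 0) := by
  have h := ((tendsto_one_add_sq_rpow_mul_rpow l).mul (tendsto_wkb_zero (-l))).mul hW
  rw [mul_zero] at h
  refine h.congr' ?_
  filter_upwards [eventually_gt_atTop 0] with t ht
  rw [normalizedProfile, wkb, Real.rpow_neg ht.le]
  field_simp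

lemma tendsto_normalizedProfile_atBot {c : ℝ}
    (hW : Tendsto (fun t => W (-t) / wkb l t) atTop (𝓝 c)) :
    Tendsto (normalizedProfile l fun t => Real.exp (-t ^ 3 / 18) * W t) atBot (𝓝 c) := by
  have h := (tendsto_one_add_sq_rpow_mul_rpow l).mul hW
  rw [one_mul] at h
  refine (h.comp tendsto_neg_atBot_atTop).congr' ?_
  filter_upwards [eventually_lt_atBot 0] with t ht
  have ht' : 0 < (-t) ^ l := Real.rpow_pos_of_pos (neg_pos.2 ht) l
  have hexp : Real.exp (-t ^ 3 / 18) = (Real.exp (-(-t) ^ 3 / 18))⁻¹ := by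
    rw [← Real.exp_neg]
    ring_nf
  simp only [Function.comp_apply, normalizedProfile, wkb, hexp, neg_neg, neg_sq]
  field_simp

lemma exists_abs_le_of_tendsto_atBot_atTop {a b : ℝ} (hG : Continuous G)
    (hbot : Tendsto G atBot (𝓝 a)) (htop : Tendsto G atTop (𝓝 b)) : ∃ M, ∀ t, |G t| ≤ M := by
  have hbdd := hG.isBounded_range_iff_isBigO_atTop_atBot.2 ⟨htop.isBigO_one ℝ, hbot.isBigO_one ℝ⟩
  obtain ⟨M, hM⟩ := hbdd.exists_norm_le
  exact ⟨M, fun t => hM _ (mem_range_self t)⟩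

lemma tendsto_selfSimilar_nhdsGT_zero (l : ℝ) (hG : Tendsto G atTop (𝓝 0)) (hy : 0 < y) :
    Tendsto (fun x => selfSimilar l G x y) (𝓝[>] 0) (𝓝 0) := by
  have ht : Tendsto (fun x : ℝ => y * x ^ (-(1 : ℝ) / 3)) (𝓝[>] 0) atTop :=
    (tendsto_rpow_neg_nhdsGT_zero (by norm_num)).const_mul_atTop hy
  have hx : Tendsto (fun x : ℝ => x ^ ((2 : ℝ) / 3)) (𝓝[>] 0) (𝓝 0) := by
    have := (Real.continuousAt_rpow_const 0 ((2 : ℝ) / 3) (Or.inr (by norm_num))).tendsto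
    rw [Real.zero_rpow (by norm_num)] at this
    exact this.mono_left nhdsWithin_le_nhds
  have hr : Tendsto (fun x : ℝ => (y ^ 2 + x ^ ((2 : ℝ) / 3)) ^ (l / 2)) (𝓝[>] 0)
      (𝓝 ((y ^ 2 + 0) ^ (l / 2))) :=
    (hx.const_add _).rpow_const (Or.inl (by positivity))
  simpa [selfSimilar] using hr.mul (hG.comp ht)

end SelfSimilar

/-- For every integer `k`, with `λ = 1/2 + 3k`, there is a smooth bounded profile `G`
with `G(-∞) = 1`, `G(+∞) = 0` such that `v = r^λ G(t)` solves `y ∂ₓ v - ∂_yy v = 0`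
on `(0,∞) × ℝ` and vanishes as `x → 0⁺` for every fixed `y > 0`. -/
theorem stmt0 (k : ℤ) :
    ∃ G : ℝ → ℝ,
      ContDiff ℝ (⊤ : ℕ∞) G ∧
      (∃ M : ℝ, ∀ t : ℝ, |G t| ≤ M) ∧
      Tendsto G atBot (nhds 1) ∧
      Tendsto G atTop (nhds 0) ∧
      (∀ x y : ℝ, 0 < x →
        y * deriv (fun s : ℝ => selfSimilar (1 / 2 + 3 * (k : ℝ)) G s y) x
          - deriv (deriv (fun t : ℝ => selfSimilar (1 / 2 + 3 * (k : ℝ)) G x t)) y = 0) ∧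
      (∀ y : ℝ, 0 < y →
        Tendsto (fun x : ℝ => selfSimilar (1 / 2 + 3 * (k : ℝ)) G x y)
          (nhdsWithin 0 (Ioi 0)) (nhds 0)) := by
  obtain ⟨W, W', h, hasymp⟩ := exists_isBoundState_tendsto_div_wkb k
  generalize (1 / 2 + 3 * k : ℝ) = l at h hasymp ⊢
  have hsmooth : ContDiff ℝ ∞ (normalizedProfile l fun t => Real.exp (-t ^ 3 / 18) * W t) :=
    contDiff_normalizedProfile l
      (ContDiff.mul (by fun_prop) (h.contDiff (contDiff_quarticPotential _)))
  have hbot := tendsto_normalizedProfile_atBot hasymp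
  have htop := tendsto_normalizedProfile_atTop l h.tendsto_atTop
  exact ⟨_, hsmooth, exists_abs_le_of_tendsto_atBot_atTop hsmooth.continuous hbot htop, hbot, htop,
    fun _ y hx => selfSimilar_normalizedProfile_pde (hasDerivAt_exp_neg_cube_mul h.toSolvesOn)
      (hasDerivAt_deriv_exp_neg_cube_mul h.toSolvesOn) hx y,
    fun _ hy => tendsto_selfSimilar_nhdsGT_zero l htop hy⟩
end

section
/- Let λ ∈ ℝ and let W : ℝ → ℝ be twice continuously differentiable. Suppose W satisfies Kummer's equation with parameters a = −λ/3 and b = 2/3, namely ζ·W''(ζ) + (2/3 − ζ)·W'(ζ) + (λ/3)·W(ζ) = 0 for all ζ ∈ ℝ. Then the function Λ(t) := (1+t²)^{−λ/2} · W(−t³/9) satisfies, for every t ∈ ℝ, the ordinary differential equation Λ''(t) + (t²/3 + 2λt/(1+t²))·Λ'(t) + λ·( −(1/3)·t/(1+t²) + (1 + (λ−1)t²)/(1+t²)² )·Λ(t) = 0. -/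
open Filter Set

/-!
The change of unknown is the composition of two moves that intertwine second-order linear operators.
Substituting `ζ = c tⁿ` removes the singularity of Kummer's operator at `ζ = 0` exactly when
`b = 1 - 1 / n`, because then `ζ'' = b ζ'² / ζ`; `b = 2 / 3` is the case `n = 3`. Multiplying by a
weight `p` with `p' = q p` then conjugates `∂² + A ∂ + B` into
`∂² + (A - 2 q) ∂ + (B - q A + q² - q')`; for `p = (1 + t²)^(-λ/2)` one has `q = -λ t / (1 + t²)`.
-/

open scoped Topology

section Intertwining

variable {𝕜 E : Type*} [NontriviallyNormedField 𝕜] [NormedAddCommGroup E] [NormedSpace 𝕜 E]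

lemma hasDerivAt_one_add_sq (t : 𝕜) : HasDerivAt (fun s ↦ 1 + s ^ 2) (2 * t) t := by
  simpa using (hasDerivAt_pow 2 t).const_add 1

lemma hasDerivAt_const_mul_pow_succ (c t : 𝕜) (n : ℕ) :
    HasDerivAt (fun s ↦ c * s ^ (n + 1)) ((n + 1) * c * t ^ n) t :=
  ((hasDerivAt_pow (n + 1) t).const_mul c).congr_deriv (by
    rw [Nat.add_sub_cancel]
    push_cast
    ring)

lemma hasDerivAt_const_mul_pow_add_two (c t : 𝕜) (n : ℕ) :
    HasDerivAt (fun s ↦ c * s ^ (n + 2)) ((n + 2) * c * t ^ (n + 1)) t :=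
  (hasDerivAt_const_mul_pow_succ c t (n + 1)).congr_deriv (by push_cast; ring)

lemma deriv_deriv_comp_const_mul_pow {W : 𝕜 → E} {c t : 𝕜} {n : ℕ}
    (hW : ContDiffAt 𝕜 2 W (c * t ^ (n + 2))) :
    deriv (deriv fun s ↦ W (c * s ^ (n + 2))) t =
      ((n + 2) * c * t ^ (n + 1)) ^ 2 • deriv (deriv W) (c * t ^ (n + 2)) +
        ((n + 2) * (n + 1) * c * t ^ n) • deriv W (c * t ^ (n + 2)) := by
  have hφ : deriv (fun s : 𝕜 ↦ c * s ^ (n + 2)) = fun s ↦ (n + 2) * c * s ^ (n + 1) :=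
    funext fun s ↦ (hasDerivAt_const_mul_pow_add_two c s n).deriv
  have hφ' : deriv (deriv fun s : 𝕜 ↦ c * s ^ (n + 2)) t = (n + 2) * (n + 1) * c * t ^ n := by
    rw [hφ, (hasDerivAt_const_mul_pow_succ _ t n).deriv]
    ring
  have hcomp := iteratedDeriv_scomp_two (f := fun s : 𝕜 ↦ c * s ^ (n + 2)) hW (by fun_prop)
  simp only [iteratedDeriv_succ, iteratedDeriv_zero, hφ'] at hcomp
  simpa only [hφ, Function.comp_def] using hcomp

-- `hb` is the condition `b = 1 - 1 / (n + 2)` in a form valid in every characteristic.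
lemma deriv_deriv_comp_const_mul_pow_sub_eq_smul_kummer {W : 𝕜 → E} {a b c t : 𝕜} {n : ℕ}
    (hb : (n + 2) * b = n + 1) (hW : ContDiffAt 𝕜 2 W (c * t ^ (n + 2))) :
    deriv (deriv fun s ↦ W (c * s ^ (n + 2))) t
        - ((n + 2) * c * t ^ (n + 1)) • deriv (fun s ↦ W (c * s ^ (n + 2))) t
        - ((n + 2) ^ 2 * a * c * t ^ n) • W (c * t ^ (n + 2)) =
      ((n + 2) ^ 2 * c * t ^ n) •
        ((c * t ^ (n + 2)) • deriv (deriv W) (c * t ^ (n + 2))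
          + (b - c * t ^ (n + 2)) • deriv W (c * t ^ (n + 2)) - a • W (c * t ^ (n + 2))) := by
  have hderiv : deriv (fun s ↦ W (c * s ^ (n + 2))) t =
      ((n + 2) * c * t ^ (n + 1)) • deriv W (c * t ^ (n + 2)) :=
    ((hW.differentiableAt two_ne_zero).hasDerivAt.scomp t
      (hasDerivAt_const_mul_pow_add_two c t n)).deriv
  rw [deriv_deriv_comp_const_mul_pow hW, hderiv]
  match_scalars
  · ring
  · linear_combination (-(n + 2) * c * t ^ n) * hb
  · ring

lemma deriv_deriv_smul_add_eq_smul {p q : 𝕜 → 𝕜} {g : 𝕜 → E} {q' A B t : 𝕜}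
    (hp : ∀ᶠ s in 𝓝 t, HasDerivAt p (q s * p s) s) (hq : HasDerivAt q q' t)
    (hg : ContDiffAt 𝕜 2 g t) :
    deriv (deriv fun s ↦ p s • g s) t + (A - 2 * q t) • deriv (fun s ↦ p s • g s) t
        + (B - q t * A + q t ^ 2 - q') • p t • g t =
      p t • (deriv (deriv g) t + A • deriv g t + B • g t) := by
  have hderiv : deriv (fun s ↦ p s • g s) =ᶠ[𝓝 t] fun s ↦ p s • (deriv g s + q s • g s) := by
    filter_upwards [hp, hg.eventually (by simp)] with s hps hgs
    rw [(hps.fun_smul (hgs.differentiableAt two_ne_zero).hasDerivAt).deriv]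
    module
  have hg₁ : HasDerivAt g (deriv g t) t := (hg.differentiableAt two_ne_zero).hasDerivAt
  have hg₂ : HasDerivAt (deriv g) (deriv (deriv g) t) t :=
    ((hg.derivWithin (m := 1) one_add_one_eq_two.le).differentiableAt one_ne_zero).hasDerivAt
  have hderiv₂ := (hp.self_of_nhds.fun_smul (hg₂.fun_add (hq.fun_smul hg₁))).deriv
  rw [hderiv.deriv_eq, hderiv₂, hderiv.eq_of_nhds]
  module

end Intertwining

lemma hasDerivAt_one_add_sq_rpow (r s : ℝ) :
    HasDerivAt (fun s : ℝ ↦ (1 + s ^ 2) ^ r)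
      (2 * r * s / (1 + s ^ 2) * (1 + s ^ 2) ^ r) s := by
  have hne : 1 + s ^ 2 ≠ 0 := by positivity
  refine ((hasDerivAt_one_add_sq s).rpow_const (Or.inl hne)).congr_deriv ?_
  rw [Real.rpow_sub_one hne]
  ring

lemma hasDerivAt_mul_div_one_add_sq (k s : ℝ) :
    HasDerivAt (fun s : ℝ ↦ k * s / (1 + s ^ 2)) (k * (1 - s ^ 2) / (1 + s ^ 2) ^ 2) s := by
  have hne : 1 + s ^ 2 ≠ 0 := by positivity
  exact ((hasDerivAt_const_mul k).div (hasDerivAt_one_add_sq s) hne).congr_deriv (by ring)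

section RealLine

variable {E : Type*} [NormedAddCommGroup E] [NormedSpace ℝ E]

lemma deriv_deriv_comp_neg_cube_div_nine_add_eq_smul_kummer (a : ℝ) {W : ℝ → E} {t : ℝ}
    (hW : ContDiffAt ℝ 2 W (-t ^ 3 / 9)) :
    deriv (deriv fun s : ℝ ↦ W (-s ^ 3 / 9)) t
        + (t ^ 2 / 3) • deriv (fun s : ℝ ↦ W (-s ^ 3 / 9)) t + (a * t) • W (-t ^ 3 / 9) =
      (-t) • ((-t ^ 3 / 9) • deriv (deriv W) (-t ^ 3 / 9)
        + (2 / 3 - -t ^ 3 / 9) • deriv W (-t ^ 3 / 9) - a • W (-t ^ 3 / 9)) := by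
  have hcube (s : ℝ) : -s ^ 3 / 9 = -(1 / 9) * s ^ (1 + 2) := by ring
  simp only [hcube] at hW ⊢
  have hsubst := deriv_deriv_comp_const_mul_pow_sub_eq_smul_kummer (a := a) (b := 2 / 3)
    (by norm_num) hW
  convert hsubst using 1
  · push_cast
    module
  · congr 1
    push_cast
    ring

theorem stmt2_general (l t : ℝ) (W : ℝ → E) (hW : ContDiffAt ℝ 2 W (-t ^ 3 / 9))
    (hKummer : (-t ^ 3 / 9) • deriv (deriv W) (-t ^ 3 / 9)
      + (2 / 3 - -t ^ 3 / 9) • deriv W (-t ^ 3 / 9) + (l / 3) • W (-t ^ 3 / 9) = 0) :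
    deriv (deriv fun s : ℝ ↦ (1 + s ^ 2) ^ (-(l / 2)) • W (-s ^ 3 / 9)) t
        + (t ^ 2 / 3 + 2 * l * t / (1 + t ^ 2)) •
            deriv (fun s : ℝ ↦ (1 + s ^ 2) ^ (-(l / 2)) • W (-s ^ 3 / 9)) t
        + (l * (-(1 / 3) * t / (1 + t ^ 2) + (1 + (l - 1) * t ^ 2) / (1 + t ^ 2) ^ 2)) •
            (1 + t ^ 2) ^ (-(l / 2)) • W (-t ^ 3 / 9) = 0 := by
  have hode := deriv_deriv_comp_neg_cube_div_nine_add_eq_smul_kummer (-(l / 3)) hW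
  rw [neg_smul (l / 3) (W _), sub_neg_eq_add, hKummer, smul_zero] at hode
  have hgauge := deriv_deriv_smul_add_eq_smul (A := t ^ 2 / 3) (B := -(l / 3) * t)
    (.of_forall (hasDerivAt_one_add_sq_rpow (-(l / 2)))) (hasDerivAt_mul_div_one_add_sq _ t)
    (hW.comp t (f := fun s : ℝ ↦ -s ^ 3 / 9) (by fun_prop))
  simp only [Function.comp_def, hode, smul_zero] at hgauge
  have hne : 1 + t ^ 2 ≠ 0 := by positivity
  convert hgauge using 4
  · ring
  · field_simp
    ring

end RealLine

/-- If `W` solves Kummer's equation `ζ W'' + (2/3 - ζ) W' - (-λ/3) W = 0` on `ℝ`, then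
`Λ(t) = (1+t²)^(-λ/2) W(-t³/9)` solves the self-similar profile ODE
`Λ'' + (t²/3 + 2λt/(1+t²)) Λ' + λ(-(1/3) t/(1+t²) + (1+(λ-1)t²)/(1+t²)²) Λ = 0`. -/
theorem stmt2 (l : ℝ) (W : ℝ → ℝ) (hW : ContDiff ℝ 2 W)
    (hKummer : ∀ ζ : ℝ,
      ζ * deriv (deriv W) ζ + (2 / 3 - ζ) * deriv W ζ + (l / 3) * W ζ = 0) :
    ∀ t : ℝ,
      deriv (deriv (fun s : ℝ => (1 + s ^ 2) ^ (-(l / 2)) * W (-s ^ 3 / 9))) t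
        + (t ^ 2 / 3 + 2 * l * t / (1 + t ^ 2)) *
            deriv (fun s : ℝ => (1 + s ^ 2) ^ (-(l / 2)) * W (-s ^ 3 / 9)) t
        + l * (-(1 / 3) * t / (1 + t ^ 2) + (1 + (l - 1) * t ^ 2) / (1 + t ^ 2) ^ 2) *
            ((1 + t ^ 2) ^ (-(l / 2)) * W (-t ^ 3 / 9))
        = 0 := by
  intro t
  simpa only [smul_eq_mul] using stmt2_general l t W hW.contDiffAt (hKummer (-t ^ 3 / 9))
end

section
/- Let Λ : ℝ → ℝ be continuously differentiable with M₀ := sup_{t∈ℝ} |Λ(t)| < ∞ and M₁ := sup_{t∈ℝ} (1+|t|)³·|Λ'(t)| < ∞. Define v(x,y) := (y² + x^{2/3})^{1/4} · Λ(y·x^{−1/3}) for (x,y) ∈ (0,∞) × ℝ. Then there exists a constant C, depending only on M₀ and M₁, such that for every (x,y) ∈ (0,∞) × ℝ, |y·∂ₓv(x,y)| ≤ C · (y² + x^{2/3})^{−3/4} · (1 + |y|·x^{−1/3}). -/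
open Set

/-- The singular ansatz `v(x,y) = (y² + x^(2/3))^(1/4) · Λ(y · x^(-1/3))`,
i.e. `v = r^(1/2) Λ(t)` in the polar-like variables. -/
noncomputable def vHalf (Λ : ℝ → ℝ) (x y : ℝ) : ℝ :=
  (y ^ 2 + x ^ ((2 : ℝ) / 3)) ^ ((1 : ℝ) / 4) * Λ (y * x ^ (-(1 : ℝ) / 3))

/-!
With `r² = y² + x^(2a)` and `t = y x^(-a)` one has `r² = x^(2a) (1 + t²)`, so that `∂ₓ(r^(2k) Λ(t))`
is `a x^(2a-1) r^(2k-2)` times `2k Λ(t) - t (1 + t²) Λ'(t)`. The last factor is bounded because the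
weight `(1 + |t|)³` dominates `|t| (1 + t²)`, and for `a = 1/3` the remaining `|y| x^(2a-1)` is
`|t|`.
-/

/-- The profile `r ^ (2k) Λ(t)` in the polar-like variables `r = (y² + x^(2a))^(1/2)` and
`t = y x^(-a)`: under `(x, y) ↦ (l x, l^a y)` the variable `t` is invariant and `r` scales by `l^a`.
The equation `y ∂ₓu = ∂_{yy}u` is invariant under this scaling exactly for `a = 1/3`. -/
noncomputable def selfSimilarProfile (a k : ℝ) (Λ : ℝ → ℝ) (x y : ℝ) : ℝ :=
  (y ^ 2 + x ^ (2 * a)) ^ k * Λ (y * x ^ (-a))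

theorem vHalf_eq_selfSimilarProfile : vHalf = selfSimilarProfile (1 / 3) (1 / 4) := by
  funext Λ x y
  norm_num [vHalf, selfSimilarProfile]

theorem sq_add_rpow_eq_mul_one_add_sq {x : ℝ} (hx : 0 < x) (a y : ℝ) :
    y ^ 2 + x ^ (2 * a) = x ^ (2 * a) * (1 + (y * x ^ (-a)) ^ 2) := by
  have hcancel : x ^ (2 * a) * (x ^ (-a)) ^ 2 = 1 := by
    have hexp : 2 * a + -a * (2 : ℕ) = 0 := by push_cast; ring
    rw [← Real.rpow_mul_natCast hx.le, ← Real.rpow_add hx, hexp, Real.rpow_zero]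
  linear_combination -y ^ 2 * hcancel

theorem hasDerivAt_selfSimilarProfile (a k : ℝ) {Λ : ℝ → ℝ} {x y Λ' : ℝ} (hx : 0 < x)
    (hΛ : HasDerivAt Λ Λ' (y * x ^ (-a))) :
    HasDerivAt (fun s ↦ selfSimilarProfile a k Λ s y)
      (a * x ^ (2 * a - 1) * (y ^ 2 + x ^ (2 * a)) ^ (k - 1) *
        (2 * k * Λ (y * x ^ (-a)) -
          y * x ^ (-a) * (1 + (y * x ^ (-a)) ^ 2) * Λ')) x := by
  have hR : 0 < y ^ 2 + x ^ (2 * a) := by positivity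
  have hradius : HasDerivAt (fun s ↦ (y ^ 2 + s ^ (2 * a)) ^ k)
      (2 * a * x ^ (2 * a - 1) * k * (y ^ 2 + x ^ (2 * a)) ^ (k - 1)) x :=
    ((Real.hasDerivAt_rpow_const (.inl hx.ne')).const_add _).rpow_const (.inl hR.ne')
  have hangle : HasDerivAt (fun s ↦ y * s ^ (-a)) (y * (-a * x ^ (-a - 1))) x :=
    (Real.hasDerivAt_rpow_const (.inl hx.ne')).const_mul y
  refine (hradius.mul (hΛ.comp x hangle)).congr_deriv ?_
  have hpow : (y ^ 2 + x ^ (2 * a)) ^ k =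
      (y ^ 2 + x ^ (2 * a)) ^ (k - 1) * (x ^ (2 * a) * (1 + (y * x ^ (-a)) ^ 2)) := by
    rw [← sq_add_rpow_eq_mul_one_add_sq hx, ← Real.rpow_add_one hR.ne', sub_add_cancel]
  rw [hpow, Real.rpow_sub_one hx.ne', Real.rpow_sub_one hx.ne', Function.comp_apply]
  ring

theorem abs_mul_one_add_sq_le (t : ℝ) : |t * (1 + t ^ 2)| ≤ (1 + |t|) ^ 3 := by
  rw [abs_mul, abs_of_pos (by positivity : 0 < 1 + t ^ 2), ← sq_abs]
  nlinarith [abs_nonneg t]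

theorem abs_mul_sub_mul_one_add_sq_le {t L D M₀ M₁ : ℝ} (k : ℝ) (hL : |L| ≤ M₀)
    (hD : (1 + |t|) ^ 3 * |D| ≤ M₁) :
    |2 * k * L - t * (1 + t ^ 2) * D| ≤ 2 * |k| * M₀ + M₁ :=
  calc |2 * k * L - t * (1 + t ^ 2) * D|
      ≤ |2 * k * L| + |t * (1 + t ^ 2) * D| := abs_sub _ _
    _ = 2 * |k| * |L| + |t * (1 + t ^ 2)| * |D| := by simp only [abs_mul, abs_two]
    _ ≤ 2 * |k| * |L| + (1 + |t|) ^ 3 * |D| := by gcongr; exact abs_mul_one_add_sq_le t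
    _ ≤ 2 * |k| * M₀ + M₁ := by gcongr

theorem stmt7_general (a k : ℝ) {M₀ M₁ : ℝ} {Λ : ℝ → ℝ} (hΛ : Differentiable ℝ Λ)
    (hM₀ : ∀ t, |Λ t| ≤ M₀) (hM₁ : ∀ t, (1 + |t|) ^ 3 * |deriv Λ t| ≤ M₁)
    {x : ℝ} (hx : 0 < x) (y : ℝ) :
    |y * deriv (fun s ↦ selfSimilarProfile a k Λ s y) x| ≤
      |a| * (2 * |k| * M₀ + M₁) * (y ^ 2 + x ^ (2 * a)) ^ (k - 1) * (|y| * x ^ (2 * a - 1)) := by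
  have hR : 0 < y ^ 2 + x ^ (2 * a) := by positivity
  set t := y * x ^ (-a) with ht
  rw [(hasDerivAt_selfSimilarProfile a k hx (hΛ _).hasDerivAt).deriv, ← ht]
  calc |y * (a * x ^ (2 * a - 1) * (y ^ 2 + x ^ (2 * a)) ^ (k - 1) *
          (2 * k * Λ t - t * (1 + t ^ 2) * deriv Λ t))|
      = |a| * |2 * k * Λ t - t * (1 + t ^ 2) * deriv Λ t| *
          (y ^ 2 + x ^ (2 * a)) ^ (k - 1) * (|y| * x ^ (2 * a - 1)) := by
        rw [abs_mul, abs_mul, abs_mul, abs_mul, Real.abs_rpow_of_nonneg hx.le,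
          Real.abs_rpow_of_nonneg hR.le, abs_of_pos hx, abs_of_pos hR]
        ring
    _ ≤ _ := by
        gcongr
        exact abs_mul_sub_mul_one_add_sq_le k (hM₀ t) (hM₁ t)

theorem abs_mul_deriv_vHalf_le {M₀ M₁ : ℝ} {Λ : ℝ → ℝ} (hΛ : Differentiable ℝ Λ)
    (hM₀ : ∀ t, |Λ t| ≤ M₀) (hM₁ : ∀ t, (1 + |t|) ^ 3 * |deriv Λ t| ≤ M₁)
    {x : ℝ} (hx : 0 < x) (y : ℝ) :
    |y * deriv (fun s ↦ vHalf Λ s y) x| ≤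
      (M₀ / 6 + M₁ / 3) * (y ^ 2 + x ^ ((2 : ℝ) / 3)) ^ (-(3 : ℝ) / 4) *
        (|y| * x ^ (-(1 : ℝ) / 3)) := by
  rw [vHalf_eq_selfSimilarProfile]
  convert stmt7_general (1 / 3) (1 / 4) hΛ hM₀ hM₁ hx y using 3
  · rw [abs_of_pos (by norm_num), abs_of_pos (by norm_num)]
    ring
  all_goals norm_num

/-- If `|Λ| ≤ M₀` and `(1+|t|)³ |Λ'| ≤ M₁`, then, with a constant `C` depending only on
`M₀` and `M₁`, `|y ∂ₓ v| ≤ C (y² + x^(2/3))^(-3/4) (1 + |y| x^(-1/3))` on `(0,∞) × ℝ`,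
where `v = r^(1/2) Λ(t)`. -/
theorem stmt7 (M₀ M₁ : ℝ) :
    ∃ C : ℝ, ∀ Λ : ℝ → ℝ, ContDiff ℝ 1 Λ →
      (∀ t : ℝ, |Λ t| ≤ M₀) →
      (∀ t : ℝ, (1 + |t|) ^ 3 * |deriv Λ t| ≤ M₁) →
      ∀ x y : ℝ, 0 < x →
        |y * deriv (fun s : ℝ => vHalf Λ s y) x|
          ≤ C * (y ^ 2 + x ^ ((2 : ℝ) / 3)) ^ (-(3 : ℝ) / 4) * (1 + |y| * x ^ (-(1 : ℝ) / 3)) := by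
  refine ⟨M₀ / 6 + M₁ / 3, fun Λ hΛ hM₀ hM₁ x y hx ↦
    (abs_mul_deriv_vHalf_le hΛ.differentiable_one hM₀ hM₁ hx y).trans ?_⟩
  have hM₀_nonneg : 0 ≤ M₀ := (abs_nonneg _).trans (hM₀ 0)
  have hM₁_nonneg : 0 ≤ M₁ := le_trans (by positivity) (hM₁ 0)
  gcongr
  exact le_add_of_nonneg_left zero_le_one
end

section
/- Let Λ : ℝ → ℝ be continuously differentiable and define v(x,y) := (y² + x^{2/3})^{1/4} · Λ(y·x^{−1/3}) for (x,y) ∈ (0,∞) × ℝ, and H(t) := (1/2)·(1+t²)^{1/2}·Λ(t) − t·(1+t²)^{3/2}·Λ'(t) for t ∈ ℝ. Then (i) for every (x,y) ∈ (0,∞) × ℝ, ∂ₓv(x,y) = (1/3)·(y² + x^{2/3})^{−5/4} · H(y·x^{−1/3}); and (ii) if H is not identically zero on ℝ, then for every ε > 0, the function ∂ₓv does not belong to L²((0,ε) × (−ε,ε)), i.e. ∫₀^ε ∫₋ε^ε |∂ₓv(x,y)|² dy dx = +∞. -/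
open Set MeasureTheory

/-- The profile `H(t) = (1/2)(1+t²)^(1/2) Λ(t) - t (1+t²)^(3/2) Λ'(t)`. -/
noncomputable def Hfun (Λ : ℝ → ℝ) (t : ℝ) : ℝ :=
  1 / 2 * (1 + t ^ 2) ^ ((1 : ℝ) / 2) * Λ t - t * (1 + t ^ 2) ^ ((3 : ℝ) / 2) * deriv Λ t

/-!
The derivative `∂ₓv` is quasi-homogeneous: it equals `x ^ (-5/6)` times a function of
`t = y * x ^ (-1/3)`. Substituting `y = x ^ (1/3) * t` on each slice of the rectangle turns the
integral of its square into at least a positive multiple of `∫₀ x ^ (-5/3 + 1/3) dx = ∞`, unless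
`H = 0` almost everywhere. In that case `v` is constant in `x > 0` for each `y ≠ 0`, even though
its `x`-derivative is only known to vanish almost everywhere, and this forces `H = 0` everywhere.
-/

open Filter Topology
open scoped ENNReal

theorem lintegral_Ioo_rpow_eq_top {s δ : ℝ} (hs : s ≤ -1) (hδ : 0 < δ) :
    ∫⁻ x in Ioo 0 δ, ENNReal.ofReal (x ^ s) = ⊤ := by
  by_contra h
  have hnonneg : 0 ≤ᵐ[volume.restrict (Ioo 0 δ)] fun x : ℝ => x ^ s :=
    ae_restrict_of_forall_mem measurableSet_Ioo fun x hx => Real.rpow_nonneg hx.1.le s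
  have hint : IntegrableOn (fun x : ℝ => x ^ s) (Ioo 0 δ) :=
    (lintegral_ofReal_ne_top_iff_integrable (by fun_prop) hnonneg).1 h
  exact hs.not_gt ((intervalIntegral.integrableOn_Ioo_rpow_iff hδ).1 hint)

theorem lintegral_Ioo_comp_mul_right (g : ℝ → ℝ≥0∞) {c : ℝ} (hc : 0 < c) (a b : ℝ) :
    ∫⁻ y in Ioo a b, g (y * c) =
      ENNReal.ofReal c⁻¹ * ∫⁻ t in Ioo (a * c) (b * c), g t := by
  have hderiv : ∀ y ∈ Ioo a b, HasDerivWithinAt (· * c) c (Ioo a b) y := fun y _ => by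
    simpa using ((hasDerivAt_id y).mul_const c).hasDerivWithinAt
  have hcov := lintegral_image_eq_lintegral_abs_deriv_mul measurableSet_Ioo hderiv
    (mul_left_injective₀ hc.ne').injOn g
  rw [image_mul_right_Ioo a b hc, abs_of_pos hc,
    lintegral_const_mul' _ _ ENNReal.ofReal_ne_top] at hcov
  rw [hcov, ← mul_assoc, ← ENNReal.ofReal_mul (inv_nonneg.2 hc.le), inv_mul_cancel₀ hc.ne',
    ENNReal.ofReal_one, one_mul]

theorem tendsto_lintegral_Ioo_mul_rpow_nhdsGT_zero {g : ℝ → ℝ≥0∞} (hg : AEMeasurable g)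
    {a ε : ℝ} (ha : 0 < a) (hε : 0 < ε) :
    Tendsto (fun x : ℝ => ∫⁻ t in Ioo (-ε * x ^ (-a)) (ε * x ^ (-a)), g t) (𝓝[>] 0)
      (𝓝 (∫⁻ t, g t)) := by
  have hright : Tendsto (fun x : ℝ => ε * x ^ (-a)) (𝓝[>] 0) atTop :=
    (tendsto_rpow_neg_nhdsGT_zero (neg_neg_of_pos ha)).const_mul_atTop hε
  have hleft : Tendsto (fun x : ℝ => -ε * x ^ (-a)) (𝓝[>] 0) atBot := by
    simpa only [neg_mul, Function.comp_def] using tendsto_neg_atTop_atBot.comp hright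
  exact (aecover_Ioo hleft hright).lintegral_tendsto_of_countably_generated hg

theorem lintegral_rpow_mul_comp_mul_rpow_eq_top {g : ℝ → ℝ≥0∞} (hg : Measurable g)
    (hg₀ : ∫⁻ t, g t ≠ 0) {a s δ ε : ℝ} (ha : 0 < a) (hs : s + a ≤ -1) (hδ : 0 < δ)
    (hε : 0 < ε) :
    ∫⁻ p in Ioo 0 δ ×ˢ Ioo (-ε) ε, ENNReal.ofReal (p.1 ^ s) * g (p.2 * p.1 ^ (-a)) = ⊤ := by
  obtain ⟨c, hc₀, hc⟩ := exists_between (pos_iff_ne_zero.2 hg₀)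
  obtain ⟨η, hη, hslice⟩ := mem_nhdsGT_iff_exists_Ioo_subset.1
    ((tendsto_lintegral_Ioo_mul_rpow_nhdsGT_zero hg.aemeasurable ha hε).eventually_const_lt hc)
  refine top_unique ?_
  calc
    ⊤ = ∫⁻ x in Ioo 0 (min δ η), ENNReal.ofReal (x ^ (s + a)) * c := by
      rw [lintegral_mul_const _ (by fun_prop), lintegral_Ioo_rpow_eq_top hs (lt_min hδ hη),
        ENNReal.top_mul hc₀.ne']
    _ ≤ ∫⁻ x in Ioo 0 (min δ η), ∫⁻ y in Ioo (-ε) ε,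
          ENNReal.ofReal (x ^ s) * g (y * x ^ (-a)) := by
      refine setLIntegral_mono' measurableSet_Ioo fun x hx => ?_
      have hx₀ : 0 < x := hx.1
      rw [lintegral_const_mul' _ _ ENNReal.ofReal_ne_top,
        lintegral_Ioo_comp_mul_right g (Real.rpow_pos_of_pos hx₀ _), ← mul_assoc,
        ← ENNReal.ofReal_mul (Real.rpow_nonneg hx₀.le s), ← Real.rpow_neg hx₀.le, neg_neg,
        ← Real.rpow_add hx₀]
      gcongr
      exact (hslice ⟨hx₀, hx.2.trans_le (min_le_right _ _)⟩).le
    _ ≤ ∫⁻ x in Ioo 0 δ, ∫⁻ y in Ioo (-ε) ε, ENNReal.ofReal (x ^ s) * g (y * x ^ (-a)) :=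
      lintegral_mono_set (Ioo_subset_Ioo_right (min_le_left _ _))
    _ = _ := by
      rw [Measure.volume_eq_prod, ← Measure.prod_restrict, lintegral_prod _ (by fun_prop)]

-- `f '' s` is an interval of measure at most `∫ |f'|` over `s`, hence a single point.
theorem eq_of_hasDerivWithinAt_ae_eq_zero {f f' : ℝ → ℝ} {s : Set ℝ}
    (hs : IsPreconnected s) (hf : ∀ x ∈ s, HasDerivWithinAt f (f' x) s x)
    (hf' : ∀ᵐ x ∂volume.restrict s, f' x = 0) {x y : ℝ} (hx : x ∈ s) (hy : y ∈ s) :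
    f x = f y := by
  have hnull : volume (f '' s) = 0 := by
    refine nonpos_iff_eq_zero.1 ((addHaar_image_le_lintegral_abs_det_fderiv volume
      hs.ordConnected.measurableSet fun x hx => (hf x hx).hasFDerivWithinAt).trans_eq ?_)
    refine (lintegral_congr_ae (hf'.mono fun x hx => ?_)).trans lintegral_zero
    simp [hx]
  have himage : (f '' s).OrdConnected :=
    (hs.image f fun x hx => (hf x hx).continuousWithinAt).ordConnected
  have hvol : volume (uIcc (f x) (f y)) = 0 :=
    measure_mono_null (himage.uIcc_subset (mem_image_of_mem f hx) (mem_image_of_mem f hy)) hnull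
  rw [Real.volume_interval, ENNReal.ofReal_eq_zero, abs_nonpos_iff, sub_eq_zero] at hvol
  exact hvol.symm

theorem ae_restrict_Ioi_comp_const_mul_rpow {p : ℝ → Prop} (hp : ∀ᵐ t, p t) {y q : ℝ}
    (hy : y ≠ 0) (hq : q ≠ 0) : ∀ᵐ x ∂volume.restrict (Ioi 0), p (y * x ^ q) := by
  have hdiff : DifferentiableOn ℝ (fun t : ℝ => (t / y) ^ q⁻¹) ({t | ¬ p t} ∩ {t | t / y ≠ 0}) :=
    fun t ht => (((hasDerivAt_id t).div_const y).rpow_const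
      (Or.inl ht.2)).differentiableAt.differentiableWithinAt
  rw [ae_restrict_iff' measurableSet_Ioi]
  refine measure_mono_null (fun x hx => ?_)
    (addHaar_image_eq_zero_of_differentiableOn_of_addHaar_eq_zero volume hdiff
      (measure_mono_null inter_subset_left hp))
  obtain ⟨hx₀, hpx⟩ : 0 < x ∧ ¬ p (y * x ^ q) := by simpa using hx
  have hdiv : y * x ^ q / y = x ^ q := mul_div_cancel_left₀ _ hy
  refine ⟨y * x ^ q, ⟨hpx, ?_⟩, ?_⟩
  · simpa only [mem_ofPred_eq, hdiv] using (Real.rpow_pos_of_pos hx₀ q).ne'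
  · simp only [hdiv, Real.rpow_rpow_inv hx₀.le hq]

section Profile

variable {Λ : ℝ → ℝ} {x y : ℝ}

theorem sq_add_rpow_rpow (y : ℝ) (hx : 0 < x) (q : ℝ) :
    (y ^ 2 + x ^ ((2 : ℝ) / 3)) ^ q =
      (1 + (y * x ^ (-(1 : ℝ) / 3)) ^ 2) ^ q * x ^ (2 / 3 * q) := by
  have hsq : (x ^ (-(1 : ℝ) / 3)) ^ 2 * x ^ ((2 : ℝ) / 3) = 1 := by
    rw [← Real.rpow_mul_natCast hx.le, ← Real.rpow_add hx]; norm_num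
  have hbase : y ^ 2 + x ^ ((2 : ℝ) / 3) =
      (1 + (y * x ^ (-(1 : ℝ) / 3)) ^ 2) * x ^ ((2 : ℝ) / 3) := by
    linear_combination -(y ^ 2) * hsq
  rw [hbase, Real.mul_rpow (by positivity) (by positivity), ← Real.rpow_mul hx.le]

theorem Hfun_eq_rpow_mul (Λ : ℝ → ℝ) (t : ℝ) :
    Hfun Λ t = (1 + t ^ 2) ^ ((1 : ℝ) / 2) * (Λ t / 2 - t * (1 + t ^ 2) * deriv Λ t) := by
  have hpow : (1 + t ^ 2) ^ ((3 : ℝ) / 2) = (1 + t ^ 2) ^ ((1 : ℝ) / 2) * (1 + t ^ 2) := by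
    rw [← Real.rpow_add_one (by positivity)]; norm_num
  rw [Hfun, hpow]
  ring

theorem Hfun_zero (Λ : ℝ → ℝ) : Hfun Λ 0 = Λ 0 / 2 := by
  simp [Hfun_eq_rpow_mul]

theorem measurable_Hfun (hΛ : Measurable Λ) : Measurable (Hfun Λ) := by
  have := measurable_deriv Λ
  unfold Hfun
  fun_prop

theorem hasDerivAt_vHalf (hx : 0 < x)
    (hΛ : DifferentiableAt ℝ Λ (y * x ^ (-(1 : ℝ) / 3))) :
    HasDerivAt (fun s => vHalf Λ s y)
      (1 / 3 * (y ^ 2 + x ^ ((2 : ℝ) / 3)) ^ (-(5 : ℝ) / 4) *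
        Hfun Λ (y * x ^ (-(1 : ℝ) / 3))) x := by
  have hradial := ((Real.hasDerivAt_rpow_const (p := (2 : ℝ) / 3) (Or.inl hx.ne')).const_add
    (y ^ 2)).rpow_const (p := (1 : ℝ) / 4) (Or.inl (by positivity))
  have hangular := hΛ.hasDerivAt.comp x
    ((Real.hasDerivAt_rpow_const (p := -(1 : ℝ) / 3) (Or.inl hx.ne')).const_mul y)
  refine (hradial.mul hangular).congr_deriv ?_
  simp only [Function.comp_apply, sq_add_rpow_rpow y hx, Hfun_eq_rpow_mul]
  set t := y * x ^ (-(1 : ℝ) / 3) with ht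
  have hpos : 0 < 1 + t ^ 2 := by positivity
  have hradius₁ : (1 + t ^ 2) ^ ((1 : ℝ) / 4 - 1) =
      (1 + t ^ 2) ^ (-(5 : ℝ) / 4) * (1 + t ^ 2) ^ ((1 : ℝ) / 2) := by
    rw [← Real.rpow_add hpos]; norm_num
  have hradius₂ : (1 + t ^ 2) ^ ((1 : ℝ) / 4) =
      (1 + t ^ 2) ^ (-(5 : ℝ) / 4) * (1 + t ^ 2) ^ ((1 : ℝ) / 2) * (1 + t ^ 2) := by
    rw [← Real.rpow_add hpos, ← Real.rpow_add_one hpos.ne']; norm_num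
  have hx₁ : x ^ ((2 : ℝ) / 3 - 1) * x ^ (2 / 3 * ((1 : ℝ) / 4 - 1)) =
      x ^ (2 / 3 * (-(5 : ℝ) / 4)) := by
    rw [← Real.rpow_add hx]; norm_num
  have hx₂ : x ^ (2 / 3 * ((1 : ℝ) / 4)) * x ^ (-(1 : ℝ) / 3 - 1) =
      x ^ (-(1 : ℝ) / 3) * x ^ (2 / 3 * (-(5 : ℝ) / 4)) := by
    rw [← Real.rpow_add hx, ← Real.rpow_add hx]; norm_num
  calc
    _ = 1 / 3 * ((1 + t ^ 2) ^ (-(5 : ℝ) / 4) * (1 + t ^ 2) ^ ((1 : ℝ) / 2)) *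
          ((x ^ ((2 : ℝ) / 3 - 1) * x ^ (2 / 3 * ((1 : ℝ) / 4 - 1))) * (Λ t / 2) -
            y * (x ^ (2 / 3 * ((1 : ℝ) / 4)) * x ^ (-(1 : ℝ) / 3 - 1)) * (1 + t ^ 2) *
              deriv Λ t) := by
      rw [hradius₁, hradius₂]; ring
    _ = _ := by rw [hx₁, hx₂, ht]; ring

/-- The trace `t ↦ ∂ₓv(1, t)`, to which quasi-homogeneity reduces `∂ₓv`. -/
noncomputable def slopeProfile (Λ : ℝ → ℝ) (t : ℝ) : ℝ :=
  1 / 3 * (1 + t ^ 2) ^ (-(5 : ℝ) / 4) * Hfun Λ t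

theorem slopeProfile_eq_zero_iff {t : ℝ} : slopeProfile Λ t = 0 ↔ Hfun Λ t = 0 := by
  have hpow : (1 + t ^ 2) ^ (-(5 : ℝ) / 4) ≠ 0 := by positivity
  simp [slopeProfile, hpow]

theorem measurable_slopeProfile (hΛ : Measurable Λ) : Measurable (slopeProfile Λ) := by
  have := measurable_Hfun hΛ
  unfold slopeProfile
  fun_prop

theorem deriv_vHalf_eq_rpow_mul_slopeProfile (hx : 0 < x)
    (hΛ : DifferentiableAt ℝ Λ (y * x ^ (-(1 : ℝ) / 3))) :
    deriv (fun s => vHalf Λ s y) x =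
      x ^ (-(5 : ℝ) / 6) * slopeProfile Λ (y * x ^ (-(1 : ℝ) / 3)) := by
  have hexp : (2 / 3 * (-(5 : ℝ) / 4)) = -(5 : ℝ) / 6 := by norm_num
  rw [(hasDerivAt_vHalf hx hΛ).deriv, sq_add_rpow_rpow y hx, hexp, slopeProfile]
  ring

theorem vHalf_eq_of_ae_Hfun_eq_zero (hΛ : Differentiable ℝ Λ) (hH : ∀ᵐ t, Hfun Λ t = 0)
    (hy : y ≠ 0) {x₁ x₂ : ℝ} (hx₁ : 0 < x₁) (hx₂ : 0 < x₂) :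
    vHalf Λ x₁ y = vHalf Λ x₂ y := by
  refine eq_of_hasDerivWithinAt_ae_eq_zero isPreconnected_Ioi
    (fun x hx => (hasDerivAt_vHalf hx (hΛ _)).hasDerivWithinAt) ?_ hx₁ hx₂
  filter_upwards [ae_restrict_Ioi_comp_const_mul_rpow hH hy (q := -1 / 3) (by norm_num)] with x hx
  rw [hx, mul_zero]

-- Letting `x → ∞` on the line `y = 1` sends `t` to `0` while `r` blows up, so a solution that is
-- constant in `x` must have `Λ 0 = 0`.
theorem apply_zero_eq_zero_of_vHalf_one_eq_const (hΛ : ContinuousAt Λ 0) {C : ℝ}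
    (hC : ∀ x, 0 < x → vHalf Λ x 1 = C) : Λ 0 = 0 := by
  have hprofile : Tendsto (fun x : ℝ => Λ (x ^ (-(1 / 3 : ℝ)))) atTop (𝓝 (Λ 0)) :=
    hΛ.tendsto.comp (tendsto_rpow_neg_atTop (by norm_num))
  have hradius : Tendsto (fun x : ℝ => (1 + x ^ ((2 : ℝ) / 3)) ^ (-(1 / 4 : ℝ))) atTop (𝓝 0) :=
    (tendsto_rpow_neg_atTop (by norm_num)).comp
      (tendsto_atTop_add_const_left _ _ (tendsto_rpow_atTop (by norm_num)))
  have hdecay := hradius.mul_const C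
  rw [zero_mul] at hdecay
  refine tendsto_nhds_unique hprofile (hdecay.congr' ?_)
  filter_upwards [eventually_gt_atTop 0] with x hx
  have hpos : 0 < 1 + x ^ ((2 : ℝ) / 3) := by positivity
  rw [← hC x hx, vHalf, one_pow, one_mul, ← mul_assoc, ← Real.rpow_add hpos, neg_add_cancel,
    Real.rpow_zero, one_mul, neg_div]

theorem Hfun_eq_zero_of_ae (hΛ : Differentiable ℝ Λ) (hH : ∀ᵐ t, Hfun Λ t = 0) (t : ℝ) :
    Hfun Λ t = 0 := by
  rcases eq_or_ne t 0 with rfl | ht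
  · rw [Hfun_zero, apply_zero_eq_zero_of_vHalf_one_eq_const hΛ.continuous.continuousAt
      fun x hx => vHalf_eq_of_ae_Hfun_eq_zero hΛ hH one_ne_zero hx one_pos, zero_div]
  · have hconst : (fun s => vHalf Λ s t) =ᶠ[𝓝 1] fun _ => vHalf Λ 1 t := by
      filter_upwards [eventually_gt_nhds one_pos] with s hs
      exact vHalf_eq_of_ae_Hfun_eq_zero hΛ hH ht hs one_pos
    have hderiv := deriv_vHalf_eq_rpow_mul_slopeProfile (y := t) one_pos (hΛ _)
    rw [hconst.deriv_eq, deriv_const, Real.one_rpow, Real.one_rpow, one_mul, mul_one] at hderiv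
    exact slopeProfile_eq_zero_iff.1 hderiv.symm

theorem lintegral_slopeProfile_sq_ne_zero (hΛ : Differentiable ℝ Λ)
    (hH : ¬ ∀ t, Hfun Λ t = 0) : ∫⁻ t, ENNReal.ofReal (slopeProfile Λ t ^ 2) ≠ 0 := by
  have hmeas := measurable_slopeProfile hΛ.continuous.measurable
  refine fun h => hH (Hfun_eq_zero_of_ae hΛ ?_)
  filter_upwards [(lintegral_eq_zero_iff (by fun_prop)).1 h] with t ht
  exact slopeProfile_eq_zero_iff.1
    (pow_eq_zero_iff two_ne_zero |>.1 (le_antisymm (ENNReal.ofReal_eq_zero.1 ht) (sq_nonneg _)))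

theorem lintegral_deriv_vHalf_sq_eq_top (hΛ : Differentiable ℝ Λ)
    (hH : ¬ ∀ t, Hfun Λ t = 0) {δ ε : ℝ} (hδ : 0 < δ) (hε : 0 < ε) :
    ∫⁻ p in Ioo 0 δ ×ˢ Ioo (-ε) ε,
      ENNReal.ofReal (deriv (fun s => vHalf Λ s p.2) p.1 ^ 2) = ⊤ := by
  have hmeas := measurable_slopeProfile hΛ.continuous.measurable
  rw [← lintegral_rpow_mul_comp_mul_rpow_eq_top (a := 1 / 3) (s := -5 / 3) (by fun_prop)
    (lintegral_slopeProfile_sq_ne_zero hΛ hH) (by norm_num) (by norm_num) hδ hε]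
  refine setLIntegral_congr_fun (measurableSet_Ioo.prod measurableSet_Ioo) fun p hp => ?_
  have hx : 0 < p.1 := hp.1.1
  have hpow : (p.1 ^ (-(5 : ℝ) / 6)) ^ 2 = p.1 ^ (-(5 : ℝ) / 3) := by
    rw [← Real.rpow_mul_natCast hx.le]; norm_num
  simp only [deriv_vHalf_eq_rpow_mul_slopeProfile hx (hΛ _), mul_pow, hpow, ← neg_div,
    ENNReal.ofReal_mul (Real.rpow_nonneg hx.le _)]

end Profile

theorem stmt9_general (Λ : ℝ → ℝ) (hΛ : Differentiable ℝ Λ) :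
    (∀ x y : ℝ, 0 < x →
      deriv (fun s : ℝ => vHalf Λ s y) x
        = 1 / 3 * (y ^ 2 + x ^ ((2 : ℝ) / 3)) ^ (-(5 : ℝ) / 4)
            * Hfun Λ (y * x ^ (-(1 : ℝ) / 3))) ∧
    ((¬ ∀ t : ℝ, Hfun Λ t = 0) → ∀ ε : ℝ, 0 < ε →
      ∫⁻ p in (Ioo (0 : ℝ) ε ×ˢ Ioo (-ε) ε),
        ENNReal.ofReal ((deriv (fun s : ℝ => vHalf Λ s p.2) p.1) ^ 2) = ⊤) :=
  ⟨fun _ _ hx => (hasDerivAt_vHalf hx (hΛ _)).deriv,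
    fun hH _ hε => lintegral_deriv_vHalf_sq_eq_top hΛ hH hε hε⟩

/-- For `v = r^(1/2) Λ(t)`: (i) `∂ₓ v = (1/3) r^(-5/2) H(t)`; (ii) if `H ≢ 0`, then for
every `ε > 0`, `∫_{(0,ε)×(-ε,ε)} |∂ₓ v|² = +∞`, i.e. `∂ₓ v ∉ L²((0,ε) × (-ε,ε))`. -/
theorem stmt9 (Λ : ℝ → ℝ) (hΛ : ContDiff ℝ 1 Λ) :
    (∀ x y : ℝ, 0 < x →
      deriv (fun s : ℝ => vHalf Λ s y) x
        = 1 / 3 * (y ^ 2 + x ^ ((2 : ℝ) / 3)) ^ (-(5 : ℝ) / 4)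
            * Hfun Λ (y * x ^ (-(1 : ℝ) / 3))) ∧
    ((¬ ∀ t : ℝ, Hfun Λ t = 0) → ∀ ε : ℝ, 0 < ε →
      ∫⁻ p in (Ioo (0 : ℝ) ε ×ˢ Ioo (-ε) ε),
        ENNReal.ofReal ((deriv (fun s : ℝ => vHalf Λ s p.2) p.1) ^ 2) = ⊤) :=
  stmt9_general Λ (hΛ.differentiable one_ne_zero)
end

section
/- Let x₀ < x₁ be real numbers and Ω := (x₀,x₁) × (−1,1). Let u be twice continuously differentiable on an open neighborhood of the closure of Ω, let f be continuous on the closure of Ω, and suppose y·∂ₓu − ∂²_{yy}u = f at every point of Ω and u(x,1) = u(x,−1) = 0 for every x ∈ [x₀,x₁]. Then the following energy identity holds: ∫_Ω (∂_yu)² dx dy + (1/2)·∫₋₁¹ y·u(x₁,y)² dy − (1/2)·∫₋₁¹ y·u(x₀,y)² dy = ∫_Ω f·u dx dy. -/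
open Set MeasureTheory

/-!
Multiply `c(y) ∂ₓu - ∂_yy u = f` by `u`. Since `c` does not depend on `x`, the first term is
`∂ₓ(c u² / 2)`, whose integral over the rectangle is the difference of its values on the two
vertical edges. As `∂_y(u ∂_y u) = (∂_y u)² + u ∂_yy u` and `u` vanishes on the horizontal edges,
the second term contributes `∫ (∂_y u)²`.
-/

section FundamentalTheoremOnProducts

variable {α E : Type*} [MeasurableSpace α] {μ : Measure α} [SFinite μ] {s : Set α}
  [NormedAddCommGroup E] [NormedSpace ℝ E] [CompleteSpace E] {a b : ℝ}

theorem setIntegral_prod_Ioo_of_hasDerivAt {F F' : α → ℝ → E} (hs : MeasurableSet s) (hab : a ≤ b)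
    (hF : ∀ x ∈ s, ContinuousOn (F x) (Icc a b))
    (hF' : ∀ x ∈ s, ∀ y ∈ Ioo a b, HasDerivAt (F x) (F' x y) y)
    (hint : IntegrableOn (fun p : α × ℝ => F' p.1 p.2) (s ×ˢ Ioo a b) (μ.prod volume)) :
    ∫ p in s ×ˢ Ioo a b, F' p.1 p.2 ∂μ.prod volume = ∫ x in s, (F x b - F x a) ∂μ := by
  have hslice : ∀ᵐ x ∂μ.restrict s, IntegrableOn (F' x) (Ioo a b) := by
    rw [IntegrableOn, ← Measure.prod_restrict] at hint
    exact hint.prod_right_ae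
  rw [setIntegral_prod _ hint]
  refine integral_congr_ae ?_
  filter_upwards [hslice, ae_restrict_mem hs] with x hx hxs
  rw [← integral_Ioc_eq_integral_Ioo, ← intervalIntegral.integral_of_le hab]
  exact intervalIntegral.integral_eq_sub_of_hasDerivAt_of_le hab (hF x hxs) (hF' x hxs)
    ((intervalIntegrable_iff_integrableOn_Ioo_of_le hab).2 hx)

theorem setIntegral_Ioo_prod_of_hasDerivAt {F F' : ℝ → α → E} (hs : MeasurableSet s) (hab : a ≤ b)
    (hF : ∀ y ∈ s, ContinuousOn (fun x => F x y) (Icc a b))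
    (hF' : ∀ x ∈ Ioo a b, ∀ y ∈ s, HasDerivAt (fun t => F t y) (F' x y) x)
    (hint : IntegrableOn (fun p : ℝ × α => F' p.1 p.2) (Ioo a b ×ˢ s) (volume.prod μ)) :
    ∫ p in Ioo a b ×ˢ s, F' p.1 p.2 ∂volume.prod μ = ∫ y in s, (F b y - F a y) ∂μ := by
  rw [← setIntegral_prod_swap]
  exact setIntegral_prod_Ioo_of_hasDerivAt (F := fun y x => F x y) (F' := fun y x => F' x y)
    hs hab hF (fun y hy x hx => hF' x hx y hy) hint.swap

end FundamentalTheoremOnProducts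

section PartialDerivatives

variable {𝕜 E : Type*} [NontriviallyNormedField 𝕜] [NormedAddCommGroup E] [NormedSpace 𝕜 E]
  {u : 𝕜 → 𝕜 → E} {U : Set (𝕜 × 𝕜)} {m n : WithTop ℕ∞}

theorem hasDerivAt_fst_of_differentiableAt {p : 𝕜 × 𝕜}
    (h : DifferentiableAt 𝕜 (fun q : 𝕜 × 𝕜 => u q.1 q.2) p) :
    HasDerivAt (fun x => u x p.2) (fderiv 𝕜 (fun q : 𝕜 × 𝕜 => u q.1 q.2) p (1, 0)) p.1 := by
  have hslice : HasDerivAt (fun x : 𝕜 => (x, p.2)) ((1 : 𝕜), (0 : 𝕜)) p.1 :=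
    (hasDerivAt_id p.1).prodMk (hasDerivAt_const p.1 p.2)
  exact HasFDerivAt.comp_hasDerivAt (f := fun x : 𝕜 => (x, p.2)) p.1 h.hasFDerivAt hslice

theorem hasDerivAt_snd_of_differentiableAt {p : 𝕜 × 𝕜}
    (h : DifferentiableAt 𝕜 (fun q : 𝕜 × 𝕜 => u q.1 q.2) p) :
    HasDerivAt (u p.1) (fderiv 𝕜 (fun q : 𝕜 × 𝕜 => u q.1 q.2) p (0, 1)) p.2 := by
  have hslice : HasDerivAt (fun y : 𝕜 => (p.1, y)) ((0 : 𝕜), (1 : 𝕜)) p.2 :=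
    (hasDerivAt_const p.2 p.1).prodMk (hasDerivAt_id p.2)
  exact HasFDerivAt.comp_hasDerivAt (f := fun y : 𝕜 => (p.1, y)) p.2 h.hasFDerivAt hslice

theorem contDiffOn_deriv_fst (hU : IsOpen U)
    (hu : ContDiffOn 𝕜 n (fun p : 𝕜 × 𝕜 => u p.1 p.2) U) (hmn : m + 1 ≤ n) :
    ContDiffOn 𝕜 m (fun p : 𝕜 × 𝕜 => deriv (fun x => u x p.2) p.1) U := by
  have hdiff := (hu.of_le (le_add_self.trans hmn)).differentiableOn one_ne_zero
  exact ((hu.fderiv_of_isOpen hU hmn).clm_apply contDiffOn_const).congr fun p hp =>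
    (hasDerivAt_fst_of_differentiableAt (hdiff.differentiableAt (hU.mem_nhds hp))).deriv

theorem contDiffOn_deriv_snd (hU : IsOpen U)
    (hu : ContDiffOn 𝕜 n (fun p : 𝕜 × 𝕜 => u p.1 p.2) U) (hmn : m + 1 ≤ n) :
    ContDiffOn 𝕜 m (fun p : 𝕜 × 𝕜 => deriv (u p.1) p.2) U := by
  have hdiff := (hu.of_le (le_add_self.trans hmn)).differentiableOn one_ne_zero
  exact ((hu.fderiv_of_isOpen hU hmn).clm_apply contDiffOn_const).congr fun p hp =>
    (hasDerivAt_snd_of_differentiableAt (hdiff.differentiableAt (hU.mem_nhds hp))).deriv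

end PartialDerivatives

/-- The parabolic regularity class `C^{1,2}` on `s`: one continuous derivative in the first variable
and two in the second. The derivatives are two-sided also at the points of `s` on its boundary, so
they involve the values of `u` near `s`. -/
structure ContDiffOneTwoOn (u : ℝ → ℝ → ℝ) (s : Set (ℝ × ℝ)) : Prop where
  continuousOn : ContinuousOn (fun p : ℝ × ℝ => u p.1 p.2) s
  differentiableAt_fst : ∀ p ∈ s, DifferentiableAt ℝ (fun x => u x p.2) p.1
  continuousOn_deriv_fst : ContinuousOn (fun p : ℝ × ℝ => deriv (fun x => u x p.2) p.1) s
  differentiableAt_snd : ∀ p ∈ s, DifferentiableAt ℝ (u p.1) p.2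
  continuousOn_deriv_snd : ContinuousOn (fun p : ℝ × ℝ => deriv (u p.1) p.2) s
  differentiableAt_deriv_snd : ∀ p ∈ s, DifferentiableAt ℝ (deriv (u p.1)) p.2
  continuousOn_deriv_deriv_snd : ContinuousOn (fun p : ℝ × ℝ => deriv (deriv (u p.1)) p.2) s

namespace ContDiffOneTwoOn

variable {u : ℝ → ℝ → ℝ} {s t : Set (ℝ × ℝ)}

theorem mono (hu : ContDiffOneTwoOn u t) (hst : s ⊆ t) : ContDiffOneTwoOn u s where
  continuousOn := hu.continuousOn.mono hst
  differentiableAt_fst p hp := hu.differentiableAt_fst p (hst hp)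
  continuousOn_deriv_fst := hu.continuousOn_deriv_fst.mono hst
  differentiableAt_snd p hp := hu.differentiableAt_snd p (hst hp)
  continuousOn_deriv_snd := hu.continuousOn_deriv_snd.mono hst
  differentiableAt_deriv_snd p hp := hu.differentiableAt_deriv_snd p (hst hp)
  continuousOn_deriv_deriv_snd := hu.continuousOn_deriv_deriv_snd.mono hst

theorem of_contDiffOn (hs : IsOpen s) (hu : ContDiffOn ℝ 2 (fun p : ℝ × ℝ => u p.1 p.2) s) :
    ContDiffOneTwoOn u s := by
  have huy : ContDiffOn ℝ 1 (fun p : ℝ × ℝ => deriv (u p.1) p.2) s :=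
    contDiffOn_deriv_snd hs hu one_add_one_eq_two.le
  have hu_diff : ∀ p ∈ s, DifferentiableAt ℝ (fun p : ℝ × ℝ => u p.1 p.2) p := fun p hp =>
    (hu.differentiableOn two_ne_zero).differentiableAt (hs.mem_nhds hp)
  have huy_diff : ∀ p ∈ s, DifferentiableAt ℝ (fun p : ℝ × ℝ => deriv (u p.1) p.2) p := fun p hp =>
    (huy.differentiableOn one_ne_zero).differentiableAt (hs.mem_nhds hp)
  exact
    { continuousOn := hu.continuousOn
      differentiableAt_fst := fun p hp =>
        (hasDerivAt_fst_of_differentiableAt (hu_diff p hp)).differentiableAt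
      continuousOn_deriv_fst := (contDiffOn_deriv_fst hs hu one_add_one_eq_two.le).continuousOn
      differentiableAt_snd := fun p hp =>
        (hasDerivAt_snd_of_differentiableAt (hu_diff p hp)).differentiableAt
      continuousOn_deriv_snd := huy.continuousOn
      differentiableAt_deriv_snd := fun p hp =>
        (hasDerivAt_snd_of_differentiableAt (u := fun x => deriv (u x))
          (huy_diff p hp)).differentiableAt
      continuousOn_deriv_deriv_snd :=
        (contDiffOn_deriv_snd (u := fun x => deriv (u x)) (m := 0) hs huy
          (zero_add 1).le).continuousOn }

end ContDiffOneTwoOn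

section Rectangle

variable {x₀ x₁ a b : ℝ} {u : ℝ → ℝ → ℝ}

theorem integrableOn_Ioo_prod_Ioo_of_continuousOn_Icc {E : Type*} [NormedAddCommGroup E]
    {g : ℝ × ℝ → E} (hg : ContinuousOn g (Icc x₀ x₁ ×ˢ Icc a b)) :
    IntegrableOn g (Ioo x₀ x₁ ×ˢ Ioo a b) :=
  (hg.integrableOn_compact (isCompact_Icc.prod isCompact_Icc)).mono_set
    (prod_mono Ioo_subset_Icc_self Ioo_subset_Icc_self)

namespace ContDiffOneTwoOn

theorem integrableOn_weight_mul_deriv_fst_mul_self {c : ℝ → ℝ} (hc : ContinuousOn c (Icc a b))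
    (hu : ContDiffOneTwoOn u (Icc x₀ x₁ ×ˢ Icc a b)) :
    IntegrableOn (fun p : ℝ × ℝ => c p.2 * deriv (fun x => u x p.2) p.1 * u p.1 p.2)
      (Ioo x₀ x₁ ×ˢ Ioo a b) :=
  integrableOn_Ioo_prod_Ioo_of_continuousOn_Icc
    (((hc.comp continuousOn_snd fun _ hp => hp.2).mul hu.continuousOn_deriv_fst).mul
      hu.continuousOn)

theorem integrableOn_deriv_deriv_snd_mul_self (hu : ContDiffOneTwoOn u (Icc x₀ x₁ ×ˢ Icc a b)) :
    IntegrableOn (fun p : ℝ × ℝ => deriv (deriv (u p.1)) p.2 * u p.1 p.2)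
      (Ioo x₀ x₁ ×ˢ Ioo a b) :=
  integrableOn_Ioo_prod_Ioo_of_continuousOn_Icc
    (hu.continuousOn_deriv_deriv_snd.mul hu.continuousOn)

theorem integrableOn_sq_deriv_snd (hu : ContDiffOneTwoOn u (Icc x₀ x₁ ×ˢ Icc a b)) :
    IntegrableOn (fun p : ℝ × ℝ => deriv (u p.1) p.2 ^ 2) (Ioo x₀ x₁ ×ˢ Ioo a b) :=
  integrableOn_Ioo_prod_Ioo_of_continuousOn_Icc (hu.continuousOn_deriv_snd.pow 2)

theorem setIntegral_weight_mul_deriv_fst_mul_self {c : ℝ → ℝ} (h₀₁ : x₀ ≤ x₁)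
    (hc : ContinuousOn c (Icc a b)) (hu : ContDiffOneTwoOn u (Icc x₀ x₁ ×ˢ Icc a b)) :
    ∫ p in Ioo x₀ x₁ ×ˢ Ioo a b, c p.2 * deriv (fun x => u x p.2) p.1 * u p.1 p.2 =
      (1 / 2) * (∫ y in Ioo a b, c y * u x₁ y ^ 2) -
        (1 / 2) * (∫ y in Ioo a b, c y * u x₀ y ^ 2) := by
  have hderiv : ∀ x ∈ Icc x₀ x₁, ∀ y ∈ Icc a b, HasDerivAt (fun t => 1 / 2 * (c y * u t y ^ 2))
      (c y * deriv (fun t => u t y) x * u x y) x := by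
    intro x hx y hy
    have hux := (hu.differentiableAt_fst (x, y) ⟨hx, hy⟩).hasDerivAt
    exact (((hux.fun_pow 2).const_mul (c y)).const_mul (1 / 2)).congr_deriv (by ring)
  have hedge : ∀ x ∈ Icc x₀ x₁, IntegrableOn (fun y => 1 / 2 * (c y * u x y ^ 2)) (Ioo a b) :=
    fun x hx =>
      ((continuousOn_const.mul (hc.mul ((hu.continuousOn.uncurry_left x hx).pow 2))
        ).integrableOn_Icc).mono_set Ioo_subset_Icc_self
  calc
    _ = ∫ y in Ioo a b, (1 / 2 * (c y * u x₁ y ^ 2) - 1 / 2 * (c y * u x₀ y ^ 2)) :=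
      setIntegral_Ioo_prod_of_hasDerivAt measurableSet_Ioo h₀₁
        (fun y hy x hx => (hderiv x hx y (Ioo_subset_Icc_self hy)).continuousAt.continuousWithinAt)
        (fun x hx y hy => hderiv x (Ioo_subset_Icc_self hx) y (Ioo_subset_Icc_self hy))
        (hu.integrableOn_weight_mul_deriv_fst_mul_self hc)
    _ = _ := by
      rw [integral_sub (hedge x₁ (right_mem_Icc.2 h₀₁)) (hedge x₀ (left_mem_Icc.2 h₀₁)),
        integral_const_mul, integral_const_mul]

theorem setIntegral_deriv_deriv_snd_mul_self (hab : a ≤ b)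
    (hu : ContDiffOneTwoOn u (Icc x₀ x₁ ×ˢ Icc a b))
    (hbc : ∀ x ∈ Icc x₀ x₁, u x b = 0 ∧ u x a = 0) :
    ∫ p in Ioo x₀ x₁ ×ˢ Ioo a b, deriv (deriv (u p.1)) p.2 * u p.1 p.2 =
      -∫ p in Ioo x₀ x₁ ×ˢ Ioo a b, deriv (u p.1) p.2 ^ 2 := by
  have hint_uyy := hu.integrableOn_deriv_deriv_snd_mul_self
  have hint_uy := hu.integrableOn_sq_deriv_snd
  have hderiv : ∀ x ∈ Icc x₀ x₁, ∀ y ∈ Icc a b, HasDerivAt (fun y => deriv (u x) y * u x y)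
      (deriv (deriv (u x)) y * u x y + deriv (u x) y ^ 2) y := by
    intro x hx y hy
    have huy := (hu.differentiableAt_snd (x, y) ⟨hx, hy⟩).hasDerivAt
    have huyy := (hu.differentiableAt_deriv_snd (x, y) ⟨hx, hy⟩).hasDerivAt
    exact (huyy.fun_mul huy).congr_deriv (by ring)
  rw [eq_neg_iff_add_eq_zero, ← integral_add hint_uyy hint_uy]
  calc
    _ = ∫ x in Ioo x₀ x₁, (deriv (u x) b * u x b - deriv (u x) a * u x a) :=
      setIntegral_prod_Ioo_of_hasDerivAt measurableSet_Ioo hab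
        (fun x hx y hy => (hderiv x (Ioo_subset_Icc_self hx) y hy).continuousAt.continuousWithinAt)
        (fun x hx y hy => hderiv x (Ioo_subset_Icc_self hx) y (Ioo_subset_Icc_self hy))
        (hint_uyy.add hint_uy)
    _ = 0 := setIntegral_eq_zero_of_forall_eq_zero fun x hx => by
      obtain ⟨hb, ha⟩ := hbc x (Ioo_subset_Icc_self hx)
      rw [hb, ha, mul_zero, mul_zero, sub_zero]

end ContDiffOneTwoOn

theorem stmt10_general {c : ℝ → ℝ} {f : ℝ → ℝ → ℝ} (h₀₁ : x₀ ≤ x₁) (hab : a ≤ b)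
    (hc : ContinuousOn c (Icc a b)) (hu : ContDiffOneTwoOn u (Icc x₀ x₁ ×ˢ Icc a b))
    (heq : ∀ p ∈ Ioo x₀ x₁ ×ˢ Ioo a b,
      c p.2 * deriv (fun x => u x p.2) p.1 - deriv (deriv (u p.1)) p.2 = f p.1 p.2)
    (hbc : ∀ x ∈ Icc x₀ x₁, u x b = 0 ∧ u x a = 0) :
    (∫ p in Ioo x₀ x₁ ×ˢ Ioo a b, deriv (u p.1) p.2 ^ 2)
      + (1 / 2) * (∫ y in Ioo a b, c y * u x₁ y ^ 2)
      - (1 / 2) * (∫ y in Ioo a b, c y * u x₀ y ^ 2)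
      = ∫ p in Ioo x₀ x₁ ×ˢ Ioo a b, f p.1 p.2 * u p.1 p.2 := by
  have hfu : ∫ p in Ioo x₀ x₁ ×ˢ Ioo a b, f p.1 p.2 * u p.1 p.2 =
      (∫ p in Ioo x₀ x₁ ×ˢ Ioo a b, c p.2 * deriv (fun x => u x p.2) p.1 * u p.1 p.2) -
        ∫ p in Ioo x₀ x₁ ×ˢ Ioo a b, deriv (deriv (u p.1)) p.2 * u p.1 p.2 := by
    rw [← integral_sub (hu.integrableOn_weight_mul_deriv_fst_mul_self hc)
      hu.integrableOn_deriv_deriv_snd_mul_self]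
    refine setIntegral_congr_fun (measurableSet_Ioo.prod measurableSet_Ioo) fun p hp => ?_
    simp only [← heq p hp, sub_mul]
  rw [hfu, hu.setIntegral_weight_mul_deriv_fst_mul_self h₀₁ hc,
    hu.setIntegral_deriv_deriv_snd_mul_self hab hbc]
  ring

end Rectangle

/-- Energy identity for classical solutions of `y ∂ₓ u - ∂_yy u = f` on
`Ω = (x₀,x₁) × (-1,1)` with `u = 0` on `{y = ±1}`:
`∫_Ω (∂_y u)² + (1/2) ∫ y u(x₁,y)² dy - (1/2) ∫ y u(x₀,y)² dy = ∫_Ω f u`. -/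
theorem stmt10 (x₀ x₁ : ℝ) (hx : x₀ < x₁) (u f : ℝ → ℝ → ℝ)
    (U : Set (ℝ × ℝ)) (hU : IsOpen U)
    (hΩU : closure (Ioo x₀ x₁ ×ˢ Ioo (-1 : ℝ) 1) ⊆ U)
    (hu : ContDiffOn ℝ 2 (fun p : ℝ × ℝ => u p.1 p.2) U)
    (hf : ContinuousOn (fun p : ℝ × ℝ => f p.1 p.2) (closure (Ioo x₀ x₁ ×ˢ Ioo (-1 : ℝ) 1)))
    (heq : ∀ p ∈ Ioo x₀ x₁ ×ˢ Ioo (-1 : ℝ) 1,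
      p.2 * deriv (fun s : ℝ => u s p.2) p.1 - deriv (deriv (u p.1)) p.2 = f p.1 p.2)
    (hbc : ∀ x ∈ Icc x₀ x₁, u x 1 = 0 ∧ u x (-1) = 0) :
    (∫ p in Ioo x₀ x₁ ×ˢ Ioo (-1 : ℝ) 1, (deriv (u p.1) p.2) ^ 2)
      + (1 / 2) * (∫ y in Ioo (-1 : ℝ) 1, y * (u x₁ y) ^ 2)
      - (1 / 2) * (∫ y in Ioo (-1 : ℝ) 1, y * (u x₀ y) ^ 2)
      = ∫ p in Ioo x₀ x₁ ×ˢ Ioo (-1 : ℝ) 1, f p.1 p.2 * u p.1 p.2 := by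
  rw [closure_prod_eq, closure_Ioo hx.ne, closure_Ioo (by norm_num)] at hΩU
  exact stmt10_general hx.le (by norm_num) continuousOn_id
    ((ContDiffOneTwoOn.of_contDiffOn hU hu).mono hΩU) heq hbc
end

section
/- Let x₀ < x₁ be real numbers and Ω := (x₀,x₁) × (−1,1). Let u be twice continuously differentiable on an open neighborhood of the closure of Ω and suppose: y·∂ₓu − ∂²_{yy}u = 0 at every point of Ω; u(x₀,y) = 0 for every y ∈ [0,1]; u(x₁,y) = 0 for every y ∈ [−1,0]; and u(x,1) = u(x,−1) = 0 for every x ∈ [x₀,x₁]. Then u vanishes identically on the closure of Ω. -/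
open Set
open Filter Topology Function

/-!
The engine is the weak maximum principle for `a ∂ₓ u - ∂_yy u ≤ 0`. Adding
`ε (y - c) (y - d)`, which is nonpositive on `[c, d]`, makes the inequality strict. At a maximum
of the perturbed function with `c < y < d` the second `y`-derivative is `≤ 0`, and the transport
term `a ∂ₓ u` is `≥ 0` unless the maximum lies on the inflow boundary; hence the maximum is
attained on the inflow boundary or on the walls `y = c`, `y = d`.

The equation is not available up to the outflow boundary, so this is first applied on
`[x₀', x₁'] × [c, d]` with `x₀ < x₀'` and `x₁' < x₁`. By uniform continuity the values on the
shifted inflow boundaries exceed the original ones by as little as we like.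
-/

/-- The forward-backward parabolic operator `a ∂ₓ u - ∂_yy u`, forward where `0 < a` and backward
where `a < 0`; the linear shear flow is `a x y = y`. It is written with `deriv`, so its value is
meaningful only where `HasClassicalPartialsAt` holds. -/
noncomputable def forwardBackwardOp (a u : ℝ → ℝ → ℝ) (x y : ℝ) : ℝ :=
  a x y * deriv (fun s => u s y) x - deriv (deriv (u x)) y

/-- The pointwise regularity of a classical solution: `∂ₓ u` and `∂_yy u` exist at `(x, y)`.
Neither is required to be continuous. -/
structure HasClassicalPartialsAt (u : ℝ → ℝ → ℝ) (x y : ℝ) : Prop where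
  differentiableAt_fst : DifferentiableAt ℝ (fun s => u s y) x
  eventually_differentiableAt_snd : ∀ᶠ t in 𝓝 y, DifferentiableAt ℝ (u x) t
  differentiableAt_deriv_snd : DifferentiableAt ℝ (deriv (u x)) y

theorem deriv_deriv_nonpos_of_isLocalMax {f : ℝ → ℝ} {y : ℝ} (hmax : IsLocalMax f y)
    (hf : ContinuousAt f y) : deriv (deriv f) y ≤ 0 := by
  by_contra! hpos
  have hmin : IsLocalMin f y := isLocalMin_of_deriv_deriv_pos hpos hmax.deriv_eq_zero hf
  have hconst : f =ᶠ[𝓝 y] fun _ => f y := by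
    filter_upwards [hmin, hmax] with t hge hle using le_antisymm hle hge
  have hzero : deriv (deriv f) y = 0 := by simp [hconst.deriv.deriv_eq]
  exact hpos.ne' hzero

theorem sub_mul_nonpos_of_isLocalMaxOn {f : ℝ → ℝ} {f' x z : ℝ} {s : Set ℝ}
    (hmax : IsLocalMaxOn f s x) (hf : HasDerivWithinAt f f' s x) (hs : segment ℝ x z ⊆ s) :
    (z - x) * f' ≤ 0 := by
  simpa using hmax.hasFDerivWithinAt_nonpos hf.hasFDerivWithinAt
    (sub_mem_posTangentConeAt_of_segment_subset hs)

theorem mul_nonneg_of_isMaxOn_Icc {f : ℝ → ℝ} {f' a x x₀ x₁ : ℝ} (hx : x ∈ Icc x₀ x₁)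
    (hmax : IsMaxOn f (Icc x₀ x₁) x) (hf : HasDerivWithinAt f f' (Icc x₀ x₁) x)
    (hleft : 0 < a → x ≠ x₀) (hright : a < 0 → x ≠ x₁) : 0 ≤ a * f' := by
  have hcone (z : ℝ) (hz : z ∈ Icc x₀ x₁) : (z - x) * f' ≤ 0 :=
    sub_mul_nonpos_of_isLocalMaxOn hmax.localize hf ((convex_Icc x₀ x₁).segment_subset hx hz)
  have hx₀₁ : x₀ ≤ x₁ := hx.1.trans hx.2
  rcases lt_trichotomy a 0 with ha | rfl | ha
  · have hlt : 0 < x₁ - x := sub_pos.2 (hx.2.lt_of_ne (hright ha))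
    exact mul_nonneg_of_nonpos_of_nonpos ha.le
      (nonpos_of_mul_nonpos_right (hcone x₁ (right_mem_Icc.2 hx₀₁)) hlt)
  · simp
  · have hlt : x₀ - x < 0 := sub_neg.2 (hx.1.lt_of_ne' (hleft ha))
    exact mul_nonneg ha.le
      (nonneg_of_mul_nonpos_right (hcone x₀ (left_mem_Icc.2 hx₀₁)) hlt)

theorem deriv_const_mul_sub_mul_sub (ε c d : ℝ) :
    deriv (fun t => ε * ((t - c) * (t - d))) = fun t => ε * (2 * t - c - d) := by
  funext t
  have h := (((hasDerivAt_id t).sub_const c).mul ((hasDerivAt_id t).sub_const d)).const_mul ε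
  refine h.deriv.trans ?_
  simp only [id]
  ring

theorem eventually_forall_le_add_of_isCompact {α β : Type*} [TopologicalSpace α]
    [TopologicalSpace β] {f : α → β → ℝ} {s : Set α} {k : Set β} {q : α} {η : ℝ}
    (hk : IsCompact k) (hf : ContinuousOn (uncurry f) (s ×ˢ k)) (hq : q ∈ s) (hη : 0 < η) :
    ∀ᶠ p in 𝓝[s] q, ∀ y ∈ k, f p y ≤ f q y + η := by
  obtain ⟨v, hv, hclose⟩ := hk.mem_uniformity_of_prod hf hq (Metric.dist_mem_uniformity hη)
  filter_upwards [hv] with p hp y hy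
  have hdist : |f p y - f q y| < η := hclose p hp y hy
  linarith [le_of_abs_le hdist.le]

section Operator

variable {a u : ℝ → ℝ → ℝ} {w : ℝ → ℝ} {x y : ℝ}

namespace HasClassicalPartialsAt

theorem of_contDiffAt (hu : ContDiffAt ℝ 2 (uncurry u) (x, y)) :
    HasClassicalPartialsAt u x y := by
  have hfst : ContDiffAt ℝ 2 (fun s => u s y) x :=
    hu.comp (f := fun s => (s, y)) x (by fun_prop)
  have hsnd : ContDiffAt ℝ 2 (u x) y :=
    hu.comp (f := fun t => (x, t)) y (by fun_prop)
  exact ⟨hfst.differentiableAt two_ne_zero,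
    (hsnd.eventually (by simp)).mono fun _ ht => ht.differentiableAt two_ne_zero,
    (hsnd.derivWithin (m := 1) (by norm_num)).differentiableAt one_ne_zero⟩

theorem neg (hu : HasClassicalPartialsAt u x y) :
    HasClassicalPartialsAt (fun s t => -u s t) x y where
  differentiableAt_fst := hu.differentiableAt_fst.fun_neg
  eventually_differentiableAt_snd :=
    hu.eventually_differentiableAt_snd.mono fun _ ht => ht.fun_neg
  differentiableAt_deriv_snd := by
    simpa only [deriv.fun_neg'] using hu.differentiableAt_deriv_snd.fun_neg

theorem continuousAt_snd (hu : HasClassicalPartialsAt u x y) : ContinuousAt (u x) y :=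
  hu.eventually_differentiableAt_snd.self_of_nhds.continuousAt

theorem eventuallyEq_deriv_add_snd (hu : HasClassicalPartialsAt u x y)
    (hw : Differentiable ℝ w) :
    deriv (fun t => u x t + w t) =ᶠ[𝓝 y] fun t => deriv (u x) t + deriv w t :=
  hu.eventually_differentiableAt_snd.mono fun t ht => deriv_fun_add ht (hw t)

theorem add_snd (hu : HasClassicalPartialsAt u x y) (hw : Differentiable ℝ w)
    (hw' : DifferentiableAt ℝ (deriv w) y) :
    HasClassicalPartialsAt (fun s t => u s t + w t) x y where
  differentiableAt_fst := hu.differentiableAt_fst.add_const (w y)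
  eventually_differentiableAt_snd :=
    hu.eventually_differentiableAt_snd.mono fun t ht => ht.fun_add (hw t)
  differentiableAt_deriv_snd :=
    (hu.differentiableAt_deriv_snd.fun_add hw').congr_of_eventuallyEq
      (hu.eventuallyEq_deriv_add_snd hw)

end HasClassicalPartialsAt

theorem forwardBackwardOp_neg :
    forwardBackwardOp a (fun s t => -u s t) x y = -forwardBackwardOp a u x y := by
  simp only [forwardBackwardOp, deriv.fun_neg, deriv.fun_neg']
  ring

theorem forwardBackwardOp_add_snd (hu : HasClassicalPartialsAt u x y) (hw : Differentiable ℝ w)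
    (hw' : DifferentiableAt ℝ (deriv w) y) :
    forwardBackwardOp a (fun s t => u s t + w t) x y =
      forwardBackwardOp a u x y - deriv (deriv w) y := by
  simp only [forwardBackwardOp, deriv_add_const, (hu.eventuallyEq_deriv_add_snd hw).deriv_eq,
    deriv_fun_add hu.differentiableAt_deriv_snd hw']
  ring

end Operator

section MaximumPrinciple

variable {a u : ℝ → ℝ → ℝ} {x₀ x₁ c d M : ℝ}

theorem le_of_forwardBackwardOp_neg
    (hcont : ContinuousOn (uncurry u) (Icc x₀ x₁ ×ˢ Icc c d))
    (hreg : ∀ x ∈ Icc x₀ x₁, ∀ y ∈ Ioo c d, HasClassicalPartialsAt u x y)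
    (hop : ∀ x ∈ Icc x₀ x₁, ∀ y ∈ Ioo c d, forwardBackwardOp a u x y < 0)
    (hleft : ∀ y ∈ Ioo c d, 0 < a x₀ y → u x₀ y ≤ M)
    (hright : ∀ y ∈ Ioo c d, a x₁ y < 0 → u x₁ y ≤ M)
    (hwall : ∀ x ∈ Icc x₀ x₁, u x c ≤ M ∧ u x d ≤ M)
    {x y : ℝ} (hx : x ∈ Icc x₀ x₁) (hy : y ∈ Icc c d) : u x y ≤ M := by
  obtain ⟨⟨s, t⟩, ⟨hs, ht⟩, hmax⟩ :=
    (isCompact_Icc.prod isCompact_Icc).exists_isMaxOn ⟨(x, y), hx, hy⟩ hcont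
  refine (hmax (mk_mem_prod hx hy)).trans ?_
  by_contra! hM
  change M < u s t at hM
  have htc : t ≠ c := by rintro rfl; exact hM.not_ge (hwall s hs).1
  have htd : t ≠ d := by rintro rfl; exact hM.not_ge (hwall s hs).2
  have ht' : t ∈ Ioo c d := ⟨ht.1.lt_of_ne' htc, ht.2.lt_of_ne htd⟩
  have hmax_fst : IsMaxOn (fun r => u r t) (Icc x₀ x₁) s := fun r hr => hmax (mk_mem_prod hr ht)
  have hmax_snd : IsLocalMax (u s) t := by
    filter_upwards [Icc_mem_nhds ht'.1 ht'.2] with r hr using hmax (mk_mem_prod hs hr)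
  have htransport : 0 ≤ a s t * deriv (fun r => u r t) s :=
    mul_nonneg_of_isMaxOn_Icc hs hmax_fst
      (hreg s hs t ht').differentiableAt_fst.hasDerivAt.hasDerivWithinAt
      (by rintro ha rfl; exact hM.not_ge (hleft t ht' ha))
      (by rintro ha rfl; exact hM.not_ge (hright t ht' ha))
  have hdiffusion : deriv (deriv (u s)) t ≤ 0 :=
    deriv_deriv_nonpos_of_isLocalMax hmax_snd (hreg s hs t ht').continuousAt_snd
  exact (hop s hs t ht').not_ge (sub_nonneg.2 (hdiffusion.trans htransport))

theorem le_of_forwardBackwardOp_nonpos_Icc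
    (hcont : ContinuousOn (uncurry u) (Icc x₀ x₁ ×ˢ Icc c d))
    (hreg : ∀ x ∈ Icc x₀ x₁, ∀ y ∈ Ioo c d, HasClassicalPartialsAt u x y)
    (hop : ∀ x ∈ Icc x₀ x₁, ∀ y ∈ Ioo c d, forwardBackwardOp a u x y ≤ 0)
    (hleft : ∀ y ∈ Ioo c d, 0 < a x₀ y → u x₀ y ≤ M)
    (hright : ∀ y ∈ Ioo c d, a x₁ y < 0 → u x₁ y ≤ M)
    (hwall : ∀ x ∈ Icc x₀ x₁, u x c ≤ M ∧ u x d ≤ M)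
    {x y : ℝ} (hx : x ∈ Icc x₀ x₁) (hy : y ∈ Icc c d) : u x y ≤ M := by
  have hperturbed (ε : ℝ) (hε : 0 < ε) : u x y + ε * ((y - c) * (y - d)) ≤ M := by
    set w : ℝ → ℝ := fun t => ε * ((t - c) * (t - d)) with hw_def
    have hw : Differentiable ℝ w := by fun_prop
    have hw_deriv : deriv w = fun t => ε * (2 * t - c - d) := deriv_const_mul_sub_mul_sub ε c d
    have hw' : Differentiable ℝ (deriv w) := by rw [hw_deriv]; fun_prop
    have hw'' (t : ℝ) : deriv (deriv w) t = 2 * ε := by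
      simp [hw_deriv, mul_comm]
    have hw_nonpos : ∀ t ∈ Ioo c d, w t ≤ 0 := fun t ht =>
      mul_nonpos_of_nonneg_of_nonpos hε.le
        (mul_nonpos_of_nonneg_of_nonpos (sub_nonneg.2 ht.1.le) (sub_nonpos.2 ht.2.le))
    refine le_of_forwardBackwardOp_neg (u := fun s t => u s t + w t) (a := a)
      (hcont.add (hw.continuous.comp continuous_snd).continuousOn)
      (fun s hs t ht => (hreg s hs t ht).add_snd hw (hw' t)) (fun s hs t ht => ?_)
      (fun t ht ha => add_le_of_le_of_nonpos (hleft t ht ha) (hw_nonpos t ht))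
      (fun t ht ha => add_le_of_le_of_nonpos (hright t ht ha) (hw_nonpos t ht))
      (fun s hs => by simpa [hw_def] using hwall s hs) hx hy
    rw [forwardBackwardOp_add_snd (hreg s hs t ht) hw (hw' t), hw'']
    linarith [hop s hs t ht]
  have hlim : Tendsto (fun ε => u x y + ε * ((y - c) * (y - d))) (𝓝[>] 0) (𝓝 (u x y)) :=
    (Continuous.tendsto' (by fun_prop) 0 (u x y) (by simp)).mono_left nhdsWithin_le_nhds
  exact le_of_tendsto hlim (eventually_nhdsWithin_of_forall hperturbed)

theorem le_of_forwardBackwardOp_nonpos_Ioo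
    (hcont : ContinuousOn (uncurry u) (Icc x₀ x₁ ×ˢ Icc c d))
    (hreg : ∀ p ∈ Ioo x₀ x₁ ×ˢ Ioo c d, HasClassicalPartialsAt u p.1 p.2)
    (hop : ∀ p ∈ Ioo x₀ x₁ ×ˢ Ioo c d, forwardBackwardOp a u p.1 p.2 ≤ 0)
    (hleft : ∀ p ∈ Ioo x₀ x₁ ×ˢ Ioo c d, 0 < a p.1 p.2 → u x₀ p.2 ≤ M)
    (hright : ∀ p ∈ Ioo x₀ x₁ ×ˢ Ioo c d, a p.1 p.2 < 0 → u x₁ p.2 ≤ M)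
    (hwall : ∀ x ∈ Ioo x₀ x₁, u x c ≤ M ∧ u x d ≤ M)
    {p : ℝ × ℝ} (hp : p ∈ Ioo x₀ x₁ ×ˢ Ioo c d) : u p.1 p.2 ≤ M := by
  obtain ⟨x, y⟩ := p
  obtain ⟨⟨hx₀, hx₁⟩, hy⟩ : x ∈ Ioo x₀ x₁ ∧ y ∈ Ioo c d := hp
  have hx₀₁ : x₀ < x₁ := hx₀.trans hx₁
  refine le_of_forall_pos_le_add fun η hη => ?_
  obtain ⟨x₀', hnear₀, hx₀', hx₀x⟩ :
      ∃ s, (∀ t ∈ Icc c d, u s t ≤ u x₀ t + η) ∧ s ∈ Ioo x₀ x := by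
    have h := eventually_forall_le_add_of_isCompact isCompact_Icc hcont
      (left_mem_Icc.2 hx₀₁.le) hη
    rw [nhdsWithin_Icc_eq_nhdsGE hx₀₁] at h
    exact ((h.filter_mono (nhdsWithin_mono x₀ Ioi_subset_Ici_self)).and
      (Ioo_mem_nhdsGT hx₀)).exists
  obtain ⟨x₁', hnear₁, hxx₁, hx₁'⟩ :
      ∃ s, (∀ t ∈ Icc c d, u s t ≤ u x₁ t + η) ∧ s ∈ Ioo x x₁ := by
    have h := eventually_forall_le_add_of_isCompact isCompact_Icc hcont
      (right_mem_Icc.2 hx₀₁.le) hη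
    rw [nhdsWithin_Icc_eq_nhdsLE hx₀₁] at h
    exact ((h.filter_mono (nhdsWithin_mono x₁ Iio_subset_Iic_self)).and
      (Ioo_mem_nhdsLT hx₁)).exists
  have hsub : Icc x₀' x₁' ⊆ Ioo x₀ x₁ := Icc_subset_Ioo hx₀' hx₁'
  have hx₀'_mem : x₀' ∈ Ioo x₀ x₁ := ⟨hx₀', hx₀x.trans hx₁⟩
  have hx₁'_mem : x₁' ∈ Ioo x₀ x₁ := ⟨hx₀.trans hxx₁, hx₁'⟩
  exact le_of_forwardBackwardOp_nonpos_Icc (a := a)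
    (hcont.mono (prod_mono_left (hsub.trans Ioo_subset_Icc_self)))
    (fun s hs t ht => hreg (s, t) ⟨hsub hs, ht⟩) (fun s hs t ht => hop (s, t) ⟨hsub hs, ht⟩)
    (fun t ht ha => (hnear₀ t (Ioo_subset_Icc_self ht)).trans
      (add_le_add_left (hleft (x₀', t) ⟨hx₀'_mem, ht⟩ ha) η))
    (fun t ht ha => (hnear₁ t (Ioo_subset_Icc_self ht)).trans
      (add_le_add_left (hright (x₁', t) ⟨hx₁'_mem, ht⟩ ha) η))
    (fun s hs => (hwall s (hsub hs)).imp (le_add_of_le_of_nonneg · hη.le)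
      (le_add_of_le_of_nonneg · hη.le))
    ⟨hx₀x.le, hxx₁.le⟩ (Ioo_subset_Icc_self hy)

end MaximumPrinciple

theorem stmt11_general {a u : ℝ → ℝ → ℝ} {x₀ x₁ c d : ℝ}
    (hcont : ContinuousOn (uncurry u) (Icc x₀ x₁ ×ˢ Icc c d))
    (hreg : ∀ p ∈ Ioo x₀ x₁ ×ˢ Ioo c d, HasClassicalPartialsAt u p.1 p.2)
    (heq : ∀ p ∈ Ioo x₀ x₁ ×ˢ Ioo c d, forwardBackwardOp a u p.1 p.2 = 0)
    (hleft : ∀ p ∈ Ioo x₀ x₁ ×ˢ Ioo c d, 0 < a p.1 p.2 → u x₀ p.2 = 0)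
    (hright : ∀ p ∈ Ioo x₀ x₁ ×ˢ Ioo c d, a p.1 p.2 < 0 → u x₁ p.2 = 0)
    (hwall : ∀ x ∈ Ioo x₀ x₁, u x c = 0 ∧ u x d = 0) :
    ∀ p ∈ closure (Ioo x₀ x₁ ×ˢ Ioo c d), u p.1 p.2 = 0 := by
  have hclosure : closure (Ioo x₀ x₁ ×ˢ Ioo c d) ⊆ Icc x₀ x₁ ×ˢ Icc c d :=
    closure_minimal (prod_mono Ioo_subset_Icc_self Ioo_subset_Icc_self)
      (isClosed_Icc.prod isClosed_Icc)
  have hinterior : EqOn (uncurry u) 0 (Ioo x₀ x₁ ×ˢ Ioo c d) := by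
    intro p hp
    apply le_antisymm
    · exact le_of_forwardBackwardOp_nonpos_Ioo hcont hreg (fun q hq => (heq q hq).le)
        (fun q hq ha => (hleft q hq ha).le) (fun q hq ha => (hright q hq ha).le)
        (fun x hx => (hwall x hx).imp Eq.le Eq.le) hp
    · refine neg_nonpos.1 (le_of_forwardBackwardOp_nonpos_Ioo (a := a) (u := fun s t => -u s t)
        hcont.neg (fun q hq => (hreg q hq).neg) (fun q hq => ?_)
        (fun q hq ha => ?_) (fun q hq ha => ?_) (fun x hx => ?_) hp)
      · rw [forwardBackwardOp_neg, heq q hq, neg_zero]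
      · rw [hleft q hq ha, neg_zero]
      · rw [hright q hq ha, neg_zero]
      · simp [hwall x hx]
  exact hinterior.of_subset_closure (hcont.mono hclosure) continuousOn_const subset_closure le_rfl

/-- Uniqueness for the linear shear-flow problem: a classical solution of
`y ∂ₓ u - ∂_yy u = 0` on `Ω = (x₀,x₁) × (-1,1)` vanishing on `Σ₀ = {x₀} × [0,1]`,
on `Σ₁ = {x₁} × [-1,0]` and on `{y = ±1}` vanishes identically on the closure of `Ω`. -/
theorem stmt11 (x₀ x₁ : ℝ) (hx : x₀ < x₁) (u : ℝ → ℝ → ℝ)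
    (U : Set (ℝ × ℝ)) (hU : IsOpen U)
    (hΩU : closure (Ioo x₀ x₁ ×ˢ Ioo (-1 : ℝ) 1) ⊆ U)
    (hu : ContDiffOn ℝ 2 (fun p : ℝ × ℝ => u p.1 p.2) U)
    (heq : ∀ p ∈ Ioo x₀ x₁ ×ˢ Ioo (-1 : ℝ) 1,
      p.2 * deriv (fun s : ℝ => u s p.2) p.1 - deriv (deriv (u p.1)) p.2 = 0)
    (hSigma0 : ∀ y ∈ Icc (0 : ℝ) 1, u x₀ y = 0)
    (hSigma1 : ∀ y ∈ Icc (-1 : ℝ) 0, u x₁ y = 0)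
    (hbc : ∀ x ∈ Icc x₀ x₁, u x 1 = 0 ∧ u x (-1) = 0) :
    ∀ p ∈ closure (Ioo x₀ x₁ ×ˢ Ioo (-1 : ℝ) 1), u p.1 p.2 = 0 := by
  have hclosure : closure (Ioo x₀ x₁ ×ˢ Ioo (-1 : ℝ) 1) = Icc x₀ x₁ ×ˢ Icc (-1 : ℝ) 1 := by
    rw [closure_prod_eq, closure_Ioo hx.ne, closure_Ioo (by norm_num)]
  exact stmt11_general (a := fun _ y => y) (hu.continuousOn.mono (hclosure ▸ hΩU))
    (fun p hp => .of_contDiffAt (hu.contDiffAt (hU.mem_nhds (hΩU (subset_closure hp)))))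
    heq (fun p hp hy => hSigma0 p.2 ⟨hy.le, hp.2.2.le⟩)
    (fun p hp hy => hSigma1 p.2 ⟨hp.2.1.le, hy.le⟩)
    (fun x hx => (hbc x (Ioo_subset_Icc_self hx)).symm)
end

section
/- Let x₀ < x₁ be real numbers and Ω := (x₀,x₁) × (−1,1). Let α and γ be continuously differentiable on an open neighborhood of the closure of Ω with α(x,y) ≥ 1/2, |∂_yα(x,y)| ≤ 1/8 and |∂_yγ(x,y)| ≤ 1/8 for all (x,y) in the closure of Ω. Let u be twice continuously differentiable on an open neighborhood of the closure of Ω and suppose: y·∂ₓu + γ·∂_yu − α·∂²_{yy}u = 0 at every point of Ω; u(x₀,y) = 0 for every y ∈ [0,1]; u(x₁,y) = 0 for every y ∈ [−1,0]; and u(x,1) = u(x,−1) = 0 for every x ∈ [x₀,x₁]. Then u vanishes identically on the closure of Ω. -/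
open Set

/-
At an interior maximum in `y` the drift term vanishes and `-α ∂_yy` is nonnegative, while at a
maximum in `x` the transport term `β ∂ₓ` is nonnegative as well: on a lateral edge, the sign of the
one-sided derivative is the right one wherever the characteristics leave the domain. Hence a
strict subsolution attains its maximum over the rectangle on the top, the bottom or the inflow part
of the lateral edges. Adding `ε exp (L y)`, where `L > 0` and `L α > γ`, makes any subsolution
strict. Slightly shrinking the rectangle in `x` puts its lateral edges inside the domain, so the
equation is only needed in the open rectangle. Uniqueness follows by applying this to `u` and `-u`.
-/

section OneVariable

variable {f : ℝ → ℝ} {a b c x : ℝ}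

lemma deriv_deriv_nonpos_of_isLocalMax_s12 (hc : ContinuousAt f x) (h : IsLocalMax f x) :
    deriv (deriv f) x ≤ 0 := by
  by_contra! hpos
  have hmin : IsLocalMin f x := isLocalMin_of_deriv_deriv_pos hpos h.deriv_eq_zero hc
  have hconst : f =ᶠ[nhds x] fun _ => f x := by
    filter_upwards [h, hmin] with t hle hge using le_antisymm hle hge
  have hzero : deriv (deriv f) x = 0 := by simpa using hconst.deriv.deriv_eq
  exact hpos.ne' hzero

lemma deriv_mul_sub_nonpos_of_isMaxOn {s : Set ℝ} {z : ℝ} (hs : Convex ℝ s)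
    (hd : DifferentiableAt ℝ f x) (hmax : IsMaxOn f s x) (hx : x ∈ s) (hz : z ∈ s) :
    deriv f x * (z - x) ≤ 0 := by
  have h := hmax.localize.hasFDerivWithinAt_nonpos hd.hasDerivAt.hasFDerivAt.hasFDerivWithinAt
    (sub_mem_posTangentConeAt_of_segment_subset (hs.segment_subset hx hz))
  simpa [mul_comm] using h

lemma mul_deriv_nonneg_of_isMaxOn_Icc (hd : DifferentiableAt ℝ f x)
    (hmax : IsMaxOn f (Icc a b) x) (hx : x ∈ Icc a b)
    (hleft : x = a → c ≤ 0) (hright : x = b → 0 ≤ c) :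
    0 ≤ c * deriv f x := by
  have hab : a ≤ b := hx.1.trans hx.2
  rcases lt_trichotomy c 0 with hc | rfl | hc
  · have hxb : x < b := hx.2.lt_of_ne fun h => hc.not_ge (hright h)
    have hb := deriv_mul_sub_nonpos_of_isMaxOn (convex_Icc a b) hd hmax hx (right_mem_Icc.2 hab)
    exact mul_nonneg_of_nonpos_of_nonpos hc.le
      (nonpos_of_mul_nonpos_left hb (sub_pos.2 hxb))
  · simp
  · have hax : a < x := hx.1.lt_of_ne' fun h => hc.not_ge (hleft h)
    have ha := deriv_mul_sub_nonpos_of_isMaxOn (convex_Icc a b) hd hmax hx (left_mem_Icc.2 hab)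
    exact mul_nonneg hc.le (nonneg_of_mul_nonpos_left ha (sub_neg.2 hax))

end OneVariable

/-- The forward-backward operator `β(y) ∂ₓ + γ ∂_y - α ∂_yy` of a shear flow with profile `β`,
diffusion `α` and vertical drift `γ`, applied to `v` and evaluated at `(x, y)`. -/
noncomputable def shearOperator (β : ℝ → ℝ) (α γ v : ℝ → ℝ → ℝ) (x y : ℝ) : ℝ :=
  β y * deriv (fun s => v s y) x + γ x y * deriv (v x) y - α x y * deriv (deriv (v x)) y

/-- The part of the boundary of `[x₀, x₁] × [a, b]` carrying boundary data for the shear flow with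
profile `β`: the horizontal edges, and the points of the lateral edges where the characteristics
point strictly inward. -/
def parabolicBoundary (β : ℝ → ℝ) (x₀ x₁ a b : ℝ) : Set (ℝ × ℝ) :=
  {p ∈ Icc x₀ x₁ ×ˢ Icc a b |
    p.2 = a ∨ p.2 = b ∨ (p.1 = x₀ ∧ 0 < β p.2) ∨ (p.1 = x₁ ∧ β p.2 < 0)}

/-- The complement of the parabolic boundary in `[x₀, x₁] × [a, b]`, on which the maximum principle
requires the differential inequality. It contains the points of the lateral edges, other than the
corners, where the characteristics do not point strictly inward. -/
def parabolicInterior (β : ℝ → ℝ) (x₀ x₁ a b : ℝ) : Set (ℝ × ℝ) :=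
  (Icc x₀ x₁ ×ˢ Icc a b) \ parabolicBoundary β x₀ x₁ a b

section ParabolicBoundary

variable {β : ℝ → ℝ} {x₀ x₁ a b : ℝ} {p : ℝ × ℝ}

lemma snd_mem_Ioo_of_mem_parabolicInterior (hp : p ∈ parabolicInterior β x₀ x₁ a b) :
    p.2 ∈ Ioo a b :=
  ⟨hp.1.2.1.lt_of_ne' fun h => hp.2 ⟨hp.1, .inl h⟩,
    hp.1.2.2.lt_of_ne fun h => hp.2 ⟨hp.1, .inr (.inl h)⟩⟩

lemma exists_mem_parabolicBoundary_dist_le {δ : ℝ} (hδ : 0 ≤ δ)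
    (hp : p ∈ parabolicBoundary β (x₀ + δ) (x₁ - δ) a b) :
    ∃ q ∈ parabolicBoundary β x₀ x₁ a b, dist p q ≤ δ := by
  obtain ⟨x, y⟩ := p
  obtain ⟨⟨⟨hx₀, hx₁⟩, hy⟩, hedge⟩ := hp
  simp only at hx₀ hx₁ hy hedge
  have hx : x ∈ Icc x₀ x₁ := ⟨by linarith, by linarith⟩
  have hx₀₁ : x₀ ≤ x₁ := hx.1.trans hx.2
  rcases hedge with hbot | htop | ⟨hleft, hβ⟩ | ⟨hright, hβ⟩
  · exact ⟨(x, y), ⟨⟨hx, hy⟩, .inl hbot⟩, by simpa using hδ⟩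
  · exact ⟨(x, y), ⟨⟨hx, hy⟩, .inr (.inl htop)⟩, by simpa using hδ⟩
  · refine ⟨(x₀, y), ⟨⟨left_mem_Icc.2 hx₀₁, hy⟩, .inr (.inr (.inl ⟨rfl, hβ⟩))⟩, ?_⟩
    simp [hleft, Prod.dist_eq, abs_of_nonneg hδ, hδ]
  · refine ⟨(x₁, y), ⟨⟨right_mem_Icc.2 hx₀₁, hy⟩, .inr (.inr (.inr ⟨rfl, hβ⟩))⟩, ?_⟩
    simp [hright, Prod.dist_eq, abs_of_nonneg hδ, hδ]

end ParabolicBoundary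

section ShearOperator

variable {β : ℝ → ℝ} {α γ v : ℝ → ℝ → ℝ} {x y : ℝ}

lemma shearOperator_neg :
    shearOperator β α γ (fun s t => -v s t) x y = -shearOperator β α γ v x y := by
  simp only [shearOperator, deriv.fun_neg']
  ring

lemma shearOperator_add_exp (ε L : ℝ) (hv : ContDiffAt ℝ 2 (v x) y) :
    shearOperator β α γ (fun s t => v s t + ε * Real.exp (L * t)) x y =
      shearOperator β α γ v x y + ε * L * (γ x y - L * α x y) * Real.exp (L * y) := by
  have hexp : ContDiffAt ℝ 2 (fun t => ε * Real.exp (L * t)) y := by fun_prop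
  have hdy : deriv (fun t => v x t + ε * Real.exp (L * t)) y =
      deriv (v x) y + ε * (L * Real.exp (L * y)) := by
    have h := iteratedDeriv_fun_add (n := 1) (hv.of_le one_le_two) (hexp.of_le one_le_two)
    rw [iteratedDeriv_const_mul_field, iteratedDeriv_exp_const_mul] at h
    simpa only [iteratedDeriv_one, pow_one] using h
  have hdyy : deriv (deriv fun t => v x t + ε * Real.exp (L * t)) y =
      deriv (deriv (v x)) y + ε * (L ^ 2 * Real.exp (L * y)) := by
    have h := iteratedDeriv_fun_add (n := 2) hv hexp
    rw [iteratedDeriv_const_mul_field, iteratedDeriv_exp_const_mul] at h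
    simpa only [iteratedDeriv_succ, iteratedDeriv_zero] using h
  simp only [shearOperator, hdy, hdyy, deriv_add_const]
  ring

end ShearOperator

section MaximumPrinciple

variable {β : ℝ → ℝ} {α γ v : ℝ → ℝ → ℝ} {x₀ x₁ a b C : ℝ}

lemma shearOperator_nonneg_of_isMaxOn {p : ℝ × ℝ} (hp : p ∈ parabolicInterior β x₀ x₁ a b)
    (hα : 0 ≤ α p.1 p.2) (hvx : DifferentiableAt ℝ (fun s => v s p.2) p.1)
    (hvy : ContinuousAt (v p.1) p.2)
    (hmax : IsMaxOn (fun q : ℝ × ℝ => v q.1 q.2) (Icc x₀ x₁ ×ˢ Icc a b) p) :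
    0 ≤ shearOperator β α γ v p.1 p.2 := by
  have hy := snd_mem_Ioo_of_mem_parabolicInterior hp
  have htransport : 0 ≤ β p.2 * deriv (fun s => v s p.2) p.1 := by
    refine mul_deriv_nonneg_of_isMaxOn_Icc hvx
      (fun s hs => hmax (show (s, p.2) ∈ _ from ⟨hs, hp.1.2⟩)) hp.1.1 ?_ ?_
    · exact fun hleft => not_lt.1 fun hβ => hp.2 ⟨hp.1, .inr (.inr (.inl ⟨hleft, hβ⟩))⟩
    · exact fun hright => not_lt.1 fun hβ => hp.2 ⟨hp.1, .inr (.inr (.inr ⟨hright, hβ⟩))⟩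
  have hmaxy : IsLocalMax (v p.1) p.2 := by
    filter_upwards [Icc_mem_nhds hy.1 hy.2] with t ht
    exact hmax (show (p.1, t) ∈ _ from ⟨hp.1.1, ht⟩)
  have hdiffusion : α p.1 p.2 * deriv (deriv (v p.1)) p.2 ≤ 0 :=
    mul_nonpos_of_nonneg_of_nonpos hα (deriv_deriv_nonpos_of_isLocalMax_s12 hvy hmaxy)
  rw [shearOperator, hmaxy.deriv_eq_zero]
  linarith

lemma le_of_shearOperator_neg {m : ℝ}
    (hcont : ContinuousOn (fun p : ℝ × ℝ => v p.1 p.2) (Icc x₀ x₁ ×ˢ Icc a b))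
    (hα : ∀ p ∈ parabolicInterior β x₀ x₁ a b, 0 ≤ α p.1 p.2)
    (hvx : ∀ p ∈ parabolicInterior β x₀ x₁ a b, DifferentiableAt ℝ (fun s => v s p.2) p.1)
    (hvy : ∀ p ∈ parabolicInterior β x₀ x₁ a b, ContinuousAt (v p.1) p.2)
    (hneg : ∀ p ∈ parabolicInterior β x₀ x₁ a b, shearOperator β α γ v p.1 p.2 < 0)
    (hbd : ∀ p ∈ parabolicBoundary β x₀ x₁ a b, v p.1 p.2 ≤ m) :
    ∀ p ∈ Icc x₀ x₁ ×ˢ Icc a b, v p.1 p.2 ≤ m := by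
  intro q hq
  obtain ⟨p, hp, hmax⟩ :=
    (isCompact_Icc.prod isCompact_Icc).exists_isMaxOn ⟨q, hq⟩ hcont
  have hpbd : p ∈ parabolicBoundary β x₀ x₁ a b := by
    by_contra hpbd
    have hp' : p ∈ parabolicInterior β x₀ x₁ a b := ⟨hp, hpbd⟩
    exact (hneg p hp').not_ge
      (shearOperator_nonneg_of_isMaxOn hp' (hα p hp') (hvx p hp') (hvy p hp') hmax)
  exact (hmax hq).trans (hbd p hpbd)

lemma le_of_shearOperator_nonpos {m : ℝ}
    (hcont : ContinuousOn (fun p : ℝ × ℝ => v p.1 p.2) (Icc x₀ x₁ ×ˢ Icc a b))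
    (hα : ∀ p ∈ parabolicInterior β x₀ x₁ a b, 0 < α p.1 p.2)
    (hγ : ∀ p ∈ parabolicInterior β x₀ x₁ a b, γ p.1 p.2 ≤ C * α p.1 p.2)
    (hvx : ∀ p ∈ parabolicInterior β x₀ x₁ a b, DifferentiableAt ℝ (fun s => v s p.2) p.1)
    (hvy : ∀ p ∈ parabolicInterior β x₀ x₁ a b, ContDiffAt ℝ 2 (v p.1) p.2)
    (hsub : ∀ p ∈ parabolicInterior β x₀ x₁ a b, shearOperator β α γ v p.1 p.2 ≤ 0)
    (hbd : ∀ p ∈ parabolicBoundary β x₀ x₁ a b, v p.1 p.2 ≤ m) :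
    ∀ p ∈ Icc x₀ x₁ ×ˢ Icc a b, v p.1 p.2 ≤ m := by
  intro q hq
  obtain ⟨L, hL⟩ := exists_gt (max C 0)
  obtain ⟨hCL, hL0⟩ := max_lt_iff.1 hL
  have hperturbed : ∀ ε > 0, v q.1 q.2 + ε * Real.exp (L * q.2) ≤ m + ε * Real.exp (L * b) := by
    intro ε hε
    refine le_of_shearOperator_neg (β := β) (α := α) (γ := γ)
      (v := fun s t => v s t + ε * Real.exp (L * t)) (hcont.add (by fun_prop))
      (fun p hp => (hα p hp).le) (fun p hp => (hvx p hp).add_const _)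
      (fun p hp => (hvy p hp).continuousAt.add (by fun_prop)) (fun p hp => ?_) (fun p hp => ?_) q hq
    · have hdrift : γ p.1 p.2 - L * α p.1 p.2 < 0 :=
        sub_neg.2 ((hγ p hp).trans_lt (mul_lt_mul_of_pos_right hCL (hα p hp)))
      rw [shearOperator_add_exp ε L (hvy p hp)]
      exact add_neg_of_nonpos_of_neg (hsub p hp)
        (mul_neg_of_neg_of_pos (mul_neg_of_pos_of_neg (mul_pos hε hL0) hdrift) (Real.exp_pos _))
    · have hpb : p.2 ≤ b := hp.1.2.2
      gcongr
      exact hbd p hp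
  refine le_of_forall_pos_le_add fun η hη => ?_
  have h := hperturbed (η / Real.exp (L * b)) (by positivity)
  rw [div_mul_cancel₀ _ (Real.exp_ne_zero _)] at h
  exact (le_add_of_nonneg_right (by positivity)).trans h

lemma le_of_shearOperator_nonpos_of_Ioo {m : ℝ}
    (hcont : ContinuousOn (fun p : ℝ × ℝ => v p.1 p.2) (Icc x₀ x₁ ×ˢ Icc a b))
    (hα : ∀ p ∈ Ioo x₀ x₁ ×ˢ Ioo a b, 0 < α p.1 p.2)
    (hγ : ∀ p ∈ Ioo x₀ x₁ ×ˢ Ioo a b, γ p.1 p.2 ≤ C * α p.1 p.2)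
    (hvx : ∀ p ∈ Ioo x₀ x₁ ×ˢ Ioo a b, DifferentiableAt ℝ (fun s => v s p.2) p.1)
    (hvy : ∀ p ∈ Ioo x₀ x₁ ×ˢ Ioo a b, ContDiffAt ℝ 2 (v p.1) p.2)
    (hsub : ∀ p ∈ Ioo x₀ x₁ ×ˢ Ioo a b, shearOperator β α γ v p.1 p.2 ≤ 0)
    (hbd : ∀ p ∈ parabolicBoundary β x₀ x₁ a b, v p.1 p.2 ≤ m) :
    ∀ p ∈ Ioo x₀ x₁ ×ˢ Ioo a b, v p.1 p.2 ≤ m := by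
  intro p hp
  refine le_of_forall_pos_le_add fun η hη => ?_
  obtain ⟨ρ, hρ, huniform⟩ := Metric.uniformContinuousOn_iff.1
    ((isCompact_Icc.prod isCompact_Icc).uniformContinuousOn_of_continuous hcont) η hη
  obtain ⟨δ, hδ, hδlt⟩ :=
    exists_between (lt_min hρ (lt_min (sub_pos.2 hp.1.1) (sub_pos.2 hp.1.2)))
  obtain ⟨hδρ, hδx₀, hδx₁⟩ : δ < ρ ∧ δ < p.1 - x₀ ∧ δ < x₁ - p.1 := by
    simpa only [lt_min_iff] using hδlt
  have hinset : Icc (x₀ + δ) (x₁ - δ) ×ˢ Icc a b ⊆ Icc x₀ x₁ ×ˢ Icc a b :=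
    prod_mono (Icc_subset_Icc (by linarith) (by linarith)) subset_rfl
  have hinterior : parabolicInterior β (x₀ + δ) (x₁ - δ) a b ⊆ Ioo x₀ x₁ ×ˢ Ioo a b :=
    fun q hq => ⟨Icc_subset_Ioo (by linarith) (by linarith) hq.1.1,
      snd_mem_Ioo_of_mem_parabolicInterior hq⟩
  have hbdη : ∀ q ∈ parabolicBoundary β (x₀ + δ) (x₁ - δ) a b, v q.1 q.2 ≤ m + η := by
    intro q hq
    obtain ⟨q', hq', hdist⟩ := exists_mem_parabolicBoundary_dist_le hδ.le hq
    have hclose := huniform q (hinset hq.1) q' hq'.1 (hdist.trans_lt hδρ)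
    linarith [hbd q' hq', (le_abs_self _).trans_lt (Real.dist_eq _ _ ▸ hclose)]
  exact le_of_shearOperator_nonpos (hcont.mono hinset)
    (fun q hq => hα q (hinterior hq)) (fun q hq => hγ q (hinterior hq))
    (fun q hq => hvx q (hinterior hq)) (fun q hq => hvy q (hinterior hq))
    (fun q hq => hsub q (hinterior hq)) hbdη p
    ⟨⟨by linarith, by linarith⟩, Ioo_subset_Icc_self hp.2⟩

end MaximumPrinciple

section RegularityAndBounds

variable {𝕜 E F G : Type*} [NontriviallyNormedField 𝕜] [NormedAddCommGroup E] [NormedSpace 𝕜 E]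
  [NormedAddCommGroup F] [NormedSpace 𝕜 F] [NormedAddCommGroup G] [NormedSpace 𝕜 G]
  {n : WithTop ℕ∞} {f : E → F → G} {p : E × F}

lemma contDiffAt_slice_left (hf : ContDiffAt 𝕜 n (fun q : E × F => f q.1 q.2) p) :
    ContDiffAt 𝕜 n (fun s => f s p.2) p.1 :=
  ContDiffAt.comp (f := fun s => (s, p.2)) p.1 hf (contDiff_prodMk_left p.2).contDiffAt

lemma contDiffAt_slice_right (hf : ContDiffAt 𝕜 n (fun q : E × F => f q.1 q.2) p) :
    ContDiffAt 𝕜 n (f p.1) p.2 :=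
  ContDiffAt.comp (f := fun t => (p.1, t)) p.2 hf (contDiff_prodMk_right p.1).contDiffAt

lemma exists_forall_le_mul_of_isCompact {X : Type*} [TopologicalSpace X] {K : Set X} {g h : X → ℝ}
    (hK : IsCompact K) (hg : ContinuousOn g K) (hh : ContinuousOn h K) (hpos : ∀ z ∈ K, 0 < h z) :
    ∃ C : ℝ, ∀ z ∈ K, g z ≤ C * h z := by
  obtain ⟨C, hC⟩ := hK.bddAbove_image (hg.div hh fun z hz => (hpos z hz).ne')
  exact ⟨C, fun z hz => (div_le_iff₀ (hpos z hz)).1 (hC (mem_image_of_mem _ hz))⟩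

end RegularityAndBounds

theorem stmt12_general {x₀ x₁ a b C : ℝ} {β : ℝ → ℝ} {α γ u : ℝ → ℝ → ℝ}
    (hcont : ContinuousOn (fun p : ℝ × ℝ => u p.1 p.2) (closure (Ioo x₀ x₁ ×ˢ Ioo a b)))
    (hα : ∀ p ∈ Ioo x₀ x₁ ×ˢ Ioo a b, 0 < α p.1 p.2)
    (hγ : ∀ p ∈ Ioo x₀ x₁ ×ˢ Ioo a b, γ p.1 p.2 ≤ C * α p.1 p.2)
    (hux : ∀ p ∈ Ioo x₀ x₁ ×ˢ Ioo a b, DifferentiableAt ℝ (fun s => u s p.2) p.1)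
    (huy : ∀ p ∈ Ioo x₀ x₁ ×ˢ Ioo a b, ContDiffAt ℝ 2 (u p.1) p.2)
    (heq : ∀ p ∈ Ioo x₀ x₁ ×ˢ Ioo a b, shearOperator β α γ u p.1 p.2 = 0)
    (hbd : ∀ p ∈ parabolicBoundary β x₀ x₁ a b, u p.1 p.2 = 0) :
    ∀ p ∈ closure (Ioo x₀ x₁ ×ˢ Ioo a b), u p.1 p.2 = 0 := by
  intro p hp
  obtain ⟨q, hq⟩ : (Ioo x₀ x₁ ×ˢ Ioo a b).Nonempty := closure_nonempty_iff.1 ⟨p, hp⟩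
  have hclosure : closure (Ioo x₀ x₁ ×ˢ Ioo a b) = Icc x₀ x₁ ×ˢ Icc a b := by
    rw [closure_prod_eq, closure_Ioo (hq.1.1.trans hq.1.2).ne, closure_Ioo (hq.2.1.trans hq.2.2).ne]
  have hcontIcc : ContinuousOn (fun r : ℝ × ℝ => u r.1 r.2) (Icc x₀ x₁ ×ˢ Icc a b) :=
    hclosure ▸ hcont
  have hle : ∀ r ∈ Ioo x₀ x₁ ×ˢ Ioo a b, u r.1 r.2 ≤ 0 :=
    le_of_shearOperator_nonpos_of_Ioo hcontIcc hα hγ hux huy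
      (fun r hr => (heq r hr).le) (fun r hr => (hbd r hr).le)
  have hge : ∀ r ∈ Ioo x₀ x₁ ×ˢ Ioo a b, -u r.1 r.2 ≤ 0 :=
    le_of_shearOperator_nonpos_of_Ioo (v := fun s t => -u s t) hcontIcc.neg hα hγ
      (fun r hr => (hux r hr).neg) (fun r hr => (huy r hr).neg)
      (fun r hr => by rw [shearOperator_neg, heq r hr, neg_zero])
      (fun r hr => by rw [hbd r hr, neg_zero])
  have hzero : EqOn (fun r : ℝ × ℝ => u r.1 r.2) 0 (Ioo x₀ x₁ ×ˢ Ioo a b) := fun r hr =>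
    (hle r hr).antisymm (neg_nonpos.1 (hge r hr))
  exact hzero.of_subset_closure hcont continuousOn_const subset_closure subset_rfl hp

/-- Uniqueness for the degenerate forward-backward equation
`y ∂ₓ u + γ ∂_y u - α ∂_yy u = 0` on `Ω = (x₀,x₁) × (-1,1)`, with `α ≥ 1/2`,
`|∂_y α| ≤ 1/8`, `|∂_y γ| ≤ 1/8`: a classical solution vanishing on
`Σ₀ = {x₀} × [0,1]`, `Σ₁ = {x₁} × [-1,0]` and `{y = ±1}` vanishes identically. -/
theorem stmt12 (x₀ x₁ : ℝ) (hx : x₀ < x₁) (u α γ : ℝ → ℝ → ℝ)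
    (U : Set (ℝ × ℝ)) (hU : IsOpen U)
    (hΩU : closure (Ioo x₀ x₁ ×ˢ Ioo (-1 : ℝ) 1) ⊆ U)
    (ha : ContDiffOn ℝ 1 (fun p : ℝ × ℝ => α p.1 p.2) U)
    (hg : ContDiffOn ℝ 1 (fun p : ℝ × ℝ => γ p.1 p.2) U)
    (haLB : ∀ p ∈ closure (Ioo x₀ x₁ ×ˢ Ioo (-1 : ℝ) 1), (1 : ℝ) / 2 ≤ α p.1 p.2)
    (haD : ∀ p ∈ closure (Ioo x₀ x₁ ×ˢ Ioo (-1 : ℝ) 1), |deriv (α p.1) p.2| ≤ 1 / 8)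
    (hgD : ∀ p ∈ closure (Ioo x₀ x₁ ×ˢ Ioo (-1 : ℝ) 1), |deriv (γ p.1) p.2| ≤ 1 / 8)
    (hu : ContDiffOn ℝ 2 (fun p : ℝ × ℝ => u p.1 p.2) U)
    (heq : ∀ p ∈ Ioo x₀ x₁ ×ˢ Ioo (-1 : ℝ) 1,
      p.2 * deriv (fun s : ℝ => u s p.2) p.1 + γ p.1 p.2 * deriv (u p.1) p.2
        - α p.1 p.2 * deriv (deriv (u p.1)) p.2 = 0)
    (hSigma0 : ∀ y ∈ Icc (0 : ℝ) 1, u x₀ y = 0)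
    (hSigma1 : ∀ y ∈ Icc (-1 : ℝ) 0, u x₁ y = 0)
    (hbc : ∀ x ∈ Icc x₀ x₁, u x 1 = 0 ∧ u x (-1) = 0) :
    ∀ p ∈ closure (Ioo x₀ x₁ ×ˢ Ioo (-1 : ℝ) 1), u p.1 p.2 = 0 := by
  have hα : ∀ p ∈ closure (Ioo x₀ x₁ ×ˢ Ioo (-1 : ℝ) 1), 0 < α p.1 p.2 := fun p hp =>
    one_half_pos.trans_le (haLB p hp)
  obtain ⟨C, hC⟩ := exists_forall_le_mul_of_isCompact
    ((Metric.isBounded_Ioo _ _).prod (Metric.isBounded_Ioo _ _)).isCompact_closure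
    (hg.continuousOn.mono hΩU) (ha.continuousOn.mono hΩU) hα
  have hreg : ∀ p ∈ Ioo x₀ x₁ ×ˢ Ioo (-1 : ℝ) 1, ContDiffAt ℝ 2 (fun q : ℝ × ℝ => u q.1 q.2) p :=
    fun p hp => hu.contDiffAt (hU.mem_nhds (hΩU (subset_closure hp)))
  have hbd : ∀ p ∈ parabolicBoundary (fun y => y) x₀ x₁ (-1) 1, u p.1 p.2 = 0 := by
    rintro ⟨x, y⟩ ⟨⟨hxI, hyI⟩, rfl | rfl | ⟨rfl, hy⟩ | ⟨rfl, hy⟩⟩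
    exacts [(hbc x hxI).2, (hbc x hxI).1, hSigma0 y ⟨hy.le, hyI.2⟩, hSigma1 y ⟨hyI.1, hy.le⟩]
  exact stmt12_general (β := fun y => y) (hu.continuousOn.mono hΩU)
    (fun p hp => hα p (subset_closure hp)) (fun p hp => hC p (subset_closure hp))
    (fun p hp => (contDiffAt_slice_left (hreg p hp)).differentiableAt two_ne_zero)
    (fun p hp => contDiffAt_slice_right (hreg p hp)) heq hbd
end

section
/- Let x₀ < x₁ be real numbers and Ω := (x₀,x₁) × (−1,1). Let f be continuous on the closure of Ω and let u₁, u₂ be twice continuously differentiable on an open neighborhood of the closure of Ω such that, for i = 1,2: (y + uᵢ)·∂ₓuᵢ − ∂²_{yy}uᵢ = f at every point of Ω and uᵢ(x,1) = uᵢ(x,−1) = 0 for every x ∈ [x₀,x₁]. Assume the same lateral boundary data: u₁(x₀,y) = u₂(x₀,y) for y ∈ [0,1] and u₁(x₁,y) = u₂(x₁,y) for y ∈ [−1,0]. Assume the sign conditions y + u₁(x₁,y) ≥ 0 for y ∈ [0,1] and y + u₁(x₀,y) ≤ 0 for y ∈ [−1,0], and the smallness conditions sup_Ω |∂ₓu₁|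 ≤ 1/8 and sup_Ω |∂ₓu₂| ≤ 1/8. Then u₁ = u₂ on the closure of Ω. -/
open Set

/-! The difference `w = u₁ - u₂` solves the linear equation `a ∂ₓw + c w = ∂_yy w` with `a = y + u₁`
and `c = ∂ₓu₂`. Multiplying by `2w` writes the energy balance as the divergence of
`(a w², -2w ∂_y w)`; subtracting `φ w²` from the second component does not change the flux through
`{y = ±1}`, where `w` vanishes, but completes the square:
`div = (∂ₓa - 2c - (∂_yφ - φ²/2)) w² - 2 (∂_y w + φ w / 2)²`.
For `φ = y` the zeroth-order gain `∂_yφ - φ²/2 = 1 - y²/2` exceeds `1/2` inside `Ω`, a Poincaré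
inequality in disguise, so the divergence is nonpositive. The sign conditions and the lateral data
make the outward flux nonnegative, hence the divergence vanishes, and so does `w`. -/

section PartialDerivatives

/-- The partial derivative `∂ₓg` of a function on the plane, encoded as the Fréchet derivative in
the direction `(1, 0)`; it carries information only where `g` is differentiable. -/
noncomputable def partialX (g : ℝ × ℝ → ℝ) (p : ℝ × ℝ) : ℝ := fderiv ℝ g p (1, 0)

/-- The partial derivative `∂_y g` of a function on the plane, encoded as the Fréchet derivative in
the direction `(0, 1)`; it carries information only where `g` is differentiable. -/
noncomputable def partialY (g : ℝ × ℝ → ℝ) (p : ℝ × ℝ) : ℝ := fderiv ℝ g p (0, 1)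

variable {g h : ℝ × ℝ → ℝ} {U : Set (ℝ × ℝ)} {p : ℝ × ℝ}

lemma differentiableAt_of_contDiffOn {n : WithTop ℕ∞} (hU : IsOpen U) (hg : ContDiffOn ℝ n g U)
    (hn : n ≠ 0) (hp : p ∈ U) : DifferentiableAt ℝ g p :=
  (hg.differentiableOn hn).differentiableAt (hU.mem_nhds hp)

lemma deriv_slice_eq_partialX (hg : DifferentiableAt ℝ g p) :
    deriv (fun s => g (s, p.2)) p.1 = partialX g p :=
  (hg.hasFDerivAt.comp_hasDerivAt p.1
    ((hasDerivAt_id p.1).prodMk (hasDerivAt_const p.1 p.2))).deriv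

lemma deriv_slice_eq_partialY (hg : DifferentiableAt ℝ g p) :
    deriv (fun t => g (p.1, t)) p.2 = partialY g p :=
  (hg.hasFDerivAt.comp_hasDerivAt p.2
    ((hasDerivAt_const p.2 p.1).prodMk (hasDerivAt_id p.2))).deriv

lemma contDiffOn_partialY {m n : WithTop ℕ∞} (hU : IsOpen U) (hg : ContDiffOn ℝ n g U)
    (hmn : m + 1 ≤ n) : ContDiffOn ℝ m (partialY g) U :=
  (hg.fderiv_of_isOpen hU hmn).clm_apply contDiffOn_const

lemma continuousOn_partialX (hU : IsOpen U) (hg : ContDiffOn ℝ 1 g U) :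
    ContinuousOn (partialX g) U :=
  (hg.continuousOn_fderiv_of_isOpen hU le_rfl).clm_apply continuousOn_const

lemma continuousOn_partialY (hU : IsOpen U) (hg : ContDiffOn ℝ 1 g U) :
    ContinuousOn (partialY g) U :=
  (hg.continuousOn_fderiv_of_isOpen hU le_rfl).clm_apply continuousOn_const

lemma deriv_deriv_slice_eq_partialY_partialY (hU : IsOpen U) (hg : ContDiffOn ℝ 2 g U)
    (hp : p ∈ U) :
    deriv (deriv fun t => g (p.1, t)) p.2 = partialY (partialY g) p := by
  have hslice : ∀ᶠ t in nhds p.2, (p.1, t) ∈ U :=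
    (Continuous.prodMk_right p.1).continuousAt.eventually (hU.mem_nhds hp)
  have hfirst : deriv (fun t => g (p.1, t)) =ᶠ[nhds p.2] fun t => partialY g (p.1, t) := by
    filter_upwards [hslice] with t ht
    exact deriv_slice_eq_partialY (differentiableAt_of_contDiffOn hU hg two_ne_zero ht)
  rw [hfirst.deriv_eq]
  exact deriv_slice_eq_partialY <| differentiableAt_of_contDiffOn hU
    (contDiffOn_partialY hU hg one_add_one_eq_two.le) one_ne_zero hp

lemma partialX_add (hg : DifferentiableAt ℝ g p) (hh : DifferentiableAt ℝ h p) :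
    partialX (g + h) p = partialX g p + partialX h p := by
  simp only [partialX, fderiv_add hg hh, add_apply]

lemma partialX_sub (hg : DifferentiableAt ℝ g p) (hh : DifferentiableAt ℝ h p) :
    partialX (g - h) p = partialX g p - partialX h p := by
  simp only [partialX, fderiv_sub hg hh, sub_apply]

lemma partialY_sub (hg : DifferentiableAt ℝ g p) (hh : DifferentiableAt ℝ h p) :
    partialY (g - h) p = partialY g p - partialY h p := by
  simp only [partialY, fderiv_sub hg hh, sub_apply]

lemma partialY_partialY_sub (hU : IsOpen U) (hg : ContDiffOn ℝ 2 g U) (hh : ContDiffOn ℝ 2 h U)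
    (hp : p ∈ U) :
    partialY (partialY (g - h)) p = partialY (partialY g) p - partialY (partialY h) p := by
  have hfirst : partialY (g - h) =ᶠ[nhds p] partialY g - partialY h := by
    filter_upwards [hU.mem_nhds hp] with q hq
    exact partialY_sub (differentiableAt_of_contDiffOn hU hg two_ne_zero hq)
      (differentiableAt_of_contDiffOn hU hh two_ne_zero hq)
  have hdiff : ∀ {k : ℝ × ℝ → ℝ}, ContDiffOn ℝ 2 k U → DifferentiableAt ℝ (partialY k) p :=
    fun hk => differentiableAt_of_contDiffOn hU
      (contDiffOn_partialY hU hk one_add_one_eq_two.le) one_ne_zero hp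
  rw [partialY, hfirst.fderiv_eq]
  exact partialY_sub (hdiff hg) (hdiff hh)

end PartialDerivatives

section Divergence

open MeasureTheory

/-- The divergence `∂ₓF + ∂_y G` of the plane vector field with components `F` and `G`. -/
noncomputable def divergence (F G : ℝ × ℝ → ℝ) (p : ℝ × ℝ) : ℝ := partialX F p + partialY G p

lemma eqOn_zero_of_nonpos_of_setIntegral_nonneg {X : Type*} [TopologicalSpace X] [MeasurableSpace X]
    [OpensMeasurableSpace X] {μ : Measure X} [μ.IsOpenPosMeasure] {s : Set X} {f : X → ℝ}
    (hs : IsOpen s) (hf : ContinuousOn f s) (hfi : IntegrableOn f s μ) (hf0 : ∀ x ∈ s, f x ≤ 0)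
    (hint : 0 ≤ ∫ x in s, f x ∂μ) : EqOn f 0 s := by
  have hneg : ∀ᵐ x ∂μ.restrict s, 0 ≤ (-f) x :=
    (ae_restrict_iff' hs.measurableSet).2 (.of_forall fun x hx => neg_nonneg.2 (hf0 x hx))
  have hint_neg : ∫ x in s, (-f) x ∂μ = 0 :=
    le_antisymm (by simpa only [Pi.neg_apply, integral_neg, neg_nonpos] using hint)
      (integral_nonneg_of_ae hneg)
  have hae : -f =ᵐ[μ.restrict s] 0 := (integral_eq_zero_iff_of_nonneg_ae hneg hfi.neg).1 hint_neg
  have heq : EqOn (-f) 0 s := Measure.eqOn_open_of_ae_eq hae hs hf.neg continuousOn_const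
  exact fun x hx => neg_eq_zero.1 (heq hx)

variable {x₀ x₁ y₀ y₁ : ℝ} {U : Set (ℝ × ℝ)} {F G : ℝ × ℝ → ℝ}

lemma integral_divergence_rectangle (hx : x₀ ≤ x₁) (hy : y₀ ≤ y₁) (hU : IsOpen U)
    (hRU : Icc x₀ x₁ ×ˢ Icc y₀ y₁ ⊆ U) (hF : ContDiffOn ℝ 1 F U) (hG : ContDiffOn ℝ 1 G U) :
    ∫ p in Icc x₀ x₁ ×ˢ Icc y₀ y₁, divergence F G p =
      (((∫ x in x₀..x₁, G (x, y₁)) - ∫ x in x₀..x₁, G (x, y₀)) +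
        ∫ y in y₀..y₁, F (x₁, y)) - ∫ y in y₀..y₁, F (x₀, y) := by
  have hdiv : ContinuousOn (divergence F G) U :=
    (continuousOn_partialX hU hF).add (continuousOn_partialY hU hG)
  have hinterior : ∀ p ∈ Ioo x₀ x₁ ×ˢ Ioo y₀ y₁, p ∈ U := fun p hp =>
    hRU (prod_mono Ioo_subset_Icc_self Ioo_subset_Icc_self hp)
  rw [← Icc_prod_eq (x₀, y₀) (x₁, y₁)] at hRU ⊢
  exact integral_divergence_prod_Icc_of_hasFDerivAt_of_le F G (fderiv ℝ F) (fderiv ℝ G)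
    (x₀, y₀) (x₁, y₁) ⟨hx, hy⟩ (hF.continuousOn.mono hRU) (hG.continuousOn.mono hRU)
    (fun p hp => (differentiableAt_of_contDiffOn hU hF one_ne_zero (hinterior p hp)).hasFDerivAt)
    (fun p hp => (differentiableAt_of_contDiffOn hU hG one_ne_zero (hinterior p hp)).hasFDerivAt)
    ((hdiv.mono hRU).integrableOn_compact isCompact_Icc)

lemma divergence_eqOn_zero_of_nonpos_of_outward_flux_nonneg (hx : x₀ ≤ x₁) (hy : y₀ ≤ y₁)
    (hU : IsOpen U) (hRU : Icc x₀ x₁ ×ˢ Icc y₀ y₁ ⊆ U)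
    (hF : ContDiffOn ℝ 1 F U) (hG : ContDiffOn ℝ 1 G U)
    (hdiv : ∀ p ∈ Ioo x₀ x₁ ×ˢ Ioo y₀ y₁, divergence F G p ≤ 0)
    (hleft : ∀ y ∈ Icc y₀ y₁, F (x₀, y) ≤ 0) (hright : ∀ y ∈ Icc y₀ y₁, 0 ≤ F (x₁, y))
    (hbottom : ∀ x ∈ Icc x₀ x₁, G (x, y₀) ≤ 0) (htop : ∀ x ∈ Icc x₀ x₁, 0 ≤ G (x, y₁)) :
    EqOn (divergence F G) 0 (Ioo x₀ x₁ ×ˢ Ioo y₀ y₁) := by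
  have hcont : ContinuousOn (divergence F G) (Icc x₀ x₁ ×ˢ Icc y₀ y₁) :=
    ((continuousOn_partialX hU hF).add (continuousOn_partialY hU hG)).mono hRU
  have hsub : Ioo x₀ x₁ ×ˢ Ioo y₀ y₁ ⊆ Icc x₀ x₁ ×ˢ Icc y₀ y₁ :=
    prod_mono Ioo_subset_Icc_self Ioo_subset_Icc_self
  have hae : Ioo x₀ x₁ ×ˢ Ioo y₀ y₁ =ᵐ[volume] Icc x₀ x₁ ×ˢ Icc y₀ y₁ :=
    Measure.set_prod_ae_eq Ioo_ae_eq_Icc Ioo_ae_eq_Icc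
  refine eqOn_zero_of_nonpos_of_setIntegral_nonneg (μ := volume) (isOpen_Ioo.prod isOpen_Ioo)
    (hcont.mono hsub)
    ((hcont.integrableOn_compact (isCompact_Icc.prod isCompact_Icc)).mono_set hsub) hdiv ?_
  rw [setIntegral_congr_set hae, integral_divergence_rectangle hx hy hU hRU hF hG]
  have hflux_left : 0 ≤ ∫ y in y₀..y₁, -F (x₀, y) :=
    intervalIntegral.integral_nonneg hy fun y hy => neg_nonneg.2 (hleft y hy)
  have hflux_right : 0 ≤ ∫ y in y₀..y₁, F (x₁, y) := intervalIntegral.integral_nonneg hy hright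
  have hflux_bottom : 0 ≤ ∫ x in x₀..x₁, -G (x, y₀) :=
    intervalIntegral.integral_nonneg hx fun x hx => neg_nonneg.2 (hbottom x hx)
  have hflux_top : 0 ≤ ∫ x in x₀..x₁, G (x, y₁) := intervalIntegral.integral_nonneg hx htop
  rw [intervalIntegral.integral_neg] at hflux_left hflux_bottom
  linarith

end Divergence

section LinearEquation

variable {a c w φ : ℝ × ℝ → ℝ} {p : ℝ × ℝ}

/-- The `x`-component of the energy flux of `w` transported with speed `a`. -/
def energyFluxX (a w : ℝ × ℝ → ℝ) (p : ℝ × ℝ) : ℝ := a p * w p ^ 2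

/-- The `y`-component of the energy flux of `w`: the diffusive flux `-∂_y(w²)`, corrected by the
weight `φ` so that the divergence acquires the zeroth-order term of a Poincaré inequality. -/
noncomputable def energyFluxY (φ w : ℝ × ℝ → ℝ) (p : ℝ × ℝ) : ℝ :=
  -(2 * (w p * partialY w p) + φ p * w p ^ 2)

lemma partialX_energyFluxX (ha : DifferentiableAt ℝ a p) (hw : DifferentiableAt ℝ w p) :
    partialX (energyFluxX a w) p = partialX a p * w p ^ 2 + 2 * a p * w p * partialX w p := by
  have h := (ha.hasFDerivAt.mul (hw.hasFDerivAt.pow 2)).fderiv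
  refine (DFunLike.congr_fun h (1, 0)).trans ?_
  simp only [Nat.add_one_sub_one, pow_one, nsmul_eq_mul, Nat.cast_ofNat, add_apply, smul_apply,
    smul_eq_mul, partialX]
  ring

lemma partialY_energyFluxY (hφ : DifferentiableAt ℝ φ p) (hw : DifferentiableAt ℝ w p)
    (hwy : DifferentiableAt ℝ (partialY w) p) :
    partialY (energyFluxY φ w) p =
      -(2 * partialY w p ^ 2 + 2 * w p * partialY (partialY w) p +
        partialY φ p * w p ^ 2 + 2 * φ p * w p * partialY w p) := by
  have h := (((hw.hasFDerivAt.mul hwy.hasFDerivAt).const_mul 2).add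
    (hφ.hasFDerivAt.mul (hw.hasFDerivAt.pow 2))).neg.fderiv
  refine (DFunLike.congr_fun h (0, 1)).trans ?_
  simp only [partialY, smul_add, Nat.add_one_sub_one, pow_one, nsmul_eq_mul, Nat.cast_ofNat,
    neg_add_rev, add_apply, neg_apply, smul_apply, smul_eq_mul]
  ring

lemma divergence_energyFlux (ha : DifferentiableAt ℝ a p) (hφ : DifferentiableAt ℝ φ p)
    (hw : DifferentiableAt ℝ w p) (hwy : DifferentiableAt ℝ (partialY w) p)
    (heq : a p * partialX w p + c p * w p = partialY (partialY w) p) :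
    divergence (energyFluxX a w) (energyFluxY φ w) p =
      (partialX a p - 2 * c p - (partialY φ p - φ p ^ 2 / 2)) * w p ^ 2 -
        2 * (partialY w p + φ p * w p / 2) ^ 2 := by
  rw [divergence, partialX_energyFluxX ha hw, partialY_energyFluxY hφ hw hwy, ← heq]
  ring

theorem eqOn_zero_of_linear_forward_backward {x₀ x₁ y₀ y₁ : ℝ} (hx : x₀ ≤ x₁) (hy : y₀ ≤ y₁)
    {U : Set (ℝ × ℝ)} (hU : IsOpen U) (hRU : Icc x₀ x₁ ×ˢ Icc y₀ y₁ ⊆ U)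
    (ha : ContDiffOn ℝ 1 a U) (hφ : ContDiffOn ℝ 1 φ U) (hw : ContDiffOn ℝ 2 w U)
    (heq : ∀ p ∈ Ioo x₀ x₁ ×ˢ Ioo y₀ y₁,
      a p * partialX w p + c p * w p = partialY (partialY w) p)
    (hgain : ∀ p ∈ Ioo x₀ x₁ ×ˢ Ioo y₀ y₁,
      partialX a p - 2 * c p < partialY φ p - φ p ^ 2 / 2)
    (hleft : ∀ y ∈ Icc y₀ y₁, a (x₀, y) ≤ 0 ∨ w (x₀, y) = 0)
    (hright : ∀ y ∈ Icc y₀ y₁, 0 ≤ a (x₁, y) ∨ w (x₁, y) = 0)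
    (hbottom : ∀ x ∈ Icc x₀ x₁, w (x, y₀) = 0) (htop : ∀ x ∈ Icc x₀ x₁, w (x, y₁) = 0) :
    EqOn w 0 (Ioo x₀ x₁ ×ˢ Ioo y₀ y₁) := by
  have hw1 : ContDiffOn ℝ 1 w U := hw.of_le one_le_two
  have hwy : ContDiffOn ℝ 1 (partialY w) U := contDiffOn_partialY hU hw one_add_one_eq_two.le
  have hF : ContDiffOn ℝ 1 (energyFluxX a w) U := ha.mul (hw1.pow 2)
  have hG : ContDiffOn ℝ 1 (energyFluxY φ w) U :=
    ((contDiffOn_const.mul (hw1.mul hwy)).add (hφ.mul (hw1.pow 2))).neg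
  have hdiv : ∀ p ∈ Ioo x₀ x₁ ×ˢ Ioo y₀ y₁,
      divergence (energyFluxX a w) (energyFluxY φ w) p ≤
        (partialX a p - 2 * c p - (partialY φ p - φ p ^ 2 / 2)) * w p ^ 2 := by
    intro p hp
    have hpU : p ∈ U := hRU (prod_mono Ioo_subset_Icc_self Ioo_subset_Icc_self hp)
    rw [divergence_energyFlux (differentiableAt_of_contDiffOn hU ha one_ne_zero hpU)
      (differentiableAt_of_contDiffOn hU hφ one_ne_zero hpU)
      (differentiableAt_of_contDiffOn hU hw1 one_ne_zero hpU)
      (differentiableAt_of_contDiffOn hU hwy one_ne_zero hpU) (heq p hp)]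
    exact sub_le_self _ (by positivity)
  have hdiv_zero := divergence_eqOn_zero_of_nonpos_of_outward_flux_nonneg hx hy hU hRU hF hG
    (fun p hp => (hdiv p hp).trans
      (mul_nonpos_of_nonpos_of_nonneg (sub_neg.2 (hgain p hp)).le (sq_nonneg _)))
    (fun y hy => (hleft y hy).elim (fun h => mul_nonpos_of_nonpos_of_nonneg h (sq_nonneg _))
      fun h => by simp [energyFluxX, h])
    (fun y hy => (hright y hy).elim (fun h => mul_nonneg h (sq_nonneg _))
      fun h => by simp [energyFluxX, h])
    (fun x hx => by simp [energyFluxY, hbottom x hx])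
    (fun x hx => by simp [energyFluxY, htop x hx])
  intro p hp
  have hnonneg := (hdiv_zero hp).symm.le.trans (hdiv p hp)
  have hsq : w p ^ 2 ≤ 0 := nonpos_of_mul_nonneg_right hnonneg (sub_neg.2 (hgain p hp))
  exact pow_eq_zero_iff two_ne_zero |>.1 (hsq.antisymm (sq_nonneg _))

end LinearEquation

section QuasilinearEquation

variable {V g₁ g₂ φ : ℝ × ℝ → ℝ} {U : Set (ℝ × ℝ)}

lemma linear_equation_sub {p : ℝ × ℝ} (hU : IsOpen U)
    (hg₁ : ContDiffOn ℝ 2 g₁ U) (hg₂ : ContDiffOn ℝ 2 g₂ U) (hp : p ∈ U)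
    (heq : (V p + g₁ p) * partialX g₁ p - partialY (partialY g₁) p =
      (V p + g₂ p) * partialX g₂ p - partialY (partialY g₂) p) :
    (V p + g₁ p) * partialX (g₁ - g₂) p + partialX g₂ p * (g₁ - g₂) p =
      partialY (partialY (g₁ - g₂)) p := by
  rw [partialX_sub (differentiableAt_of_contDiffOn hU hg₁ two_ne_zero hp)
    (differentiableAt_of_contDiffOn hU hg₂ two_ne_zero hp),
    partialY_partialY_sub hU hg₁ hg₂ hp, Pi.sub_apply]
  linear_combination heq

theorem eqOn_of_quasilinear_forward_backward {x₀ x₁ y₀ y₁ : ℝ} (hx : x₀ ≤ x₁) (hy : y₀ ≤ y₁)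
    (hU : IsOpen U) (hRU : Icc x₀ x₁ ×ˢ Icc y₀ y₁ ⊆ U)
    (hV : ContDiffOn ℝ 1 V U) (hφ : ContDiffOn ℝ 1 φ U)
    (hg₁ : ContDiffOn ℝ 2 g₁ U) (hg₂ : ContDiffOn ℝ 2 g₂ U)
    (heq : ∀ p ∈ Ioo x₀ x₁ ×ˢ Ioo y₀ y₁,
      (V p + g₁ p) * partialX g₁ p - partialY (partialY g₁) p =
        (V p + g₂ p) * partialX g₂ p - partialY (partialY g₂) p)
    (hgain : ∀ p ∈ Ioo x₀ x₁ ×ˢ Ioo y₀ y₁,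
      partialX V p + partialX g₁ p - 2 * partialX g₂ p < partialY φ p - φ p ^ 2 / 2)
    (hleft : ∀ y ∈ Icc y₀ y₁, V (x₀, y) + g₁ (x₀, y) ≤ 0 ∨ g₁ (x₀, y) = g₂ (x₀, y))
    (hright : ∀ y ∈ Icc y₀ y₁, 0 ≤ V (x₁, y) + g₁ (x₁, y) ∨ g₁ (x₁, y) = g₂ (x₁, y))
    (hbottom : ∀ x ∈ Icc x₀ x₁, g₁ (x, y₀) = g₂ (x, y₀))
    (htop : ∀ x ∈ Icc x₀ x₁, g₁ (x, y₁) = g₂ (x, y₁)) :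
    EqOn g₁ g₂ (Ioo x₀ x₁ ×ˢ Ioo y₀ y₁) := by
  have hg₁' : ContDiffOn ℝ 1 g₁ U := hg₁.of_le one_le_two
  have hΩU : Ioo x₀ x₁ ×ˢ Ioo y₀ y₁ ⊆ U :=
    (prod_mono Ioo_subset_Icc_self Ioo_subset_Icc_self).trans hRU
  have hzero : EqOn (g₁ - g₂) 0 (Ioo x₀ x₁ ×ˢ Ioo y₀ y₁) := by
    refine eqOn_zero_of_linear_forward_backward (a := V + g₁) hx hy hU hRU (hV.add hg₁') hφ
      (hg₁.sub hg₂)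
      (fun p hp => linear_equation_sub hU hg₁ hg₂ (hΩU hp) (heq p hp)) (fun p hp => ?_)
      (fun y hy => (hleft y hy).imp_right sub_eq_zero.2)
      (fun y hy => (hright y hy).imp_right sub_eq_zero.2)
      (fun x hx => sub_eq_zero.2 (hbottom x hx)) (fun x hx => sub_eq_zero.2 (htop x hx))
    rw [partialX_add (differentiableAt_of_contDiffOn hU hV one_ne_zero (hΩU hp))
      (differentiableAt_of_contDiffOn hU hg₁' one_ne_zero (hΩU hp))]
    exact hgain p hp
  exact fun p hp => sub_eq_zero.1 (hzero hp)

end QuasilinearEquation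

section ShearFlow

lemma quasilinear_deriv_eq_partial {u : ℝ → ℝ → ℝ} {U : Set (ℝ × ℝ)} {p : ℝ × ℝ} (hU : IsOpen U)
    (hu : ContDiffOn ℝ 2 (fun p : ℝ × ℝ => u p.1 p.2) U) (hp : p ∈ U) :
    (p.2 + u p.1 p.2) * deriv (fun s : ℝ => u s p.2) p.1 - deriv (deriv (u p.1)) p.2 =
      (p.2 + u p.1 p.2) * partialX (fun p => u p.1 p.2) p -
        partialY (partialY fun p => u p.1 p.2) p := by
  rw [← deriv_slice_eq_partialX (differentiableAt_of_contDiffOn hU hu two_ne_zero hp),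
    ← deriv_deriv_slice_eq_partialY_partialY hU hu hp]

lemma partialX_snd (p : ℝ × ℝ) : partialX Prod.snd p = 0 := by
  simp [partialX, fderiv_snd]

lemma partialY_snd (p : ℝ × ℝ) : partialY Prod.snd p = 1 := by
  simp [partialY, fderiv_snd]

theorem stmt13_general (x₀ x₁ : ℝ) (hx : x₀ < x₁) (u₁ u₂ : ℝ → ℝ → ℝ)
    (U : Set (ℝ × ℝ)) (hU : IsOpen U)
    (hΩU : closure (Ioo x₀ x₁ ×ˢ Ioo (-1 : ℝ) 1) ⊆ U)
    (hu₁ : ContDiffOn ℝ 2 (fun p : ℝ × ℝ => u₁ p.1 p.2) U)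
    (hu₂ : ContDiffOn ℝ 2 (fun p : ℝ × ℝ => u₂ p.1 p.2) U)
    (heq : ∀ p ∈ Ioo x₀ x₁ ×ˢ Ioo (-1 : ℝ) 1,
      (p.2 + u₁ p.1 p.2) * deriv (fun s : ℝ => u₁ s p.2) p.1 - deriv (deriv (u₁ p.1)) p.2 =
        (p.2 + u₂ p.1 p.2) * deriv (fun s : ℝ => u₂ s p.2) p.1 - deriv (deriv (u₂ p.1)) p.2)
    (htop : ∀ x ∈ Icc x₀ x₁, u₁ x 1 = u₂ x 1)
    (hbottom : ∀ x ∈ Icc x₀ x₁, u₁ x (-1) = u₂ x (-1))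
    (hlat0 : ∀ y ∈ Icc (0 : ℝ) 1, u₁ x₀ y = u₂ x₀ y)
    (hlat1 : ∀ y ∈ Icc (-1 : ℝ) 0, u₁ x₁ y = u₂ x₁ y)
    (hsgn0 : ∀ y ∈ Icc (0 : ℝ) 1, 0 ≤ y + u₁ x₁ y)
    (hsgn1 : ∀ y ∈ Icc (-1 : ℝ) 0, y + u₁ x₀ y ≤ 0)
    (hsmall : ∀ p ∈ Ioo x₀ x₁ ×ˢ Ioo (-1 : ℝ) 1,
      deriv (fun s : ℝ => u₁ s p.2) p.1 - 2 * deriv (fun s : ℝ => u₂ s p.2) p.1 ≤ 1 / 2) :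
    ∀ p ∈ closure (Ioo x₀ x₁ ×ˢ Ioo (-1 : ℝ) 1), u₁ p.1 p.2 = u₂ p.1 p.2 := by
  have hΩ : Ioo x₀ x₁ ×ˢ Ioo (-1 : ℝ) 1 ⊆ U := subset_closure.trans hΩU
  have hR : closure (Ioo x₀ x₁ ×ˢ Ioo (-1 : ℝ) 1) = Icc x₀ x₁ ×ˢ Icc (-1 : ℝ) 1 := by
    rw [closure_prod_eq, closure_Ioo hx.ne, closure_Ioo (by norm_num)]
  have hgain : ∀ p ∈ Ioo x₀ x₁ ×ˢ Ioo (-1 : ℝ) 1,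
      partialX Prod.snd p + partialX (fun p => u₁ p.1 p.2) p -
        2 * partialX (fun p => u₂ p.1 p.2) p < partialY Prod.snd p - p.2 ^ 2 / 2 := by
    intro p hp
    have hy : p.2 ^ 2 < 1 := (sq_lt_one_iff_abs_lt_one _).2 (abs_lt.2 hp.2)
    rw [partialX_snd, partialY_snd,
      ← deriv_slice_eq_partialX (differentiableAt_of_contDiffOn hU hu₁ two_ne_zero (hΩ hp)),
      ← deriv_slice_eq_partialX (differentiableAt_of_contDiffOn hU hu₂ two_ne_zero (hΩ hp))]
    linarith [hsmall p hp]
  have hopen : EqOn (fun p => u₁ p.1 p.2) (fun p => u₂ p.1 p.2) (Ioo x₀ x₁ ×ˢ Ioo (-1 : ℝ) 1) :=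
    eqOn_of_quasilinear_forward_backward hx.le (by norm_num) hU (hR ▸ hΩU) contDiffOn_snd
      contDiffOn_snd hu₁ hu₂
      (fun p hp => (quasilinear_deriv_eq_partial hU hu₁ (hΩ hp)).symm.trans
        ((heq p hp).trans (quasilinear_deriv_eq_partial hU hu₂ (hΩ hp))))
      hgain
      (fun y hy => (le_total y 0).imp (fun h => hsgn1 y ⟨hy.1, h⟩) fun h => hlat0 y ⟨h, hy.2⟩)
      (fun y hy => (le_total 0 y).imp (fun h => hsgn0 y ⟨h, hy.2⟩) fun h => hlat1 y ⟨hy.1, h⟩)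
      hbottom htop
  exact hopen.of_subset_closure (hu₁.continuousOn.mono hΩU) (hu₂.continuousOn.mono hΩU)
    subset_closure subset_rfl

end ShearFlow

/-- Uniqueness for the quasilinear forward-backward equation `(y+u) ∂ₓ u - ∂_yy u = f`
on `Ω = (x₀,x₁) × (-1,1)`: two classical solutions with the same source term, the same
lateral data on `Σ₀ = {x₀} × [0,1]` and `Σ₁ = {x₁} × [-1,0]`, vanishing on `{y = ±1}`,
satisfying the sign conditions `y + u₁(x₁,·) ≥ 0` on `[0,1]`, `y + u₁(x₀,·) ≤ 0` on
`[-1,0]` and the smallness conditions `sup_Ω |∂ₓ uᵢ| ≤ 1/8`, coincide on the closure. -/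
theorem stmt13 (x₀ x₁ : ℝ) (hx : x₀ < x₁) (u₁ u₂ f : ℝ → ℝ → ℝ)
    (U : Set (ℝ × ℝ)) (hU : IsOpen U)
    (hΩU : closure (Ioo x₀ x₁ ×ˢ Ioo (-1 : ℝ) 1) ⊆ U)
    (hf : ContinuousOn (fun p : ℝ × ℝ => f p.1 p.2) (closure (Ioo x₀ x₁ ×ˢ Ioo (-1 : ℝ) 1)))
    (hu₁ : ContDiffOn ℝ 2 (fun p : ℝ × ℝ => u₁ p.1 p.2) U)
    (hu₂ : ContDiffOn ℝ 2 (fun p : ℝ × ℝ => u₂ p.1 p.2) U)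
    (heq₁ : ∀ p ∈ Ioo x₀ x₁ ×ˢ Ioo (-1 : ℝ) 1,
      (p.2 + u₁ p.1 p.2) * deriv (fun s : ℝ => u₁ s p.2) p.1
        - deriv (deriv (u₁ p.1)) p.2 = f p.1 p.2)
    (heq₂ : ∀ p ∈ Ioo x₀ x₁ ×ˢ Ioo (-1 : ℝ) 1,
      (p.2 + u₂ p.1 p.2) * deriv (fun s : ℝ => u₂ s p.2) p.1
        - deriv (deriv (u₂ p.1)) p.2 = f p.1 p.2)
    (hbc₁ : ∀ x ∈ Icc x₀ x₁, u₁ x 1 = 0 ∧ u₁ x (-1) = 0)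
    (hbc₂ : ∀ x ∈ Icc x₀ x₁, u₂ x 1 = 0 ∧ u₂ x (-1) = 0)
    (hlat0 : ∀ y ∈ Icc (0 : ℝ) 1, u₁ x₀ y = u₂ x₀ y)
    (hlat1 : ∀ y ∈ Icc (-1 : ℝ) 0, u₁ x₁ y = u₂ x₁ y)
    (hsgn0 : ∀ y ∈ Icc (0 : ℝ) 1, 0 ≤ y + u₁ x₁ y)
    (hsgn1 : ∀ y ∈ Icc (-1 : ℝ) 0, y + u₁ x₀ y ≤ 0)
    (hsmall₁ : ∀ p ∈ Ioo x₀ x₁ ×ˢ Ioo (-1 : ℝ) 1,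
      |deriv (fun s : ℝ => u₁ s p.2) p.1| ≤ 1 / 8)
    (hsmall₂ : ∀ p ∈ Ioo x₀ x₁ ×ˢ Ioo (-1 : ℝ) 1,
      |deriv (fun s : ℝ => u₂ s p.2) p.1| ≤ 1 / 8) :
    ∀ p ∈ closure (Ioo x₀ x₁ ×ˢ Ioo (-1 : ℝ) 1), u₁ p.1 p.2 = u₂ p.1 p.2 := by
  exact stmt13_general x₀ x₁ hx u₁ u₂ U hU hΩU hu₁ hu₂
    (fun p hp => (heq₁ p hp).trans (heq₂ p hp).symm)
    (fun x hx => (hbc₁ x hx).1.trans (hbc₂ x hx).1.symm)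
    (fun x hx => (hbc₁ x hx).2.trans (hbc₂ x hx).2.symm) hlat0 hlat1 hsgn0 hsgn1
    fun p hp => by linarith [(abs_le.1 (hsmall₁ p hp)).2, (abs_le.1 (hsmall₂ p hp)).1]
end
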